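/- arXiv:2505.16963 — 5 statements merged into one kernel-verified Lean document; each statement's English description precedes it below -/
import Mathlib

section
/- For every multivariate polynomial P ∈ ℤ[x₀, x₁, …, x_ν] there exists a polynomial Q ∈ ℤ[x₀, x₁, …, x₉] in nine unknowns such that for every a ∈ ℕ: there exist z₁, …, z_ν ∈ ℕ with P(a, z₁, …, z_ν) = 0 if and only if there exist f, g, h, k, l, w, x, y ∈ ℤ and n ∈ ℤ with n ≥ 0 such that Q(a, f, g, h, k, l, w, x, y, n) = 0. -/
/-!
For natural `t > max(a, z_j)` let `B = 2 * hB` be a suitable multiple of a power of `t`, and write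
the unknowns as one number `g = ∑ z_j B ^ ((δ + 1) ^ (j + 1))`, with `δ` greater than the degree
of `P`. In `(1 + a B + g) ^ δ` distinct monomials of degree at most `δ` occupy distinct powers of
`B`, so there is a polynomial `K`, depending only on `P`, such that the coefficient of `B ^ M` in
`K(B) (1 + a B + g) ^ δ` is `δ! P(a, z)` (`exists_extractor`). All coefficients are smaller than
`hB` in absolute value, so after adding `hB` to the lowest ones they become honest digits in base
`B`, and `P(a, z) = 0` says that `hB` divides the digit at `B ^ M` (`S₂_digit`).

If `t` is a power of two, this condition and the condition that `g` is a code of some `z_j < t`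
both say that certain numbers have no common binary digit with fixed masks; they combine to
`S &&& T = 0`. By Kummer's theorem this is equivalent to `Y ∣ C(2X, X)` for polynomial expressions
`X` and `Y` in `t`, `a` and `g` (`mask_iff`, `dvd_choose_iff`).

The divisibility `Y ∣ C(2X, X)` is expressed through the Pell numbers `yn` (`bridge_back`,
`bridge_forth`). For large `V` the central part of the binomial expansion of
`(V + 1) ^ (2X) / V ^ X` is an integer `q ≡ C(2X, X)` modulo `V`, and the quotient of Pell numbers
`C / J` with index `X + 1` and parameters in the ratio `(V + 1) ^ 2 : V` approximates it. Requiring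
`C / J` to be close to a multiple `l Y` of `Y`, where `Y ∣ V`, gives `q = l Y`. The parameter of `C`
is itself built from `l Y`, so the closeness also makes it large enough for the congruence
`3 W C ≡ 2 (W ^ 2 - 1)` modulo `4 A - 5` to enforce `W = ± 2 ^ (X + 1)`. With `W = t w` this forces
`t` to be a power of two. Taking `t = (1 + 3 (2a + 1) f) ^ 2` with `f ≠ 0` ensures `t > a`, and
Euler's theorem provides such `t` which are arbitrarily large powers of two.

That `C` and `J` are Pell numbers is expressed by one square condition for each: for `J` the Pell
equation and a congruence suffice, the closeness to `C` excluding larger indices (`index_eq`), and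
for `C` the product of three coprime numbers has to be a square (`pell_back`, `pell_forth`). The
conditions `f, l, w, x ≠ 0`, the range of `g`, and the closeness of `C / J` and `l Y` are packed into
the positivity of one expression. Two squares, one divisibility and one positivity condition are
then combined into a single equation with one further natural unknown (`relation_combining`).
-/

/-! ### Squares and Pell numbers -/

namespace NineUnknowns

/-- The system `pD`, …, `pI` certifies that `C` is, up to sign, the solution `yn` of the Pell
equation with parameter `a` and index `B`: `pD`, `pF` and `pI` are required to be squares, that is
`C`, `pV` and `pH` solve Pell equations with parameters `a`, `a` and `pG` respectively. -/
def pD (a C : ℤ) : ℤ := (a ^ 2 - 1) * C ^ 2 + 1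

/-- The second Pell solution, with parameter `a`. It is a multiple of `2 C ^ 2`, which makes `C`
divide its index. -/
def pV (a C x : ℤ) : ℤ := 2 * C ^ 2 * pD a C * x

/-- The square condition for `pV`. -/
def pF (a C x : ℤ) : ℤ := (a ^ 2 - 1) * pV a C x ^ 2 + 1

/-- The parameter of the third Pell equation, congruent to `a` modulo `pF` and to `1` modulo `2 C`. -/
def pG (a C x : ℤ) : ℤ := 1 + 2 * C ^ 2 * pD a C * pF a C x - (a - 1) * (pF a C x - 1)

/-- The third Pell solution, congruent to `C` modulo `pF` and to `B` modulo `2 C`. -/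
def pH (a B C x y : ℤ) : ℤ := C + B * pF a C x + (2 * y - 1) * C * pF a C x

/-- The square condition for `pH`. -/
def pI (a B C x y : ℤ) : ℤ := (pG a C x ^ 2 - 1) * pH a B C x y ^ 2 + 1

open Pell

theorem dvd_congr' {a b c : ℤ} (h : a ∣ b) (e : c = b) : a ∣ c := e ▸ h

theorem pell_int {a : ℕ} (a1 : 1 < a) (n : ℕ) :
    (xn a1 n : ℤ) ^ 2 = ((a : ℤ) ^ 2 - 1) * (yn a1 n : ℤ) ^ 2 + 1 := by
  have h := pell_eqz a1 n
  have hd := dz_val a1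
  simp only [xz, yz, az] at h hd
  rw [hd] at h
  linear_combination h

theorem pell_of_sq {a : ℕ} (a1 : 1 < a) {y : ℤ} (h : IsSquare (((a : ℤ) ^ 2 - 1) * y ^ 2 + 1)) :
    ∃ n, y.natAbs = yn a1 n ∧ ((a : ℤ) ^ 2 - 1) * y ^ 2 + 1 = (xn a1 n : ℤ) ^ 2 := by
  obtain ⟨x, hx⟩ := h
  have hd := dz_val a1
  simp only [az] at hd
  have key : ∀ D : ℕ, (D : ℤ) = a * a - 1 →
      x.natAbs * x.natAbs - D * y.natAbs * y.natAbs = 1 := by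
    intro D hD
    have : (x.natAbs * x.natAbs : ℤ) = (D : ℤ) * y.natAbs * y.natAbs + 1 := by
      rw [mul_assoc, Int.natAbs_mul_self', Int.natAbs_mul_self', hD]
      linear_combination -hx
    have h2 : x.natAbs * x.natAbs = D * y.natAbs * y.natAbs + 1 := by exact_mod_cast this
    omega
  obtain ⟨n, h1, h2⟩ := eq_pell a1 (key _ hd)
  refine ⟨n, h2, ?_⟩
  rw [hx, ← h1, ← Int.natAbs_mul_self' x, pow_two]

theorem sq_of_mul_isCoprime {u v : ℤ} (hu : 0 < u) (h : IsCoprime u v) (hs : IsSquare (u * v)) :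
    IsSquare u := by
  obtain ⟨c, hc⟩ := hs
  obtain ⟨d, hd | hd⟩ := Int.sq_of_isCoprime h (by rw [hc, pow_two])
  · exact ⟨d, by rw [hd, pow_two]⟩
  · nlinarith [sq_nonneg d]

theorem pF_sub_one (a C x : ℤ) : pF a C x - 1 = (2 * C ^ 2 * pD a C) *
    ((a ^ 2 - 1) * (2 * C ^ 2 * pD a C) * x ^ 2) := by
  unfold pF pV; ring

theorem pG_sub_one (a C x : ℤ) : pG a C x - 1 = (2 * C * pD a C) *
    (C * pF a C x - (a - 1) * ((a ^ 2 - 1) * C * (2 * C ^ 2 * pD a C) * x ^ 2)) := by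
  have := pF_sub_one a C x
  unfold pG
  linear_combination (-(a - 1)) * this

theorem pG_modF (a C x : ℤ) : pF a C x ∣ pG a C x - a :=
  ⟨2 * C ^ 2 * pD a C - (a - 1), by unfold pG; ring⟩

theorem pH_modF (a B C x y : ℤ) : pF a C x ∣ pH a B C x y - C :=
  ⟨B + (2 * y - 1) * C, by unfold pH; ring⟩

theorem pH_modC (a B C x y : ℤ) : 2 * C ∣ pH a B C x y - B := by
  have h : 2 * C ∣ pF a C x - 1 := by
    rw [pF_sub_one]; exact ⟨C * pD a C * ((a ^ 2 - 1) * (2 * C ^ 2 * pD a C) * x ^ 2), by ring⟩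
  have : pH a B C x y - B = 2 * C * (y + (y - 1) * (pF a C x - 1)) + (B + C) * (pF a C x - 1) -
    2 * C * 0 := by unfold pH; ring
  rw [this, mul_zero, sub_zero]
  exact dvd_add (dvd_mul_right _ _) (h.mul_left _)

theorem pD_pos {a : ℤ} (ha : 1 < a) (C : ℤ) : 0 < pD a C := by
  unfold pD; nlinarith [sq_nonneg C, mul_nonneg (by nlinarith : 0 ≤ a ^ 2 - 1) (sq_nonneg C)]

theorem pF_pos {a : ℤ} (ha : 1 < a) (C x : ℤ) : 0 < pF a C x := by
  unfold pF; nlinarith [mul_nonneg (by nlinarith : 0 ≤ a ^ 2 - 1) (sq_nonneg (pV a C x))]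

theorem pG_gt {a : ℤ} (ha : 1 < a) {C : ℤ} (hC : C ≠ 0) (x : ℤ) : 1 < pG a C x := by
  have h1 := pF_pos ha C x
  have hC2 : 1 ≤ C ^ 2 := by have := pow_pos (abs_pos.mpr hC) 2; rw [sq_abs] at this; omega
  have h2 : a ≤ pD a C := by
    unfold pD
    have h0 : 0 ≤ a ^ 2 - 1 := by nlinarith
    nlinarith [mul_le_mul_of_nonneg_left hC2 h0]
  have h3 : a ≤ C ^ 2 * pD a C := by nlinarith
  unfold pG
  nlinarith [mul_le_mul_of_nonneg_right h3 h1.le]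

/-- The three factors are pairwise coprime and positive, so their product being a square makes
each of them a square. -/
theorem three_squares {a B C x y : ℤ} (ha : 1 < a) (hC : C ≠ 0)
    (h : IsSquare (pD a C * pF a C x * pI a B C x y)) :
    IsSquare (pD a C) ∧ IsSquare (pF a C x) ∧ IsSquare (pI a B C x y) := by
  have hDF : IsCoprime (pD a C) (pF a C x) := by
    refine ⟨-(2 * C ^ 2 * ((a ^ 2 - 1) * (2 * C ^ 2 * pD a C) * x ^ 2)), 1, ?_⟩
    linear_combination pF_sub_one a C x
  have hDI : IsCoprime (pD a C) (pI a B C x y) := by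
    have hG := pG_sub_one a C x
    set q := C * pF a C x - (a - 1) * ((a ^ 2 - 1) * C * (2 * C ^ 2 * pD a C) * x ^ 2)
    refine ⟨-(2 * C * q * (pG a C x + 1) * pH a B C x y ^ 2), 1, ?_⟩
    unfold pI
    linear_combination (pG a C x + 1) * pH a B C x y ^ 2 * hG
  have hFI : IsCoprime (pF a C x) (pI a B C x y) := by
    have h3 : pF a C x ∣ pI a B C x y - pD a C := by
      obtain ⟨u, hu⟩ := pG_modF a C x
      obtain ⟨v, hv⟩ := pH_modF a B C x y
      refine ⟨u * (pG a C x + a) * pH a B C x y ^ 2 + (a ^ 2 - 1) * v * (pH a B C x y + C), ?_⟩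
      unfold pI
      conv_lhs => rw [pD]
      linear_combination (pG a C x + a) * pH a B C x y ^ 2 * hu +
        (a ^ 2 - 1) * (pH a B C x y + C) * hv
    obtain ⟨q, hq⟩ := h3
    have : pI a B C x y = pD a C + pF a C x * q := by linear_combination hq
    rw [this]
    exact hDF.symm.add_mul_left_right q
  have hD := pD_pos ha C
  have hF := pF_pos ha C x
  have hI : 0 < pI a B C x y := by
    unfold pI
    have := pG_gt ha hC x
    nlinarith [mul_nonneg (by nlinarith : 0 ≤ pG a C x ^ 2 - 1) (sq_nonneg (pH a B C x y))]
  refine ⟨sq_of_mul_isCoprime hD (hDF.mul_right hDI) (by rwa [← mul_assoc]),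
    sq_of_mul_isCoprime hF (hDF.symm.mul_right hFI) ?_,
    sq_of_mul_isCoprime hI (hDI.symm.mul_right hFI.symm) ?_⟩
  · convert h using 1; ring
  · convert h using 1; ring

theorem xn_two_mul {a : ℕ} (a1 : 1 < a) (n : ℕ) :
    (xn a1 (2 * n) : ℤ) = 2 * ((a : ℤ) ^ 2 - 1) * (yn a1 n : ℤ) ^ 2 + 1 := by
  have hd := dz_val a1
  simp only [az] at hd
  have := pell_int a1 n
  rw [two_mul, xn_add]; push_cast; rw [hd]
  linear_combination this

/-- If the product of the three numbers is a square then `|C|` is the Pell number with index `b`.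
Comparing the index `i` of `C` with the index `j` of `pH`, the congruence modulo `pF` gives
`j ≡ ± i` and the congruence modulo `2 C` gives `j ≡ ± b`, both modulo `2 C`; the congruence modulo
`a - 1` then decides the sign. -/
theorem pell_back {a : ℕ} (a1 : 1 < a) {b : ℕ} (hb : 1 ≤ b) (hab : 2 * b + 1 ≤ a) {C x y : ℤ}
    (hC : (a : ℤ) - 1 ∣ C - b) (hx : x ≠ 0)
    (h : IsSquare (pD a C * pF a C x * pI a b C x y)) : C.natAbs = yn a1 b := by
  have ha : (1 : ℤ) < a := by exact_mod_cast a1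
  have hC0 : C ≠ 0 := by
    rintro rfl
    have := Int.le_of_dvd (by omega) ((dvd_neg.mpr hC).trans (by simp : -(0 - (b : ℤ)) ∣ b))
    omega
  obtain ⟨hD, hF, hI⟩ := three_squares ha hC0 h
  obtain ⟨i, hi, hi'⟩ := pell_of_sq a1 hD
  obtain ⟨m, hm, hm'⟩ := pell_of_sq a1 hF
  have hG1 := pG_gt ha hC0 x
  obtain ⟨g, hg⟩ : ∃ g : ℕ, pG a C x = g := ⟨_, (Int.toNat_of_nonneg (by omega)).symm⟩
  have g1 : 1 < g := by rw [hg] at hG1; exact_mod_cast hG1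
  have hI' := hI
  unfold pI at hI'
  rw [hg] at hI'
  obtain ⟨j, hj, -⟩ := pell_of_sq g1 hI'
  have hDpos := pD_pos ha C
  have hi0 : i ≠ 0 := by
    rintro rfl
    rw [yn_zero, Int.natAbs_eq_zero] at hi; exact hC0 hi
  have hV0 : pV a C x ≠ 0 := by unfold pV; positivity
  -- `C` divides the index `m`
  have hCm : C.natAbs ∣ m := by
    rw [hi]; apply dvd_of_ysq_dvd
    rw [← hi, ← hm, ← Int.natAbs_mul]
    apply Int.natAbs_dvd_natAbs.mpr
    unfold pV; exact ⟨2 * pD a C * x, by ring⟩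
  -- the index `m` is large
  have him : 2 * i ≤ m := by
    by_contra hlt
    have h1 := (strictMono_y a1) (not_le.mp hlt)
    rw [← hm, two_mul, yn_add, ← hi] at h1
    have hxi : (xn a1 i : ℤ) ≤ pD a C := by
      unfold pD; rw [hi']; exact_mod_cast Nat.le_self_pow (by norm_num) _
    have h2 : |pV a C x| < 2 * (xn a1 i * |C|) := by
      zify at h1; linarith
    have h3 : 2 * (|C| * |C|) * pD a C ≤ |pV a C x| := by
      unfold pV; rw [abs_mul, abs_mul, abs_mul, abs_of_pos hDpos, abs_pow]
      have := abs_pos.mpr hx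
      have h4 : 0 ≤ |(2 : ℤ)| * |C| ^ 2 * pD a C := by positivity
      rw [abs_two] at *
      nlinarith
    have h5 := abs_pos.mpr hC0
    have h6 : (xn a1 i : ℤ) * |C| ≤ pD a C * |C| := by gcongr
    have h7 : pD a C * |C| * 1 ≤ pD a C * |C| * |C| := by gcongr; omega
    nlinarith
  -- the two solutions agree, up to sign, modulo `x_m`
  have hxx : xn a1 (2 * j) ≡ xn a1 (2 * i) [MOD xn a1 m] := by
    have hFn : ((xn a1 m : ℕ) : ℤ) ∣ pF a C x := by
      unfold pF; rw [hm']; exact dvd_pow_self _ (by norm_num)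
    have hga : g ≡ a [MOD xn a1 m] := by
      apply Nat.ModEq.symm
      rw [Nat.modEq_iff_dvd, ← hg]
      exact hFn.trans (pG_modF a C x)
    have hyy := (xy_modEq_of_modEq g1 a1 hga j).2.symm
    rw [Nat.modEq_iff_dvd] at hyy
    rw [← hj] at hyy
    have hH := hFn.trans (pH_modF a b C x y)
    rw [Nat.modEq_iff_dvd, xn_two_mul, xn_two_mul, ← hi]
    have e1 : ((C.natAbs : ℕ) : ℤ) ^ 2 = C ^ 2 := by simp
    have e2 : (((pH a b C x y).natAbs : ℕ) : ℤ) ^ 2 = (pH a b C x y) ^ 2 := by simp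
    obtain ⟨u, hu⟩ := hyy
    obtain ⟨v, hv⟩ := hH
    refine ⟨2 * ((a : ℤ) ^ 2 - 1) * (u * (((pH a b C x y).natAbs : ℕ) + yn a1 j)
      - v * (pH a b C x y + C)), ?_⟩
    linear_combination 2 * ((a : ℤ) ^ 2 - 1) * (e1 + (-1) * e2 +
      (((pH a b C x y).natAbs : ℕ) + yn a1 j) * hu - (pH a b C x y + C) * hv)
  have hij := modEq_of_xn_modEq a1 (by omega) him hxx
  -- hence `j ≡ ± i` modulo `2C`
  have hij' : (2 * C ∣ (j : ℤ) - i) ∨ (2 * C ∣ (j : ℤ) + i) := by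
    have h4 : 2 * (2 * C) ∣ ((4 * m : ℕ) : ℤ) := by
      obtain ⟨q, hq⟩ := Int.natAbs_dvd.mp (Int.natCast_dvd_natCast.mpr hCm)
      refine ⟨q, ?_⟩
      push_cast; rw [hq]; ring
    rcases hij with h5 | h5
    · left
      have := h4.trans (Nat.modEq_iff_dvd.mp h5.symm)
      push_cast at this
      rw [← mul_sub] at this
      exact (mul_dvd_mul_iff_left (by norm_num)).mp this
    · right
      have := h4.trans (Nat.modEq_iff_dvd.mp h5.symm)
      push_cast at this
      rw [sub_zero, ← mul_add] at this
      exact (mul_dvd_mul_iff_left (by norm_num)).mp this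
  -- and `j ≡ ± b` modulo `2C`
  have hjb : (2 * C ∣ (j : ℤ) - b) ∨ (2 * C ∣ (j : ℤ) + b) := by
    have h1 : 2 * C ∣ (g : ℤ) - 1 := by
      rw [← hg, pG_sub_one]; exact ⟨pD a C * (C * pF a C x - (a - 1) * ((a ^ 2 - 1) * C * (2 * C ^ 2 * pD a C) * x ^ 2)), by ring⟩
    have h2 : 2 * C ∣ (yn g1 j : ℤ) - j := by
      have := (Nat.modEq_iff_dvd.mp (yn_modEq_a_sub_one g1 j).symm)
      refine h1.trans ?_
      rwa [Nat.cast_sub g1.le, Nat.cast_one] at this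
    have h3 := pH_modC a b C x y
    rw [← hj] at h2
    rcases Int.natAbs_eq (pH a b C x y) with h4 | h4
    · left
      rw [h4] at h3
      have := dvd_sub h3 h2
      exact dvd_congr' (this) (by ring)
    · right
      rw [h4] at h3
      have := dvd_add h3 h2
      rw [← dvd_neg]
      exact dvd_congr' (this) (by ring)
  have hib : (2 * C ∣ (i : ℤ) - b) ∨ (2 * C ∣ (i : ℤ) + b) := by
    rcases hij' with h1 | h1 <;> rcases hjb with h2 | h2
    · left; exact dvd_congr' (dvd_sub h2 h1) (by ring)
    · right; exact dvd_congr' (dvd_sub h2 h1) (by ring)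
    · right; exact dvd_congr' (dvd_sub h1 h2) (by ring)
    · left; exact dvd_congr' (dvd_sub h1 h2) (by ring)
  -- the congruence modulo `a - 1`
  have hia : ((a : ℤ) - 1 ∣ (i : ℤ) - b) ∨ ((a : ℤ) - 1 ∣ (i : ℤ) + b) := by
    have h2 : (a : ℤ) - 1 ∣ (yn a1 i : ℤ) - i := by
      have := (Nat.modEq_iff_dvd.mp (yn_modEq_a_sub_one a1 i).symm)
      rwa [Nat.cast_sub a1.le, Nat.cast_one] at this
    rw [← hi] at h2
    rcases Int.natAbs_eq C with h4 | h4
    · left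
      rw [h4] at hC
      have := dvd_sub hC h2
      exact dvd_congr' (this) (by ring)
    · right
      rw [h4] at hC
      have := dvd_add hC h2
      rw [← dvd_neg]
      exact dvd_congr' (this) (by ring)
  have hiC : i ≤ C.natAbs := by rw [hi]; exact yn_ge_n a1 i
  have hbi : b ≤ i := by
    by_contra hlt
    rcases hia with h1 | h1
    · have := Int.le_of_dvd (by omega) ((dvd_sub_comm).mp h1); omega
    · have := Int.le_of_dvd (by omega) h1; omega
  rcases hib with h1 | h1
  · by_cases h2 : (i : ℤ) - b = 0
    · rw [hi, show i = b by omega]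
    · have := Int.natAbs_le_of_dvd_ne_zero h1 h2; omega
  · have := Int.natAbs_le_of_dvd_ne_zero h1 (by omega)
    rw [hi, show i = b by omega]

/-- The Pell equation with parameter `a` has a nontrivial solution divisible by `N`, since
`(a ^ 2 - 1) N ^ 2` is not a square. -/
theorem exists_pell_dvd {a : ℤ} (ha : 1 < a) {N : ℤ} (hN : N ≠ 0) :
    ∃ x : ℤ, x ≠ 0 ∧ IsSquare ((a ^ 2 - 1) * (N * x) ^ 2 + 1) := by
  have hd : 0 < (a ^ 2 - 1) * N ^ 2 := by
    have : 0 < a ^ 2 - 1 := by nlinarith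
    positivity
  have hns : ¬ IsSquare ((a ^ 2 - 1) * N ^ 2) := by
    rintro ⟨r, hr⟩
    have h1 : N ∣ r := by
      have : N ^ 2 ∣ r ^ 2 := ⟨a ^ 2 - 1, by rw [pow_two r, ← hr]; ring⟩
      exact (Int.pow_dvd_pow_iff (by norm_num)).mp this
    obtain ⟨q, rfl⟩ := h1
    have h2 : a ^ 2 - 1 = q ^ 2 := by
      have : N ^ 2 ≠ 0 := by positivity
      apply mul_right_cancel₀ this; rw [hr]; ring
    have h3 : |q| < a := by apply abs_lt_of_sq_lt_sq _ (by omega); omega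
    have h4 : |q| ≤ a - 1 := by omega
    have h5 : q ^ 2 ≤ (a - 1) ^ 2 := by rw [← sq_abs q]; gcongr
    nlinarith
  obtain ⟨x, y, hxy, hy⟩ := Pell.exists_of_not_isSquare hd hns
  exact ⟨y, hy, x, by linear_combination -hxy⟩

/-- Conversely, for `C` the Pell number of index `b` the remaining unknowns of the system exist. -/
theorem pell_forth {a : ℕ} (a1 : 1 < a) {b : ℕ} (hb : 1 ≤ b) :
    ∃ x y : ℤ, x ≠ 0 ∧ IsSquare (pD a ↑(yn a1 b) * pF a ↑(yn a1 b) x * pI a b ↑(yn a1 b) x y) := by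
  have ha : (1 : ℤ) < a := by exact_mod_cast a1
  set C : ℤ := ((yn a1 b : ℕ) : ℤ) with hCdef
  have hC0 : C ≠ 0 := by
    have := yn_ge_n a1 b; omega
  have hDpos := pD_pos ha C
  obtain ⟨x, hx, hsq⟩ := exists_pell_dvd ha (N := 2 * C ^ 2 * pD a C) (by positivity)
  have hF : IsSquare (pF a C x) := hsq
  have hD : IsSquare (pD a C) := ⟨xn a1 b, by unfold pD; rw [hCdef, ← pell_int]; ring⟩
  have hG1 := pG_gt ha hC0 x
  obtain ⟨g, hg⟩ : ∃ g : ℕ, pG a C x = g := ⟨_, (Int.toNat_of_nonneg (by omega)).symm⟩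
  have g1 : 1 < g := by rw [hg] at hG1; exact_mod_cast hG1
  have hFpos := pF_pos ha C x
  have hF1 : 2 * C ∣ pF a C x - 1 := by
    rw [pF_sub_one]; exact ⟨C * pD a C * ((a ^ 2 - 1) * (2 * C ^ 2 * pD a C) * x ^ 2), by ring⟩
  have hcop : IsCoprime (2 * C) (pF a C x) := by
    obtain ⟨q, hq⟩ := hF1
    exact ⟨-q, 1, by linear_combination hq⟩
  have h1 : 2 * C ∣ (yn g1 b : ℤ) - pH a b C x 0 := by
    have h1 : 2 * C ∣ (g : ℤ) - 1 := by
      rw [← hg, pG_sub_one]; exact ⟨pD a C * (C * pF a C x - (a - 1) * ((a ^ 2 - 1) * C * (2 * C ^ 2 * pD a C) * x ^ 2)), by ring⟩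
    have h2 : 2 * C ∣ (yn g1 b : ℤ) - b := by
      have := (Nat.modEq_iff_dvd.mp (yn_modEq_a_sub_one g1 b).symm)
      refine h1.trans ?_
      rwa [Nat.cast_sub g1.le, Nat.cast_one] at this
    exact dvd_congr' (dvd_sub h2 (pH_modC a b C x 0)) (by ring)
  have h2 : pF a C x ∣ (yn g1 b : ℤ) - pH a b C x 0 := by
    obtain ⟨f, hf⟩ : ∃ f : ℕ, pF a C x = f := ⟨_, (Int.toNat_of_nonneg (by omega)).symm⟩
    have hga : a ≡ g [MOD f] := by
      rw [Nat.modEq_iff_dvd, ← hg, ← hf]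
      exact pG_modF a C x
    have := Nat.modEq_iff_dvd.mp (xy_modEq_of_modEq a1 g1 hga b).2
    rw [← hf] at this
    exact dvd_congr' (dvd_sub this (pH_modF a b C x 0)) (by ring)
  obtain ⟨y, hy⟩ := hcop.mul_dvd h1 h2
  refine ⟨x, y, hx, (hD.mul hF).mul ?_⟩
  have hH : pH a b C x y = yn g1 b := by
    unfold pH at hy ⊢; linear_combination -hy
  refine ⟨xn g1 b, ?_⟩
  unfold pI; rw [hH, hg, ← pell_int]; ring

end NineUnknowns

/-! ### Two squares, a divisibility and an inequality in one equation -/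

namespace NineUnknowns

/-- An upper bound for the square roots of `A₁` and `A₂`, large enough to separate them. -/
def relX (A₁ A₂ : ℤ) : ℤ := 1 + A₁ ^ 2 + A₂ ^ 2

/-- The part of `relM` which is to be `S ^ 2 (2 R - 1)` times `± √A₁ ± √A₂ X`, where `X` is `relX`. -/
def relU (A₁ A₂ S T R n : ℤ) : ℤ :=
  S ^ 2 * n + T ^ 2 - S ^ 2 * (2 * R - 1) * (T ^ 2 + relX A₁ A₂ ^ 2)

/-- The product of `u - v (± √A₁ ± √A₂ X)` over all signs, with `u` the value of `relU`,
`v = S ^ 2 (2 R - 1)` and `X` the value of `relX`. -/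
def relM (A₁ A₂ S T R n : ℤ) : ℤ :=
  (relU A₁ A₂ S T R n ^ 2 - (S ^ 2 * (2 * R - 1)) ^ 2 * (A₁ + A₂ * relX A₁ A₂ ^ 2)) ^ 2 -
    4 * (S ^ 2 * (2 * R - 1)) ^ 4 * (A₁ * A₂ * relX A₁ A₂ ^ 2)

/-- If `± √A₁ ± √A₂ X` is rational for some choice of signs then both square roots are integers. The
size of `X` excludes the degenerate case of cancelling terms. -/
theorem squares_of_quartic {A₁ A₂ u v : ℤ} (hv : v ≠ 0)
    (h : (u ^ 2 - v ^ 2 * (A₁ + A₂ * relX A₁ A₂ ^ 2)) ^ 2 -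
      4 * v ^ 4 * (A₁ * A₂ * relX A₁ A₂ ^ 2) = 0) : IsSquare A₁ ∧ IsSquare A₂ := by
  have hX : 1 + A₁ ^ 2 ≤ relX A₁ A₂ := by unfold relX; nlinarith [sq_nonneg A₂]
  set X := relX A₁ A₂
  have hX0 : X ≠ 0 := by nlinarith
  have hXq : (X : ℚ) ≠ 0 := by exact_mod_cast hX0
  have hvq : (v : ℚ) ≠ 0 := by exact_mod_cast hv
  obtain ⟨t, ht⟩ : ∃ t : ℚ, t = u / v := ⟨_, rfl⟩
  have hu : (u : ℚ) = t * v := by rw [ht]; field_simp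
  have hq : (t ^ 2 - (A₁ + A₂ * X ^ 2)) ^ 2 = 4 * (A₁ * A₂ * (X : ℚ) ^ 2) := by
    have h1 : ((u : ℚ) ^ 2 - v ^ 2 * (A₁ + A₂ * X ^ 2)) ^ 2 - 4 * v ^ 4 * (A₁ * A₂ * X ^ 2) = 0 := by
      exact_mod_cast h
    rw [hu] at h1
    have h2 : (v : ℚ) ^ 4 ≠ 0 := by positivity
    apply mul_left_cancel₀ h2
    linear_combination h1
  obtain ⟨r, hr⟩ : ∃ r : ℚ, r = (t ^ 2 - (A₁ + A₂ * X ^ 2)) / (2 * X) := ⟨_, rfl⟩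
  have ht2 : t ^ 2 = A₁ + A₂ * X ^ 2 + 2 * r * X := by rw [hr]; field_simp; ring
  have hr2 : r ^ 2 = A₁ * A₂ := by
    have h2 : 4 * (X : ℚ) ^ 2 ≠ 0 := by positivity
    apply mul_left_cancel₀ h2
    rw [ht2] at hq
    linear_combination hq
  rw [← Rat.isSquare_intCast_iff, ← Rat.isSquare_intCast_iff]
  by_cases hA : A₁ = 0
  · subst hA
    have hr0 : r = 0 := by
      have : r ^ 2 = 0 := by rw [hr2]; simp
      exact pow_eq_zero_iff (by norm_num) |>.mp this
    refine ⟨⟨0, by simp⟩, ⟨t / X, ?_⟩⟩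
    rw [hr0] at ht2
    field_simp
    rw [ht2]; push_cast; ring
  · have hAq : (A₁ : ℚ) ≠ 0 := by exact_mod_cast hA
    have hAt : A₁ * t ^ 2 = (A₁ + r * X) ^ 2 := by
      rw [ht2]; linear_combination (-(X : ℚ) ^ 2) * hr2
    have hne : (A₁ : ℚ) + r * X ≠ 0 := by
      intro h0
      have h1 : (A₁ : ℚ) = A₂ * X ^ 2 := by
        apply mul_left_cancel₀ hAq
        linear_combination (A₁ - r * X) * h0 + (X : ℚ) ^ 2 * hr2
      have h2 : A₁ = A₂ * X ^ 2 := by exact_mod_cast h1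
      have h3 : A₂ ≠ 0 := by rintro rfl; simp at h2; exact hA h2
      have h4 : |A₁| = |A₂| * X ^ 2 := by
        conv_lhs => rw [h2]
        rw [abs_mul, abs_of_nonneg (sq_nonneg X)]
      have h5 := abs_pos.mpr h3
      have h6 : X ^ 2 ≤ |A₁| := by nlinarith [sq_nonneg X]
      have h7 : A₁ ^ 2 = |A₁| ^ 2 := (sq_abs _).symm
      have h8 : X ≤ X ^ 2 := by nlinarith [sq_nonneg A₁]
      nlinarith [sq_nonneg (|A₁| - 1), abs_nonneg A₁]
    have ht0 : t ≠ 0 := by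
      rintro rfl
      apply hne
      have : ((A₁ : ℚ) + r * X) ^ 2 = 0 := by rw [← hAt]; ring
      exact pow_eq_zero_iff (by norm_num) |>.mp this
    have hA1 : (A₁ : ℚ) = ((A₁ + r * X) / t) ^ 2 := by
      field_simp; linear_combination hAt
    refine ⟨⟨(A₁ + r * X) / t, by rw [← pow_two]; exact hA1⟩, ⟨r / ((A₁ + r * X) / t), ?_⟩⟩
    rw [← pow_two, div_pow, ← hA1, hr2]; field_simp

/-- The quantity that `relU` multiplies by `2 R - 1` is positive, whatever the signs of the roots. -/
theorem rel_bound (s₁ s₂ : ℤ) (T : ℤ) :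
    T ^ 2 + 1 ≤ T ^ 2 + relX (s₁ * s₁) (s₂ * s₂) ^ 2 + (s₁ + s₂ * relX (s₁ * s₁) (s₂ * s₂)) := by
  have e : relX (s₁ * s₁) (s₂ * s₂) = 1 + s₁ ^ 4 + s₂ ^ 4 := by unfold relX; ring
  rw [e]
  have hp : ∀ s : ℤ, 0 ≤ s ^ 4 + s ∧ s ≤ s ^ 4 := by
    intro s
    have h1 : s ^ 2 ≤ s ^ 4 := by
      rcases eq_or_ne s 0 with rfl | h
      · norm_num
      · have : 1 ≤ s ^ 2 := by have := pow_pos (abs_pos.mpr h) 2; rw [sq_abs] at this; omega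
        nlinarith
    have h2 : |s| ≤ s ^ 2 := by
      rw [← sq_abs]
      rcases eq_or_ne s 0 with rfl | h
      · norm_num
      · have := abs_pos.mpr h
        nlinarith
    have := abs_le.mp (h2.trans h1)
    exact ⟨by linarith [this.1], this.2⟩
  have h1 := hp s₁
  have h2 := hp s₂
  have h3 : 0 ≤ s₁ ^ 4 := by positivity
  have h4 : 0 ≤ s₂ ^ 4 := by positivity
  nlinarith [mul_nonneg (by linarith : 0 ≤ s₁ ^ 4 + s₂ ^ 4) (by linarith : 0 ≤ 1 + s₁ ^ 4 + s₂ ^ 4 + s₂), mul_nonneg h3 h2.1, mul_nonneg h4 h2.1]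

/-- Two squares, a divisibility and a positivity condition are expressed by one equation in one
natural unknown. The equation says `S ^ 2 ((2 R - 1) E - n) = T ^ 2` with `E > T ^ 2`: this makes
`S ^ 2` divide `T ^ 2`, and a nonpositive `R` would make the left side negative. -/
theorem relation_combining {A₁ A₂ S T R : ℤ} (hS : S ≠ 0) :
    (IsSquare A₁ ∧ IsSquare A₂ ∧ S ∣ T ∧ 0 < R) ↔ ∃ n : ℤ, n ≥ 0 ∧ relM A₁ A₂ S T R n = 0 := by
  constructor
  · rintro ⟨⟨s₁, rfl⟩, ⟨s₂, rfl⟩, ⟨q, rfl⟩, hR⟩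
    have hb := rel_bound s₁ s₂ (S * q)
    set X := relX (s₁ * s₁) (s₂ * s₂) with hX
    refine ⟨(2 * R - 1) * ((S * q) ^ 2 + X ^ 2 + (s₁ + s₂ * X)) - q ^ 2, ?_, ?_⟩
    · have h1 : q ^ 2 ≤ (S * q) ^ 2 := by
        rw [mul_pow]
        have : 1 ≤ S ^ 2 := by have := pow_pos (abs_pos.mpr hS) 2; rw [sq_abs] at this; omega
        nlinarith [sq_nonneg q]
      nlinarith [sq_nonneg (S * q)]
    · unfold relM relU
      rw [← hX]; ring
  · rintro ⟨n, hn, h⟩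
    have hv : S ^ 2 * (2 * R - 1) ≠ 0 := mul_ne_zero (pow_ne_zero 2 hS) (by omega)
    obtain ⟨⟨s₁, rfl⟩, ⟨s₂, rfl⟩⟩ := squares_of_quartic hv h
    have key : ∃ t₁ t₂ : ℤ, s₁ * s₁ = t₁ * t₁ ∧ s₂ * s₂ = t₂ * t₂ ∧
        relU (s₁ * s₁) (s₂ * s₂) S T R n =
        S ^ 2 * (2 * R - 1) * (t₁ + t₂ * relX (s₁ * s₁) (s₂ * s₂)) := by
      unfold relM at h
      generalize relU (s₁ * s₁) (s₂ * s₂) S T R n = u at *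
      generalize relX (s₁ * s₁) (s₂ * s₂) = X at *
      generalize S ^ 2 * (2 * R - 1) = v at *
      have : (u - v * (s₁ + s₂ * X)) * (u - v * (-s₁ + -s₂ * X)) *
        ((u - v * (s₁ + -s₂ * X)) * (u - v * (-s₁ + s₂ * X))) = 0 := by rw [← h]; ring
      rcases mul_eq_zero.mp this with h1 | h1 <;> rcases mul_eq_zero.mp h1 with h2 | h2
      · exact ⟨s₁, s₂, rfl, rfl, sub_eq_zero.mp h2⟩
      · exact ⟨-s₁, -s₂, by ring, by ring, sub_eq_zero.mp h2⟩
      · exact ⟨s₁, -s₂, by ring, by ring, sub_eq_zero.mp h2⟩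
      · exact ⟨-s₁, s₂, by ring, by ring, sub_eq_zero.mp h2⟩
    obtain ⟨t₁, t₂, h1, h2, h3⟩ := key
    have hb := rel_bound t₁ t₂ T
    rw [h1, h2] at h3
    unfold relU at h3
    set X := relX (t₁ * t₁) (t₂ * t₂)
    have h4 : S ^ 2 * ((2 * R - 1) * (T ^ 2 + X ^ 2 + (t₁ + t₂ * X)) - n) = T ^ 2 := by
      linear_combination -h3
    refine ⟨⟨s₁, rfl⟩, ⟨s₂, rfl⟩, ?_, ?_⟩
    · exact (Int.pow_dvd_pow_iff (by norm_num)).mp ⟨_, h4.symm⟩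
    · by_contra hR
      have hS2 : 0 < S ^ 2 := by positivity
      have h5 : (2 * R - 1) * (T ^ 2 + X ^ 2 + (t₁ + t₂ * X)) - n < 0 := by nlinarith [sq_nonneg T]
      nlinarith [sq_nonneg T]

end NineUnknowns

/-! ### Quotients of Pell numbers -/

namespace NineUnknowns
open Pell

theorem yn_le_pow {a : ℕ} (a1 : 1 < a) (n : ℕ) : yn a1 (n + 1) ≤ (2 * a) ^ n := by
  induction n with
  | zero => simp
  | succ n ih =>
    have := yn_succ_succ a1 n
    calc yn a1 (n + 2) ≤ 2 * a * yn a1 (n + 1) := by omega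
      _ ≤ 2 * a * (2 * a) ^ n := by gcongr
      _ = _ := by ring

theorem pow_le_yn {a : ℕ} (a1 : 1 < a) (n : ℕ) : (2 * a - 1) ^ n ≤ yn a1 (n + 1) := by
  induction n with
  | zero => simp
  | succ n ih =>
    have h1 := yn_succ_succ a1 n
    have h2 := (strictMono_y a1).monotone (Nat.le_succ n)
    have h3 : (2 * a - 1) * yn a1 (n + 1) ≤ yn a1 (n + 2) := by
      rw [Nat.sub_mul, one_mul]; simp only [Nat.succ_eq_add_one] at h2; omega
    calc (2 * a - 1) ^ (n + 1) = (2 * a - 1) * (2 * a - 1) ^ n := by ring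
      _ ≤ (2 * a - 1) * yn a1 (n + 1) := by gcongr
      _ ≤ _ := h3

/-- The quotient of two Pell numbers with the same index is close to the quotient of the leading
terms. -/
theorem pell_ratio {a b X : ℕ} (a1 : 1 < a) (b1 : 1 < b) (hab : b ≤ a) (hX : X ≤ b) :
    |(yn a1 (X + 1) : ℝ) / yn b1 (X + 1) - ((a : ℝ) / b) ^ X| ≤ ((a : ℝ) / b) ^ X * (X / b) := by
  have hb : (1 : ℝ) < b := by exact_mod_cast b1
  have ha : (b : ℝ) ≤ a := by exact_mod_cast hab
  have hXb : (X : ℝ) / b ≤ 1 := by rw [div_le_one (by linarith)]; exact_mod_cast hX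
  have hX0 : (0 : ℝ) ≤ X / b := by positivity
  set Z : ℝ := ((a : ℝ) / b) ^ X with hZ
  have hZ0 : 0 < Z := by have : (0 : ℝ) < a := by linarith
                         positivity
  set c : ℝ := (yn a1 (X + 1) : ℝ)
  set j : ℝ := (yn b1 (X + 1) : ℝ)
  have hc1 : c ≤ (2 * a) ^ X := by simp only [c]; exact_mod_cast yn_le_pow a1 X
  have hj1 : j ≤ (2 * b) ^ X := by simp only [j]; exact_mod_cast yn_le_pow b1 X
  have hc2 : (2 * a - 1) ^ X ≤ c := by
    have := pow_le_yn a1 X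
    have h2 : (((2 * a - 1 : ℕ) ^ X : ℕ) : ℝ) ≤ c := by simp only [c]; exact_mod_cast this
    rw [Nat.cast_pow, Nat.cast_sub (by omega)] at h2
    exact_mod_cast h2
  have hj2 : (2 * b - 1) ^ X ≤ j := by
    have := pow_le_yn b1 X
    have h2 : (((2 * b - 1 : ℕ) ^ X : ℕ) : ℝ) ≤ j := by simp only [j]; exact_mod_cast this
    rw [Nat.cast_pow, Nat.cast_sub (by omega)] at h2
    exact_mod_cast h2
  have hj0 : 0 < j := lt_of_lt_of_le (by apply pow_pos; linarith) hj2
  -- Bernoulli's inequality for both sequences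
  have hber : ∀ s : ℝ, 1 < s → (2 * s) ^ X * (1 - X / (2 * s)) ≤ (2 * s - 1) ^ X := by
    intro s hs
    have h1 := one_add_mul_le_pow (a := -(1 / (2 * s))) (by
      have : 1 / (2 * s) ≤ 1 := by rw [div_le_one (by linarith)]; linarith
      linarith) X
    have h2 : (2 * s - 1) ^ X = (2 * s) ^ X * (1 + -(1 / (2 * s))) ^ X := by
      rw [← mul_pow]; congr 1; field_simp; ring
    rw [h2]
    have h3 : (1 : ℝ) - X / (2 * s) = 1 + X * -(1 / (2 * s)) := by ring
    rw [h3]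
    gcongr
  have hab2 : (2 * (a : ℝ)) ^ X = Z * (2 * b) ^ X := by
    rw [hZ, ← mul_pow]; congr 1; field_simp
  have hP : (0 : ℝ) < (2 * b) ^ X := by positivity
  have hba := hber a (by linarith)
  have hbb := hber b hb
  have hXa : (X : ℝ) / (2 * a) ≤ X / b := by gcongr; linarith
  have e1 : (X : ℝ) / (2 * b) = X / b / 2 := by ring
  rw [e1] at hbb
  set u : ℝ := X / b
  rw [abs_le]
  constructor
  · rw [neg_le_sub_iff_le_add, ← sub_le_iff_le_add, le_div_iff₀ hj0]
    have h1 : (Z - Z * u) * j ≤ (Z - Z * u) * (2 * b) ^ X := by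
      gcongr
      nlinarith
    have h2 : (Z - Z * u) * (2 * b) ^ X ≤ (2 * a) ^ X * (1 - X / (2 * a)) := by
      rw [hab2]
      have : Z * (2 * b) ^ X * (1 - u) ≤ Z * (2 * b) ^ X * (1 - X / (2 * a)) := by gcongr
      linarith
    linarith
  · rw [sub_le_iff_le_add, div_le_iff₀ hj0]
    have h1 : (Z * u + Z) * ((2 * b) ^ X * (1 - u / 2)) ≤ (Z * u + Z) * j := by
      gcongr; linarith
    have h2 : (2 * (a : ℝ)) ^ X ≤ (Z * u + Z) * ((2 * b) ^ X * (1 - u / 2)) := by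
      rw [hab2]
      have : Z * (2 * b) ^ X * 1 ≤ Z * (2 * b) ^ X * ((1 + u) * (1 - u / 2)) := by
        gcongr; nlinarith
      linarith
    linarith

/-- The expansion of `(V + 1) ^ (2 X)` split at `V ^ X`: the quotient is the central binomial
coefficient modulo `V`, and the remainder is small relative to `V ^ X`. -/
theorem binomial_split (X V : ℕ) : ∃ q r : ℕ, (V + 1) ^ (2 * X) = V ^ X * q + r ∧
    r * V ≤ 4 ^ X * V ^ X ∧ q ≡ (2 * X).choose X [MOD V] := by
  refine ⟨∑ i ∈ Finset.range (X + 1), V ^ i * (2 * X).choose (X + i),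
    ∑ i ∈ Finset.range X, V ^ i * (2 * X).choose i, ?_, ?_, ?_⟩
  · rw [add_pow, show 2 * X + 1 = X + (X + 1) by ring, Finset.sum_range_add, add_comm,
      Finset.mul_sum]
    congr 1
    · apply Finset.sum_congr rfl; intro i _; simp [pow_add]; ring
    · apply Finset.sum_congr rfl; intro i _; simp
  · have h4 : ∑ i ∈ Finset.range X, (2 * X).choose i ≤ 4 ^ X := by
      calc _ ≤ ∑ i ∈ Finset.range (2 * X + 1), (2 * X).choose i :=
            Finset.sum_le_sum_of_subset (Finset.range_subset_range.mpr (by omega))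
        _ = 4 ^ X := by rw [Nat.sum_range_choose, pow_mul]; norm_num
    calc _ = ∑ i ∈ Finset.range X, V ^ (i + 1) * (2 * X).choose i := by
          rw [Finset.sum_mul]; apply Finset.sum_congr rfl; intro i _; ring
      _ ≤ ∑ i ∈ Finset.range X, V ^ X * (2 * X).choose i := by
          apply Finset.sum_le_sum; intro i hi
          rw [Finset.mem_range] at hi
          rcases Nat.eq_zero_or_pos V with rfl | hV
          · simp
          · gcongr
            exact hi
      _ = V ^ X * ∑ i ∈ Finset.range X, (2 * X).choose i := by rw [Finset.mul_sum]
      _ ≤ V ^ X * 4 ^ X := by gcongr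
      _ = _ := by ring
  · rw [Finset.sum_range_succ', pow_zero, one_mul, add_zero]
    have : V ∣ ∑ i ∈ Finset.range X, V ^ (i + 1) * (2 * X).choose (X + (i + 1)) :=
      Finset.dvd_sum fun i _ => (dvd_pow_self V (by omega)).mul_right _
    simpa using (Nat.modEq_zero_iff_dvd.mpr this).add_right ((2 * X).choose X)

/-- The integer `q` of `binomial_split` is approximated by a quotient of Pell numbers. -/
theorem ratio_core {X V M q r : ℕ} (hX : 1 ≤ X) (hV : 16 ≤ V) (hM : 1 ≤ M)
    (hq : (V + 1) ^ (2 * X) = V ^ X * q + r) (hr : r * V ≤ 4 ^ X * V ^ X)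
    (a1 : 1 < (M * X) ^ 2 * (V + 1) ^ 2) (b1 : 1 < (M * X) ^ 2 * V) :
    ∃ Z : ℝ, (V : ℝ) ^ X ≤ Z ∧ Z / 2 ≤ (yn a1 (X + 1) : ℝ) / yn b1 (X + 1) ∧
      |Z - q| ≤ 4 ^ X / V ∧
        (Z ≤ 4 * M → |(yn a1 (X + 1) : ℝ) / yn b1 (X + 1) - q| ≤ 4 ^ X / V + 4 / V) := by
  have hVr : (16 : ℝ) ≤ V := by exact_mod_cast hV
  have hMr : (1 : ℝ) ≤ M := by exact_mod_cast hM
  have hXr : (1 : ℝ) ≤ X := by exact_mod_cast hX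
  have hMX : X ≤ (M * X) ^ 2 := by nlinarith [Nat.mul_le_mul hM hX, Nat.mul_le_mul hM (le_refl X)]
  have h1 := pell_ratio (X := X) a1 b1 (by gcongr; nlinarith) (by nlinarith)
  have hZe : (((((M * X) ^ 2 * (V + 1) ^ 2 : ℕ) : ℝ)) / ((M * X) ^ 2 * V : ℕ)) ^ X =
      ((V : ℝ) + 1) ^ (2 * X) / V ^ X := by
    rw [pow_mul, ← div_pow]; congr 1; push_cast; field_simp
  rw [hZe] at h1
  set Z : ℝ := ((V : ℝ) + 1) ^ (2 * X) / V ^ X with hZ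
  have hZV : (V : ℝ) ^ X ≤ Z := by
    rw [hZ, le_div_iff₀ (by positivity), ← pow_add, ← two_mul]
    gcongr; linarith
  have hZ0 : 0 < Z := lt_of_lt_of_le (by positivity) hZV
  set ρ : ℝ := (yn a1 (X + 1) : ℝ) / yn b1 (X + 1)
  have hu : (X : ℝ) / ((M * X) ^ 2 * V : ℕ) ≤ 1 / (M * V) * (1 / M) := by
    push_cast
    rw [div_mul_div_comm, div_le_div_iff₀ (by positivity) (by positivity)]
    have : (M : ℝ) * V * M * (X * 1) ≤ M * V * M * (X * X) := by gcongr
    linarith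
  have hZq : |Z - q| ≤ 4 ^ X / V := by
    have hqr : ((V : ℝ) + 1) ^ (2 * X) = V ^ X * q + r := by exact_mod_cast hq
    have hrr : (r : ℝ) * V ≤ 4 ^ X * V ^ X := by exact_mod_cast hr
    have : Z - q = r / V ^ X := by rw [hZ, hqr]; field_simp; ring
    rw [this, abs_of_nonneg (by positivity), div_le_div_iff₀ (by positivity) (by positivity)]
    exact hrr
  refine ⟨Z, hZV, ?_, hZq, ?_⟩
  · have h2 : (X : ℝ) / ((M * X) ^ 2 * V : ℕ) ≤ 1 / 2 := by
      refine hu.trans ?_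
      rw [div_mul_div_comm, div_le_div_iff₀ (by positivity) (by norm_num)]
      have : (1 : ℝ) * 16 * 1 ≤ M * V * M := by gcongr
      linarith
    have h3 := (abs_le.mp h1).1
    have : Z * ((X : ℝ) / ((M * X) ^ 2 * V : ℕ)) ≤ Z * (1 / 2) := by gcongr
    linarith
  · intro hZM
    have h2 : Z * ((X : ℝ) / ((M * X) ^ 2 * V : ℕ)) ≤ 4 / V := by
      calc _ ≤ (4 * (M : ℝ)) * (1 / (M * V) * (1 / M)) := by gcongr
        _ = 4 / V * (1 / M) := by field_simp
        _ ≤ 4 / V * 1 := by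
            gcongr; rw [div_le_one (by linarith)]; exact hMr
        _ = _ := mul_one _
    calc |ρ - q| = |(ρ - Z) + (Z - q)| := by ring_nf
      _ ≤ |ρ - Z| + |Z - q| := abs_add_le _ _
      _ ≤ _ := by linarith

/-- The recurrence of the Pell numbers has the characteristic root `2` modulo `4 a - 5`. The claim is
stated for two consecutive indices so that the induction goes through. -/
theorem pow_two_modEq {a : ℕ} (a1 : 1 < a) (n : ℕ) :
    (4 * (a : ℤ) - 5) ∣ 3 * 2 ^ n * (yn a1 n : ℤ) - 2 * (4 ^ n - 1) ∧
    (4 * (a : ℤ) - 5) ∣ 3 * 2 ^ (n + 1) * (yn a1 (n + 1) : ℤ) - 2 * (4 ^ (n + 1) - 1) := by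
  induction n with
  | zero => simp
  | succ n ih =>
    refine ⟨ih.2, ?_⟩
    obtain ⟨⟨u, hu⟩, ⟨v, hv⟩⟩ := ih
    have h := yn_succ_succ a1 n
    have h' : (yn a1 (n + 2) : ℤ) = 2 * a * yn a1 (n + 1) - yn a1 n := by
      have : (yn a1 (n + 2) : ℤ) + yn a1 n = 2 * a * yn a1 (n + 1) := by exact_mod_cast h
      linarith
    refine ⟨5 * v - 4 * u + 3 * 2 ^ (n + 1) * (yn a1 (n + 1) : ℤ), ?_⟩
    rw [show n + 1 + 1 = n + 2 from rfl, h']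
    simp only [pow_succ] at hu hv ⊢
    linear_combination 5 * hv - 4 * hu

end NineUnknowns

/-! ### Divisors of central binomial coefficients -/

namespace NineUnknowns
open Pell

/-- If `J` is congruent to `X + 1` modulo `b - 1` and `|J|` is a Pell number then its index is `X + 1` or
much larger. -/
theorem index_eq {b : ℕ} (b1 : 1 < b) {X n : ℕ} {J : ℤ} (hb : 4 * X + 3 ≤ b)
    (hJ : (b : ℤ) - 1 ∣ J - (X + 1 : ℕ)) (hn : J.natAbs = yn b1 n) :
    n = X + 1 ∨ 3 * X + 1 ≤ n := by
  have h2 : (b : ℤ) - 1 ∣ (yn b1 n : ℤ) - n := by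
    have := (Nat.modEq_iff_dvd.mp (yn_modEq_a_sub_one b1 n).symm)
    rwa [Nat.cast_sub b1.le, Nat.cast_one] at this
  rw [← hn] at h2
  rcases Int.natAbs_eq J with h4 | h4
  · rw [h4] at hJ
    have h5 : (b : ℤ) - 1 ∣ (n : ℤ) - (X + 1 : ℕ) := dvd_congr' (dvd_sub hJ h2) (by ring)
    by_cases h0 : (n : ℤ) - (X + 1 : ℕ) = 0
    · left; omega
    · right
      have := Int.natAbs_le_of_dvd_ne_zero h5 h0
      omega
  · rw [h4] at hJ
    have h5 : (b : ℤ) - 1 ∣ (n : ℤ) + (X + 1 : ℕ) := by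
      rw [← dvd_neg]; exact dvd_congr' (dvd_add hJ h2) (by ring)
    right
    have := Int.le_of_dvd (by omega) h5
    omega

/-- An index of at least `3 X + 1` is incompatible with `|J| < 2 |C|`, a consequence of the closeness of
`C / J` to a nonzero integer. -/
theorem yn_big {a b : ℕ} (a1 : 1 < a) (b1 : 1 < b) (hb : 16 ≤ b) (hab : a ≤ 4 * b ^ 2) {X n : ℕ}
    (hX : 1 ≤ X) (hn : 3 * X + 1 ≤ n) : 2 * yn a1 (X + 1) ≤ yn b1 n := by
  calc 2 * yn a1 (X + 1) ≤ 2 ^ X * (2 * a) ^ X := by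
        gcongr
        · exact Nat.le_self_pow (by omega) 2
        · exact yn_le_pow a1 X
    _ ≤ 2 ^ X * (2 * (4 * b ^ 2)) ^ X := by gcongr
    _ = (16 * b ^ 2) ^ X := by rw [← mul_pow]; congr 1; ring
    _ ≤ (b ^ 3) ^ X := by gcongr; nlinarith [sq_nonneg b]
    _ = b ^ (3 * X) := by rw [pow_mul]
    _ ≤ (2 * b - 1) ^ (3 * X) := by gcongr; omega
    _ ≤ yn b1 (3 * X + 1) := pow_le_yn b1 _
    _ ≤ yn b1 n := (strictMono_y b1).monotone hn

/-- For large `a` the congruence satisfied by powers of two characterises them: subtracting it from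
`pow_two_modEq` shows that `4 a - 5` divides `(W - 2 ^ n) (W 2 ^ n + 1)`. -/
theorem power_of_congruence {a : ℕ} (a1 : 1 < a) {n : ℕ} (hn : 1 ≤ n) {W C : ℤ} (hW : W ≠ 0)
    (hC : C.natAbs = yn a1 n) (hS : 4 * (a : ℤ) - 5 ∣ 3 * W * C - 2 * (W ^ 2 - 1))
    (ha : 2 * 4 ^ n * W ^ 2 ≤ a) : W.natAbs = 2 ^ n := by
  have key : ∀ W C : ℤ, W ≠ 0 → C = yn a1 n → 4 * (a : ℤ) - 5 ∣ 3 * W * C - 2 * (W ^ 2 - 1) →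
      2 * 4 ^ n * W ^ 2 ≤ a → W.natAbs = 2 ^ n := by
    clear hW hC hS ha W C
    intro W C hW hC hS ha
    have h1 := (pow_two_modEq a1 n).1
    rw [← hC] at h1
    obtain ⟨p, hp⟩ : ∃ p : ℤ, p = 2 ^ n := ⟨_, rfl⟩
    have hp4 : (4 : ℤ) ^ n = p ^ 2 := by rw [hp, ← pow_mul, mul_comm, pow_mul]; norm_num
    have hp2 : 2 ≤ p := by
      rw [hp]; calc (2 : ℤ) = 2 ^ 1 := by norm_num
        _ ≤ 2 ^ n := by gcongr; norm_num
    rw [← hp, hp4] at h1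
    rw [hp4] at ha
    have h2 : 4 * (a : ℤ) - 5 ∣ 2 * ((W - p) * (W * p + 1)) :=
      dvd_congr' (dvd_sub (h1.mul_left W) (hS.mul_left p)) (by ring)
    have hcop : IsCoprime (4 * (a : ℤ) - 5) 2 := ⟨1, -(2 * a - 3), by ring⟩
    have h3 := hcop.dvd_of_dvd_mul_left h2
    have h0 : (W - p) * (W * p + 1) = 0 := by
      apply Int.eq_zero_of_abs_lt_dvd h3
      have hW1 := abs_pos.mpr hW
      have h4 : |W - p| ≤ |W| + p := by
        calc |W - p| ≤ |W| + |p| := abs_sub _ _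
          _ = _ := by rw [abs_of_pos (by omega : 0 < p)]
      have h5 : |W * p + 1| ≤ |W| * p + 1 := by
        calc |W * p + 1| ≤ |W * p| + |1| := abs_add_le _ _
          _ = _ := by rw [abs_mul, abs_of_pos (by omega : 0 < p), abs_one]
      rw [abs_mul]
      have h6 : |W - p| * |W * p + 1| ≤ (|W| + p) * (|W| * p + 1) := by gcongr
      have h7 : |W| + p ≤ 2 * (|W| * p) - 0 := by nlinarith
      have h8 : (|W| + p) * (|W| * p + 1) ≤ (2 * (|W| * p)) * (|W| * p + |W| * p) := by
        gcongr
        · linarith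
        · nlinarith
      have h9 : (2 * (|W| * p)) * (|W| * p + |W| * p) = 4 * (p ^ 2 * W ^ 2) := by
        rw [← sq_abs W]; ring
      have h10 : 0 < W ^ 2 := by positivity
      nlinarith
    rcases mul_eq_zero.mp h0 with h4 | h4
    · have : W = ((2 ^ n : ℕ) : ℤ) := by push_cast; rw [← hp]; omega
      rw [this, Int.natAbs_natCast]
    · have : p ∣ 1 := ⟨-W, by linear_combination h4⟩
      have := Int.le_of_dvd (by norm_num) this
      omega
  rcases Int.natAbs_eq C with h4 | h4
  · exact key W C hW (by rw [h4, hC]) hS ha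
  · have := key (-W) (-C) (by simpa using hW) (by rw [h4, hC]; simp) (dvd_congr' hS (by ring))
      (by simpa using ha)
    simpa using this

/-- The size of `a` needed in `power_of_congruence`. It only uses `V ^ X ≤ 4 M`, which follows from
the approximation of `M` by a quotient of Pell numbers. -/
theorem big_bound {X V M w : ℕ} (hX : 1 ≤ X) (hV16 : 16 ≤ V) (hVW : 16 * w ^ 2 ≤ V)
    (hMM : M ^ 2 ≤ (M * X) ^ 2) (e1 : V ^ X ≤ 4 * M) :
    2 * 4 ^ (X + 1) * w ^ 2 ≤ (M * X) ^ 2 * (V + 1) ^ 2 := by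
  have e2 : (V ^ X) ^ 2 ≤ 16 * M ^ 2 := by
    calc (V ^ X) ^ 2 ≤ (4 * M) ^ 2 := by gcongr
      _ = _ := by ring
  have e3 : 16 ^ (2 * X) ≤ (V ^ X) ^ 2 := by
    rw [← pow_mul, mul_comm 2 X]; gcongr
  have e4 : 2 * 4 ^ (X + 1) ≤ 16 ^ (2 * X) := by
    have : (16 : ℕ) ^ (2 * X) = 4 ^ X * (4 ^ X) * (4 ^ X) * 4 ^ X := by
      rw [← mul_pow, ← mul_pow, ← mul_pow, pow_mul]; norm_num
    rw [this]
    have e5 : 4 ≤ 4 ^ X := Nat.le_self_pow (by omega) 4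
    calc 2 * 4 ^ (X + 1) = 4 ^ X * 4 * 2 * 1 := by ring
      _ ≤ 4 ^ X * (4 ^ X) * (4 ^ X) * 4 ^ X := by gcongr <;> omega
  have e6 : 16 * w ^ 2 ≤ (V + 1) ^ 2 := by nlinarith
  have e7 : 16 * (2 * 4 ^ (X + 1) * w ^ 2) ≤ 16 * ((M * X) ^ 2 * (V + 1) ^ 2) := by
    calc _ = (2 * 4 ^ (X + 1)) * (16 * w ^ 2) := by ring
      _ ≤ (16 * (M * X) ^ 2) * (V + 1) ^ 2 := by
        gcongr ?_ * ?_
        exact (e4.trans e3).trans (e2.trans (by gcongr))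
      _ = _ := by ring
  have e8 : 2 * 4 ^ (X + 1) * w ^ 2 ≤ (M * X) ^ 2 * (V + 1) ^ 2 := by omega
  omega

/-- The base of the binomial expansion, a multiple of `Y`. -/
def cV (Y W : ℤ) : ℤ := 16 * W ^ 2 * Y

/-- The parameter of the first Pell equation. -/
def cA (X Y W l : ℤ) : ℤ := (l * Y * X) ^ 2 * (cV Y W + 1) ^ 2

/-- The parameter of the second Pell equation. The quotient `cA / cB` is `(V + 1) ^ 2 / V`, with `V` the
value of `cV`. -/
def cB (X Y W l : ℤ) : ℤ := (l * Y * X) ^ 2 * cV Y W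

/-- A number congruent to `X + 1` modulo `cA - 1`, meant to be the Pell number with index `X + 1`. -/
def cC (X Y W l h : ℤ) : ℤ := X + 1 + (cA X Y W l - 1) * h

/-- A number congruent to `X + 1` modulo `cB - 1`, meant to be the Pell number with index `X + 1`. -/
def cJ (X Y W l k : ℤ) : ℤ := X + 1 + (cB X Y W l - 1) * k

set_option maxHeartbeats 1000000 in
/-- The square conditions, the congruence and the closeness of `C / J` to `l Y` force `W` to be
`± 2 ^ (X + 1)` and `Y` to divide the central binomial coefficient. -/
theorem bridge_back {X Y : ℕ} (hX : 1 ≤ X) (hY : 1 ≤ Y) {W l h k x y : ℤ}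
    (hW : W ≠ 0) (hl : l ≠ 0) (hx : x ≠ 0)
    (h1 : IsSquare (pD (cA X Y W l) (cC X Y W l h) * pF (cA X Y W l) (cC X Y W l h) x *
      pI (cA X Y W l) (X + 1) (cC X Y W l h) x y))
    (h2 : IsSquare ((cB X Y W l ^ 2 - 1) * cJ X Y W l k ^ 2 + 1))
    (h3 : 4 * cA X Y W l - 5 ∣ 3 * W * cC X Y W l h - 2 * (W ^ 2 - 1))
    (h4 : 4 * (cC X Y W l h - cJ X Y W l k * (l * Y)) ^ 2 < cJ X Y W l k ^ 2) :
    W.natAbs = 2 ^ (X + 1) ∧ Y ∣ (2 * X).choose X := by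
  obtain ⟨M, hM⟩ : ∃ M : ℕ, M = l.natAbs * Y := ⟨_, rfl⟩
  obtain ⟨V, hV⟩ : ∃ V : ℕ, V = 16 * W.natAbs ^ 2 * Y := ⟨_, rfl⟩
  have hWn : 1 ≤ W.natAbs := Int.natAbs_pos.mpr hW
  have hln : 1 ≤ l.natAbs := Int.natAbs_pos.mpr hl
  have hM1 : 1 ≤ M := by rw [hM]; nlinarith
  have hVW : 16 * W.natAbs ^ 2 ≤ V := by rw [hV]; nlinarith [sq_nonneg W.natAbs]
  have hW2 : 1 ≤ W.natAbs ^ 2 := Nat.one_le_pow _ _ hWn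
  have hV16 : 16 ≤ V := by omega
  have eV : cV Y W = V := by unfold cV; rw [hV]; push_cast; rw [sq_abs]
  have eM : (l * Y * X) ^ 2 = ((M * X : ℕ) : ℤ) ^ 2 := by
    rw [hM]; push_cast; rw [mul_pow, mul_pow, mul_pow, mul_pow, sq_abs]
  obtain ⟨a, ha⟩ : ∃ a : ℕ, a = (M * X) ^ 2 * (V + 1) ^ 2 := ⟨_, rfl⟩
  obtain ⟨b, hb⟩ : ∃ b : ℕ, b = (M * X) ^ 2 * V := ⟨_, rfl⟩
  have eA : cA X Y W l = a := by unfold cA; rw [eV, eM, ha]; push_cast; ring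
  have eB : cB X Y W l = b := by unfold cB; rw [eV, eM, hb]; push_cast; ring
  have hC : (a : ℤ) - 1 ∣ cC X Y W l h - (X + 1 : ℕ) := by
    unfold cC; rw [eA]; exact ⟨h, by push_cast; ring⟩
  have hJ : (b : ℤ) - 1 ∣ cJ X Y W l k - (X + 1 : ℕ) := by
    unfold cJ; rw [eB]; exact ⟨k, by push_cast; ring⟩
  rw [eA] at h1 h3
  rw [eB] at h2
  generalize cC X Y W l h = C at *
  generalize cJ X Y W l k = J at *
  have hMX : X ^ 2 ≤ (M * X) ^ 2 := by gcongr; nlinarith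
  have hMM : M ^ 2 ≤ (M * X) ^ 2 := by gcongr; nlinarith
  have hX2 : X ≤ X ^ 2 := Nat.le_self_pow (by norm_num) X
  have hb16 : X * 16 ≤ b := by rw [hb]; gcongr; omega
  have hba : b ≤ a := by
    rw [ha, hb]; exact Nat.mul_le_mul_left _ (by nlinarith)
  have hab : a ≤ 4 * b ^ 2 := by
    rw [ha, hb, mul_pow]
    have e1 : (M * X) ^ 2 * 1 ≤ (M * X) ^ 2 * (M * X) ^ 2 := by gcongr; nlinarith
    have e2 : (V + 1) ^ 2 ≤ 4 * V ^ 2 := by nlinarith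
    calc _ ≤ ((M * X) ^ 2 * (M * X) ^ 2) * (4 * V ^ 2) := by gcongr
      _ = _ := by ring
  have a1 : 1 < a := by omega
  have b1 : 1 < b := by omega
  have hCn : C.natAbs = yn a1 (X + 1) :=
    pell_back a1 (by omega) (by omega) hC hx (by exact_mod_cast h1)
  obtain ⟨n, hJn, -⟩ := pell_of_sq b1 h2
  -- passing to absolute values in the approximation
  have hL : |l * Y| = (M : ℤ) := by rw [hM, abs_mul]; push_cast; simp
  have h5 : 2 * |C - J * (l * Y)| < |J| := by
    have : |2 * (C - J * (l * Y))| < |J| := by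
      apply sq_lt_sq.mp; linarith
    rwa [abs_mul, abs_two] at this
  have h6 : |C| ≤ |J| * M + |C - J * (l * Y)| := by
    rw [← hL, ← abs_mul]
    have := abs_add_le (J * (l * Y)) (C - J * (l * Y))
    rwa [add_sub_cancel] at this
  have h7 : |J| * M ≤ |C| + |C - J * (l * Y)| := by
    rw [← hL, ← abs_mul]
    have := abs_sub C (C - J * (l * Y))
    rwa [sub_sub_cancel] at this
  have hn : n = X + 1 := by
    refine (index_eq b1 (by omega) hJ hJn).resolve_right fun h8 => ?_
    have h9 := yn_big a1 b1 (by omega) hab hX h8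
    rw [← hCn, ← hJn] at h9
    have h10 : |J| * 1 ≤ |J| * M := by gcongr; exact_mod_cast hM1
    have := Int.abs_eq_natAbs J
    have := Int.abs_eq_natAbs C
    omega
  subst hn
  have hJ0 : 0 < yn b1 (X + 1) := by have := yn_ge_n b1 (X + 1); omega
  have hjr : (0 : ℝ) < yn b1 (X + 1) := by exact_mod_cast hJ0
  have hρ : |(yn a1 (X + 1) : ℝ) / yn b1 (X + 1) - M| ≤ 1 / 2 := by
    have e1 : |C| = (yn a1 (X + 1) : ℤ) := by rw [← hCn]; simp
    have e2 : |J| = (yn b1 (X + 1) : ℤ) := by rw [← hJn]; simp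
    rw [e1, e2] at h6 h7
    rw [e2] at h5
    have h8 : 2 * |(yn a1 (X + 1) : ℤ) - yn b1 (X + 1) * M| ≤ yn b1 (X + 1) := by
      have : |(yn a1 (X + 1) : ℤ) - yn b1 (X + 1) * M| ≤ |C - J * (l * Y)| := by
        rw [abs_le]; constructor <;> linarith
      linarith
    have h9 : 2 * |(yn a1 (X + 1) : ℝ) - yn b1 (X + 1) * M| ≤ yn b1 (X + 1) := by
      exact_mod_cast h8
    have e3 : (yn a1 (X + 1) : ℝ) / yn b1 (X + 1) - M =
        (yn a1 (X + 1) - yn b1 (X + 1) * M) / yn b1 (X + 1) := by field_simp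
    rw [e3, abs_div, abs_of_pos hjr, div_le_div_iff₀ hjr (by norm_num)]
    linarith
  subst ha hb
  obtain ⟨q, r, hq, hr, hqmod⟩ := binomial_split X V
  obtain ⟨Z, hZV, hZρ, hZq, hρq⟩ := ratio_core hX hV16 hM1 hq hr a1 b1
  set ρ : ℝ := (yn a1 (X + 1) : ℝ) / yn b1 (X + 1)
  have hVr : (16 : ℝ) ≤ V := by exact_mod_cast hV16
  have hVX : (V : ℝ) ≤ (V : ℝ) ^ X := le_self_pow₀ (by linarith) (by omega)
  have hZM : Z ≤ 4 * M := by
    have := (abs_le.mp hρ).2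
    linarith
  -- `a` is large enough for the exponentiation criterion
  have hbig : 2 * 4 ^ (X + 1) * W ^ 2 ≤ (((M * X) ^ 2 * (V + 1) ^ 2 : ℕ) : ℤ) := by
    have e1 : V ^ X ≤ 4 * M := by
      have : (V : ℝ) ^ X ≤ 4 * M := hZV.trans hZM
      exact_mod_cast this
    have e8 := big_bound hX hV16 hVW hMM e1
    have e9 : ((W.natAbs : ℕ) : ℤ) ^ 2 = W ^ 2 := by rw [Int.natCast_natAbs, sq_abs]
    rw [← e9]; exact_mod_cast e8
  have hWp := power_of_congruence a1 (by omega) hW hCn h3 hbig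
  refine ⟨hWp, ?_⟩
  have hV4 : V = 64 * 4 ^ X * Y := by
    rw [hV, hWp]; ring_nf; rw [pow_mul']; norm_num
  have e1 : (4 : ℝ) ^ X / V ≤ 1 / 64 := by
    rw [div_le_div_iff₀ (by linarith) (by norm_num)]
    have : 4 ^ X * 64 ≤ 1 * V := by rw [hV4, one_mul, mul_comm]; exact Nat.le_mul_of_pos_right _ hY
    exact_mod_cast this
  have e2 : (4 : ℝ) / V ≤ 1 / 4 := by
    rw [div_le_div_iff₀ (by linarith) (by norm_num)]; linarith
  have h8 : |(M : ℝ) - q| < 1 := by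
    have := hρq hZM
    rw [abs_le] at this hρ
    rw [abs_lt]; constructor <;> linarith [this.1, this.2, hρ.1, hρ.2]
  have hMq : M = q := by
    have : |(M : ℤ) - q| < 1 := by exact_mod_cast h8
    have := Int.abs_lt_one_iff.mp this
    omega
  have hYM : Y ∣ q := by rw [← hMq, hM]; exact dvd_mul_left _ _
  have hYV : Y ∣ V := by rw [hV]; exact dvd_mul_left _ _
  exact (hqmod.of_dvd hYV).dvd_iff (dvd_refl Y) |>.mp hYM

/-- If `Y` divides the central binomial coefficient then all conditions of `bridge_back` can be met with
`W = 2 ^ (X + 1)`. The approximation of `l Y` by `C / J` is sharper than needed there, which leaves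
room for a further factor. -/
theorem bridge_forth {X Y : ℕ} (hX : 1 ≤ X) (hY : 1 ≤ Y) (hdvd : Y ∣ (2 * X).choose X) :
    ∃ l h k x y : ℤ, l ≠ 0 ∧ x ≠ 0 ∧
    IsSquare (pD (cA X Y (2 ^ (X + 1)) l) (cC X Y (2 ^ (X + 1)) l h) *
      pF (cA X Y (2 ^ (X + 1)) l) (cC X Y (2 ^ (X + 1)) l h) x *
      pI (cA X Y (2 ^ (X + 1)) l) (X + 1) (cC X Y (2 ^ (X + 1)) l h) x y) ∧
    IsSquare ((cB X Y (2 ^ (X + 1)) l ^ 2 - 1) * cJ X Y (2 ^ (X + 1)) l k ^ 2 + 1) ∧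
    4 * cA X Y (2 ^ (X + 1)) l - 5 ∣
      3 * 2 ^ (X + 1) * cC X Y (2 ^ (X + 1)) l h - 2 * ((2 ^ (X + 1)) ^ 2 - 1) ∧
    (4 * Y) ^ 2 * (cC X Y (2 ^ (X + 1)) l h - cJ X Y (2 ^ (X + 1)) l k * (l * Y)) ^ 2 <
      cJ X Y (2 ^ (X + 1)) l k ^ 2 := by
  obtain ⟨V, hV⟩ : ∃ V : ℕ, V = 64 * 4 ^ X * Y := ⟨_, rfl⟩
  have h4X : 4 ≤ 4 ^ X := Nat.le_self_pow (by omega) 4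
  have hV64 : 64 * 4 * 1 ≤ V := by rw [hV]; gcongr
  have hV16 : 16 ≤ V := by omega
  obtain ⟨q, r, hq, hr, hqmod⟩ := binomial_split X V
  have hYV : Y ∣ V := by rw [hV]; exact dvd_mul_left _ _
  obtain ⟨l, hl⟩ : Y ∣ q := (hqmod.of_dvd hYV).dvd_iff (dvd_refl Y) |>.mpr hdvd
  have h4V : 4 ^ X < V := by rw [hV]; nlinarith
  have hVX0 : 0 < V ^ X := by positivity
  have hq1 : 1 ≤ q := by
    by_contra h0
    have h0 : q = 0 := by omega
    rw [h0, mul_zero, zero_add] at hq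
    have e1 : r < V ^ X := by
      by_contra h1
      have : V ^ X * V ≤ 4 ^ X * V ^ X := le_trans (by gcongr; omega) hr
      nlinarith
    have e2 : V ^ X ≤ (V + 1) ^ (2 * X) :=
      (Nat.pow_le_pow_left (Nat.le_succ V) X).trans (Nat.pow_le_pow_right (by omega) (by omega))
    omega
  have hl0 : l ≠ 0 := by rintro rfl; omega
  have eV : cV Y (2 ^ (X + 1)) = V := by
    unfold cV; rw [hV, ← pow_mul, mul_comm _ 2, pow_mul]; push_cast; ring
  have eM : ((l : ℤ) * Y * X) ^ 2 = ((q * X : ℕ) : ℤ) ^ 2 := by rw [hl]; push_cast; ring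
  obtain ⟨a, ha⟩ : ∃ a : ℕ, a = (q * X) ^ 2 * (V + 1) ^ 2 := ⟨_, rfl⟩
  obtain ⟨b, hb⟩ : ∃ b : ℕ, b = (q * X) ^ 2 * V := ⟨_, rfl⟩
  have eA : cA X Y (2 ^ (X + 1)) l = a := by unfold cA; rw [eV, eM, ha]; push_cast; ring
  have eB : cB X Y (2 ^ (X + 1)) l = b := by unfold cB; rw [eV, eM, hb]; push_cast; ring
  have hMX : 1 ≤ (q * X) ^ 2 := Nat.one_le_pow _ _ (by nlinarith)
  have hb16 : 1 * 16 ≤ b := by rw [hb]; gcongr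
  have hba : b ≤ a := by rw [ha, hb]; gcongr; nlinarith
  have a1 : 1 < a := by omega
  have b1 : 1 < b := by omega
  obtain ⟨h, hh⟩ : ((a : ℤ) - 1) ∣ (yn a1 (X + 1) : ℤ) - (X + 1 : ℕ) := by
    have := (Nat.modEq_iff_dvd.mp (yn_modEq_a_sub_one a1 (X + 1)).symm)
    rwa [Nat.cast_sub a1.le, Nat.cast_one] at this
  obtain ⟨k, hk⟩ : ((b : ℤ) - 1) ∣ (yn b1 (X + 1) : ℤ) - (X + 1 : ℕ) := by
    have := (Nat.modEq_iff_dvd.mp (yn_modEq_a_sub_one b1 (X + 1)).symm)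
    rwa [Nat.cast_sub b1.le, Nat.cast_one] at this
  have eC : cC X Y (2 ^ (X + 1)) l h = (yn a1 (X + 1) : ℤ) := by
    unfold cC; rw [eA]; push_cast at hh; linear_combination -hh
  have eJ : cJ X Y (2 ^ (X + 1)) l k = (yn b1 (X + 1) : ℤ) := by
    unfold cJ; rw [eB]; push_cast at hk; linear_combination -hk
  obtain ⟨x, y, hx, hsq⟩ := pell_forth a1 (b := X + 1) (by omega)
  refine ⟨l, h, k, x, y, by exact_mod_cast hl0, hx, ?_, ?_, ?_, ?_⟩
  · rw [eA, eC]; exact_mod_cast hsq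
  · rw [eB, eJ]; exact ⟨xn b1 (X + 1), by rw [← pell_int]; ring⟩
  · rw [eA, eC, ← pow_mul, mul_comm _ 2, pow_mul]; exact (pow_two_modEq a1 (X + 1)).1
  · rw [eC, eJ]
    have hJ0 : 0 < yn b1 (X + 1) := by have := yn_ge_n b1 (X + 1); omega
    have hjr : (0 : ℝ) < yn b1 (X + 1) := by exact_mod_cast hJ0
    subst ha hb
    obtain ⟨Z, hZV, hZρ, hZq, hρq⟩ := ratio_core hX hV16 hq1 hq hr a1 b1
    set ρ : ℝ := (yn a1 (X + 1) : ℝ) / yn b1 (X + 1) with hρ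
    have hY0 : (0 : ℝ) < Y := by exact_mod_cast hY
    have e1 : (4 : ℝ) ^ X / V = 1 / (64 * Y) := by
      rw [hV]; push_cast; field_simp
    have e2 : (4 : ℝ) / V ≤ 1 / (64 * Y) := by
      rw [hV, div_le_div_iff₀ (by positivity) (by positivity)]
      have : (4 : ℝ) ≤ 4 ^ X := by exact_mod_cast h4X
      push_cast
      nlinarith
    have e3 : 1 / (64 * (Y : ℝ)) ≤ 1 := by
      rw [div_le_one (by positivity)]
      have : (1 : ℝ) ≤ Y := by exact_mod_cast hY
      linarith
    have hqr : (1 : ℝ) ≤ q := by exact_mod_cast hq1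
    have e4 := hρq (by linarith [(abs_le.mp hZq).2])
    have e5 : |ρ - q| ≤ 1 / (32 * Y) := by
      have : 1 / (32 * (Y : ℝ)) = 1 / (64 * Y) + 1 / (64 * Y) := by field_simp; norm_num
      linarith
    have e6 : ρ - q = ((yn a1 (X + 1) : ℝ) - yn b1 (X + 1) * q) / yn b1 (X + 1) := by
      rw [hρ]; field_simp
    rw [e6, abs_div, abs_of_pos hjr, div_le_div_iff₀ hjr (by positivity)] at e5
    have e7 : |4 * (Y : ℝ) * ((yn a1 (X + 1) : ℝ) - yn b1 (X + 1) * q)| < |(yn b1 (X + 1) : ℝ)| := by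
      rw [abs_mul, abs_of_pos (by positivity : (0 : ℝ) < 4 * Y), abs_of_pos hjr]
      linarith
    have e8 := sq_lt_sq.mpr e7
    rw [mul_pow] at e8
    have e9 : (l : ℤ) * Y = q := by rw [hl]; push_cast; ring
    rw [e9]
    exact_mod_cast e8

end NineUnknowns

/-! ### Binary masks -/

namespace NineUnknowns

/-- The number of binary digits `1` of `n`. -/
def popc (n : ℕ) : ℕ := (Nat.digits 2 n).sum

theorem popc_zero : popc 0 = 0 := by simp [popc]

theorem popc_eq (n : ℕ) : popc n = n % 2 + popc (n / 2) := by
  rcases Nat.eq_zero_or_pos n with rfl | h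
  · simp [popc]
  · unfold popc; rw [Nat.digits_def' (by norm_num) h, List.sum_cons]

/-- Carries in a binary addition decrease the number of ones, and there are no carries exactly when the
summands have disjoint binary supports. -/
theorem popc_add (S T : ℕ) :
    popc (S + T) ≤ popc S + popc T ∧ (popc S + popc T ≤ popc (S + T) ↔ S &&& T = 0) := by
  induction h : S + T using Nat.strong_induction_on generalizing S T with
  | _ n ih =>
    subst h
    rcases Nat.eq_zero_or_pos (S + T) with h0 | hpos
    · obtain ⟨rfl, rfl⟩ : S = 0 ∧ T = 0 := by omega
      simp [popc_zero]
    have hand : S &&& T = 0 ↔ (S % 2 &&& T % 2) = 0 ∧ (S / 2 &&& T / 2) = 0 := by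
      have h1 := Nat.and_mod_two_pow (a := S) (b := T) (n := 1)
      have h2 := Nat.and_div_two_pow (a := S) (b := T) (n := 1)
      rw [pow_one] at h1 h2
      rw [← h1, ← h2]; omega
    have hS := popc_eq S
    have hT := popc_eq T
    have hST := popc_eq (S + T)
    have h1 := ih (S / 2 + T / 2) (by omega) (S / 2) (T / 2) rfl
    rw [hand]
    rcases Nat.mod_two_eq_zero_or_one S with s | s <;> rcases Nat.mod_two_eq_zero_or_one T with u | u
    · rw [show (S + T) / 2 = S / 2 + T / 2 by omega] at hST
      simp only [s, u]
      rw [← h1.2]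
      constructor
      · omega
      · simp; omega
    · rw [show (S + T) / 2 = S / 2 + T / 2 by omega] at hST
      simp only [s, u]
      rw [← h1.2]
      constructor
      · omega
      · simp; omega
    · rw [show (S + T) / 2 = S / 2 + T / 2 by omega] at hST
      simp only [s, u]
      rw [← h1.2]
      constructor
      · omega
      · simp; omega
    · rw [show (S + T) / 2 = (S / 2 + T / 2) + 1 by omega] at hST
      have h2 := (ih (S / 2 + T / 2 + 1) (by omega) (S / 2 + T / 2) 1 rfl).1
      have h3 : popc 1 = 1 := by simp [popc]
      simp only [s, u]
      constructor
      · omega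
      · simp; omega

theorem popc_shift (m a b : ℕ) (hb : b < 2 ^ m) : popc (a * 2 ^ m + b) = popc a + popc b := by
  induction m generalizing b with
  | zero => obtain rfl : b = 0 := by simpa using hb
            simp [popc_zero]
  | succ m ih =>
    rw [popc_eq (a * 2 ^ (m + 1) + b), popc_eq b]
    have e : a * 2 ^ (m + 1) = 2 * (a * 2 ^ m) := by ring
    rw [show (a * 2 ^ (m + 1) + b) / 2 = a * 2 ^ m + b / 2 by omega, ih _ (by rw [pow_succ] at hb; omega)]
    omega

/-- The binary complement of `S` with respect to `m` digits. -/
theorem popc_compl (m S : ℕ) (hS : S < 2 ^ m) : popc (2 ^ m - 1 - S) + popc S = m := by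
  induction m generalizing S with
  | zero => obtain rfl : S = 0 := by simpa using hS
            simp [popc_zero]
  | succ m ih =>
    rw [pow_succ] at hS
    rw [popc_eq (2 ^ (m + 1) - 1 - S), popc_eq S]
    have := ih (S / 2) (by omega)
    rw [show (2 ^ (m + 1) - 1 - S) / 2 = 2 ^ m - 1 - S / 2 by rw [pow_succ]; omega]
    have : (2 ^ (m + 1) - 1 - S) % 2 + S % 2 = 1 := by rw [pow_succ]; omega
    omega

/-- Legendre's form of Kummer's theorem: the exponent of `2` in `C(2X, X)` is the number of ones of `X`. -/
theorem two_pow_dvd_centralBinom (e X : ℕ) : 2 ^ e ∣ (2 * X).choose X ↔ e ≤ popc X := by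
  have : Fact (Nat.Prime 2) := ⟨Nat.prime_two⟩
  rw [padicValNat_dvd_iff_le (Nat.choose_pos (by omega)).ne']
  have h := sub_one_mul_padicValNat_choose_eq_sub_sum_digits' (p := 2) (n := X) (k := X)
  rw [← two_mul] at h
  have h2 : popc (2 * X) = popc X := by rw [popc_eq]; simp
  unfold popc at *
  rw [h2] at h
  have : padicValNat 2 ((2 * X).choose X) = (Nat.digits 2 X).sum := by simpa using h
  rw [this]

/-- Kummer's theorem turns disjointness of binary supports into a divisibility. The number `X` is the
concatenation of `S + T` and the complements of `S` and `T`; it has at least `2 m` ones exactly when no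
carry occurs in `S + T`. -/
theorem mask_iff {m S T : ℕ} (hS : S < 2 ^ m) (hT : T < 2 ^ m) :
    (2 ^ m) ^ 2 ∣ (2 * ((S + T) * (2 ^ m) ^ 2 + (2 ^ m - 1 - S) * 2 ^ m + (2 ^ m - 1 - T))).choose
        ((S + T) * (2 ^ m) ^ 2 + (2 ^ m - 1 - S) * 2 ^ m + (2 ^ m - 1 - T)) ↔ S &&& T = 0 := by
  have e : (S + T) * (2 ^ m) ^ 2 + (2 ^ m - 1 - S) * 2 ^ m + (2 ^ m - 1 - T) =
    ((S + T) * 2 ^ m + (2 ^ m - 1 - S)) * 2 ^ m + (2 ^ m - 1 - T) := by ring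
  rw [e, ← pow_mul, two_pow_dvd_centralBinom, popc_shift _ _ _ (by omega), popc_shift _ _ _ (by omega),
    ← (popc_add S T).2]
  have := popc_compl m S hS
  have := popc_compl m T hT
  omega

theorem and_split {m S₁ S₂ T₁ T₂ : ℕ} (hS : S₁ < 2 ^ m) (hT : T₁ < 2 ^ m) :
    (S₁ + 2 ^ m * S₂) &&& (T₁ + 2 ^ m * T₂) = 0 ↔ S₁ &&& T₁ = 0 ∧ S₂ &&& T₂ = 0 := by
  have h1 := Nat.and_mod_two_pow (a := S₁ + 2 ^ m * S₂) (b := T₁ + 2 ^ m * T₂) (n := m)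
  have h2 := Nat.and_div_two_pow (a := S₁ + 2 ^ m * S₂) (b := T₁ + 2 ^ m * T₂) (n := m)
  have hp : 0 < 2 ^ m := by positivity
  rw [Nat.add_mul_mod_self_left, Nat.add_mul_mod_self_left, Nat.mod_eq_of_lt hS,
    Nat.mod_eq_of_lt hT] at h1
  rw [Nat.add_mul_div_left _ _ hp, Nat.add_mul_div_left _ _ hp, Nat.div_eq_of_lt hS,
    Nat.div_eq_of_lt hT, zero_add, zero_add] at h2
  rw [← h1, ← h2]
  constructor
  · intro h; simp [h]
  · rintro ⟨h3, h4⟩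
    rw [← Nat.div_add_mod ((S₁ + 2 ^ m * S₂) &&& (T₁ + 2 ^ m * T₂)) (2 ^ m), h3, h4]; simp

/-- The mask `2 ^ e - 2 ^ s` has its ones at the positions `s, …, e - 1`. -/
theorem and_sub_iff {e s d : ℕ} (hs : s ≤ e) (hd : d < 2 ^ e) :
    d &&& (2 ^ e - 2 ^ s) = 0 ↔ d < 2 ^ s := by
  have h1 : d = d % 2 ^ s + 2 ^ s * (d / 2 ^ s) := (Nat.mod_add_div _ _).symm
  have h2 : 2 ^ e - 2 ^ s = 0 + 2 ^ s * (2 ^ (e - s) - 1) := by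
    rw [Nat.mul_sub, ← pow_add, Nat.add_sub_cancel' hs]; omega
  have hp : 0 < 2 ^ s := by positivity
  conv_lhs => rw [h1, h2]
  rw [and_split (Nat.mod_lt _ hp) hp, Nat.and_zero, Nat.and_two_pow_sub_one_eq_mod]
  have h3 : d / 2 ^ s < 2 ^ (e - s) := by
    rw [Nat.div_lt_iff_lt_mul hp, ← pow_add, Nat.sub_add_cancel hs]; exact hd
  rw [Nat.mod_eq_of_lt h3, Nat.div_eq_zero_iff]
  simp

theorem digits_lt {B : ℕ} (L : ℕ) (d : ℕ → ℕ) (hd : ∀ i < L, d i < B) :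
    ∑ i ∈ Finset.range L, d i * B ^ i < B ^ L := by
  induction L with
  | zero => simp
  | succ L ih =>
    rw [Finset.sum_range_succ, pow_succ]
    have h1 := ih fun i hi => hd i (by omega)
    have h2 := hd L (by omega)
    nlinarith [Nat.mul_le_mul_left (B ^ L) h2]

/-- Disjointness of binary supports is tested digit by digit in a base which is a power of two. -/
theorem digits_and {e : ℕ} (L : ℕ) (c d : ℕ → ℕ) (hc : ∀ i < L, c i < 2 ^ e)
    (hd : ∀ i < L, d i < 2 ^ e) :
    (∑ i ∈ Finset.range L, c i * (2 ^ e) ^ i) &&& (∑ i ∈ Finset.range L, d i * (2 ^ e) ^ i) = 0 ↔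
      ∀ i < L, c i &&& d i = 0 := by
  induction L with
  | zero => simp
  | succ L ih =>
    have h1 := digits_lt L c fun i hi => hc i (by omega)
    have h2 := digits_lt L d fun i hi => hd i (by omega)
    rw [Finset.sum_range_succ, Finset.sum_range_succ, mul_comm (c L), mul_comm (d L)]
    rw [← pow_mul] at h1 h2 ⊢
    rw [and_split h1 h2, ih (fun i hi => hc i (by omega)) (fun i hi => hd i (by omega))]
    constructor
    · rintro ⟨h3, h4⟩ i hi
      rcases Nat.lt_succ_iff_lt_or_eq.mp hi with h | rfl
      exacts [h3 i h, h4]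
    · exact fun h => ⟨fun i hi => h i (by omega), h L (by omega)⟩

theorem exists_digits {B : ℕ} (hB : 0 < B) (L g : ℕ) (hg : g < B ^ L) :
    ∃ d : ℕ → ℕ, (∀ i, d i < B) ∧ g = ∑ i ∈ Finset.range L, d i * B ^ i := by
  refine ⟨fun i => g / B ^ i % B, fun i => Nat.mod_lt _ hB, ?_⟩
  have h : ∀ L, ∑ i ∈ Finset.range L, g / B ^ i % B * B ^ i = g % B ^ L := by
    intro L
    induction L with
    | zero => simp [Nat.mod_one]
    | succ L ih => rw [Finset.sum_range_succ, ih, Nat.mod_pow_succ, mul_comm (B ^ L)]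
  rw [h, Nat.mod_eq_of_lt hg]

/-- The numbers `g` disjoint from the mask are the codes `∑ z_j B ^ p_j` with `z_j < 2 ^ s`, for
`B = 2 ^ e`: at the positions `p_j` the mask leaves the lowest `s` bits free, elsewhere none. -/
theorem digits_mask {e s : ℕ} (hs : s ≤ e) (L : ℕ) (I : Finset ℕ) {ν : ℕ} (p : Fin ν → ℕ)
    (hp : Function.Injective p) (hI : I = Finset.univ.image p) (hL : ∀ j, p j < L) {g : ℕ}
    (hg : g < (2 ^ e) ^ L) :
    g &&& (∑ i ∈ Finset.range L, (2 ^ e - if i ∈ I then 2 ^ s else 1) * (2 ^ e) ^ i) = 0 ↔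
      ∃ z : Fin ν → ℕ, (∀ j, z j < 2 ^ s) ∧ g = ∑ j, z j * (2 ^ e) ^ p j := by
  have hse : 2 ^ s ≤ 2 ^ e := Nat.pow_le_pow_right (by norm_num) hs
  have hpos : 0 < 2 ^ s := by positivity
  have hmask : ∀ i < L, (2 ^ e - if i ∈ I then 2 ^ s else 1) < 2 ^ e := by
    intro i _; split_ifs <;> omega
  have hdig : ∀ i d, d < 2 ^ e →
      (d &&& (2 ^ e - if i ∈ I then 2 ^ s else 1) = 0 ↔ d < if i ∈ I then 2 ^ s else 1) := by
    intro i d hd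
    split_ifs
    · exact and_sub_iff hs hd
    · simpa using and_sub_iff (s := 0) (Nat.zero_le e) hd
  have hsum : ∀ d : ℕ → ℕ, (∀ i < L, i ∉ I → d i = 0) →
      ∑ i ∈ Finset.range L, d i * (2 ^ e) ^ i = ∑ j, d (p j) * (2 ^ e) ^ p j := by
    intro d hd
    rw [← Finset.sum_image (f := fun i => d i * (2 ^ e) ^ i) (g := p) (s := Finset.univ)
      (fun a _ b _ h => hp h), ← hI]
    symm
    apply Finset.sum_subset
    · intro i hi
      rw [hI] at hi
      obtain ⟨j, -, rfl⟩ := Finset.mem_image.mp hi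
      exact Finset.mem_range.mpr (hL j)
    · intro i hi hiI
      rw [hd i (Finset.mem_range.mp hi) hiI, zero_mul]
  constructor
  · intro h
    obtain ⟨d, hd, rfl⟩ := exists_digits (by positivity) L g hg
    rw [digits_and L _ _ (fun i _ => hd i) hmask] at h
    have h' : ∀ i < L, d i < if i ∈ I then 2 ^ s else 1 := fun i hi => (hdig i _ (hd i)).mp (h i hi)
    refine ⟨fun j => d (p j), fun j => ?_, hsum d fun i hi hiI => ?_⟩
    · have := h' (p j) (hL j)
      rwa [if_pos (by rw [hI]; exact Finset.mem_image_of_mem _ (Finset.mem_univ j))] at this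
    · have := h' i hi
      rw [if_neg hiI] at this
      omega
  · rintro ⟨z, hz, rfl⟩
    obtain ⟨d, hd⟩ : ∃ d : ℕ → ℕ, d = fun i => if h : ∃ j, p j = i then z h.choose else 0 := ⟨_, rfl⟩
    have hdp : ∀ j, d (p j) = z j := by
      intro j
      have h : ∃ j', p j' = p j := ⟨j, rfl⟩
      rw [hd]; simp only [dif_pos h]
      rw [hp h.choose_spec]
    have hd0 : ∀ i, i ∉ I → d i = 0 := by
      intro i hi
      rw [hd]
      apply dif_neg
      rintro ⟨j, rfl⟩
      exact hi (by rw [hI]; exact Finset.mem_image_of_mem _ (Finset.mem_univ j))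
    have hlt : ∀ i, d i < if i ∈ I then 2 ^ s else 1 := by
      intro i
      split_ifs with hi
      · rw [hI] at hi
        obtain ⟨j, -, rfl⟩ := Finset.mem_image.mp hi
        rw [hdp]; exact hz j
      · rw [hd0 i hi]; norm_num
    have hle : ∀ i, d i < 2 ^ e := by
      intro i; have := hlt i; split_ifs at this <;> omega
    have hgd : ∑ j, z j * (2 ^ e) ^ p j = ∑ i ∈ Finset.range L, d i * (2 ^ e) ^ i := by
      rw [hsum d fun i _ h => hd0 i h]; simp only [hdp]
    rw [hgd, digits_and L _ _ (fun i _ => hle i) hmask]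
    exact fun i _ => (hdig i _ (hle i)).mpr (hlt i)

/-- The mask with the ones of `Bh - 1` at the digit of index `M` tests whether that digit is divisible
by `Bh`. -/
theorem middle_mask {b M S : ℕ} (Bh : ℕ) (hB : Bh = 2 ^ b) :
    S &&& ((Bh - 1) * (2 * Bh) ^ M) = 0 ↔ Bh ∣ S / (2 * Bh) ^ M := by
  subst hB
  have e : (2 * 2 ^ b) ^ M = 2 ^ ((b + 1) * M) := by rw [pow_mul, pow_succ, mul_comm]
  rw [e]
  have hp : 0 < 2 ^ ((b + 1) * M) := by positivity
  have h1 : (2 ^ b - 1) * 2 ^ ((b + 1) * M) = 0 + 2 ^ ((b + 1) * M) * (2 ^ b - 1) := by ring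
  conv_lhs => rw [h1, (Nat.mod_add_div S (2 ^ ((b + 1) * M))).symm]
  rw [and_split (Nat.mod_lt _ hp) hp, Nat.and_zero, Nat.and_two_pow_sub_one_eq_mod, Nat.dvd_iff_mod_eq_zero]
  simp

end NineUnknowns

/-! ### Coding the values of a polynomial -/

namespace NineUnknowns
open Polynomial

/-- Digits at most `δ` are determined by the number they represent in base `δ + 1`. -/
theorem base_unique {δ m : ℕ} (c d : Fin m → ℕ) (hc : ∀ j, c j ≤ δ) (hd : ∀ j, d j ≤ δ)
    (h : ∑ j, c j * (δ + 1) ^ (j : ℕ) = ∑ j, d j * (δ + 1) ^ (j : ℕ)) : c = d := by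
  induction m with
  | zero => exact Subsingleton.elim _ _
  | succ m ih =>
    have e : ∀ c : Fin (m + 1) → ℕ, ∑ j, c j * (δ + 1) ^ (j : ℕ) =
        c 0 + (δ + 1) * ∑ j : Fin m, c j.succ * (δ + 1) ^ (j : ℕ) := by
      intro c
      rw [Fin.sum_univ_succ, Finset.mul_sum]
      simp only [Fin.val_zero, pow_zero, mul_one, Fin.val_succ]
      congr 1
      exact Finset.sum_congr rfl fun j _ => by ring
    rw [e, e] at h
    have h0 : c 0 = d 0 := by
      have := congrArg (· % (δ + 1)) h
      simp only [Nat.add_mul_mod_self_left] at this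
      rwa [Nat.mod_eq_of_lt (Nat.lt_succ_of_le (hc 0)),
        Nat.mod_eq_of_lt (Nat.lt_succ_of_le (hd 0))] at this
    rw [h0] at h
    have h1 := Nat.eq_of_mul_eq_mul_left (Nat.succ_pos δ) (Nat.add_left_cancel h)
    have h2 := ih (fun j => c j.succ) (fun j => d j.succ) (fun j => hc _) (fun j => hd _) h1
    funext j
    refine Fin.cases h0 (fun j => congrFun h2 j) j

/-- The polynomial `1 + ∑ u_j X ^ ((δ + 1) ^ j)`. In its `δ`-th power the monomials of degree at most
`δ` in the `u_j` are coefficients of distinct powers of `X`. -/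
noncomputable def codeC {m : ℕ} (δ : ℕ) (u : Fin m → ℤ) : ℤ[X] :=
  1 + ∑ j, C (u j) * X ^ ((δ + 1) ^ (j : ℕ))

/-- The multinomial theorem: the coefficient is the monomial `∏ u_j ^ d_j` times a multinomial
coefficient. The factorials are moved to the other side to avoid division. -/
theorem coeff_code_pow {m : ℕ} (δ : ℕ) (u : Fin m → ℤ) (d : Fin m → ℕ) (hd : ∑ j, d j ≤ δ) :
    (((δ - ∑ j, d j).factorial * ∏ j, (d j).factorial : ℕ) : ℤ) *
      (codeC δ u ^ δ).coeff (∑ j, d j * (δ + 1) ^ (j : ℕ)) = δ.factorial * ∏ j, u j ^ d j := by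
  obtain ⟨v, hv⟩ : ∃ v : Option (Fin m) → ℤ, v = fun o => o.elim 1 u := ⟨_, rfl⟩
  obtain ⟨p, hp⟩ : ∃ p : Option (Fin m) → ℕ, p = fun o => o.elim 0 fun j => (δ + 1) ^ (j : ℕ) :=
    ⟨_, rfl⟩
  have hcode : codeC δ u = ∑ o, C (v o) * X ^ p o := by
    rw [Fintype.sum_option, hv, hp]; simp [codeC]
  obtain ⟨k₀, hk₀⟩ : ∃ k : Option (Fin m) → ℕ, k = fun o => o.elim (δ - ∑ j, d j) d := ⟨_, rfl⟩
  have hk₀s : ∑ o, k₀ o = δ := by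
    rw [Fintype.sum_option, hk₀]; simp only [Option.elim]; omega
  have hterm : ∀ k : Option (Fin m) → ℕ, ((Nat.multinomial Finset.univ k : ℤ[X]) *
      ∏ o, (C (v o) * X ^ p o) ^ k o).coeff (∑ j, d j * (δ + 1) ^ (j : ℕ)) =
      if ∑ j, d j * (δ + 1) ^ (j : ℕ) = ∑ o, k o * p o then
        (Nat.multinomial Finset.univ k : ℤ) * ∏ o, v o ^ k o else 0 := by
    intro k
    have e1 : ∏ o, (C (v o) * X ^ p o) ^ k o = C (∏ o, v o ^ k o) * X ^ (∑ o, k o * p o) := by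
      simp only [mul_pow, Finset.prod_mul_distrib, ← pow_mul, Finset.prod_pow_eq_pow_sum, map_prod,
        map_pow, mul_comm (k _)]
    have e2 : (Nat.multinomial Finset.univ k : ℤ[X]) = C ((Nat.multinomial Finset.univ k : ℕ) : ℤ) := by
      simp
    rw [e1, e2, ← mul_assoc, ← C_mul, coeff_C_mul_X_pow]
  rw [hcode, Finset.sum_pow_eq_sum_piAntidiag, finsetSum_coeff]
  simp only [hterm]
  rw [Finset.sum_eq_single k₀]
  · have e3 : ∑ o, k₀ o * p o = ∑ j, d j * (δ + 1) ^ (j : ℕ) := by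
      rw [Fintype.sum_option, hk₀, hp]; simp
    rw [if_pos e3.symm]
    have e4 := Nat.multinomial_spec Finset.univ k₀
    rw [hk₀s, Fintype.prod_option] at e4
    have e5 : ∏ o, v o ^ k₀ o = ∏ j, u j ^ d j := by
      rw [Fintype.prod_option, hk₀, hv]; simp
    rw [e5, ← mul_assoc, ← e4]
    rw [hk₀]; push_cast; simp
  · intro k hk hne
    rw [if_neg]
    intro h
    apply hne
    rw [Finset.mem_piAntidiag] at hk
    have hks := hk.1
    rw [Fintype.sum_option] at hks
    have e6 : ∑ o, k o * p o = ∑ j, k (some j) * (δ + 1) ^ (j : ℕ) := by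
      rw [Fintype.sum_option, hp]; simp
    rw [e6] at h
    have h7 : d = fun j => k (some j) := by
      apply base_unique d _ (fun j => ?_) (fun j => ?_) h
      · exact (Finset.single_le_sum (fun _ _ => Nat.zero_le _) (Finset.mem_univ j)).trans hd
      · have : k (some j) ≤ ∑ j, k (some j) :=
          Finset.single_le_sum (f := fun j => k (some j)) (fun _ _ => Nat.zero_le _)
            (Finset.mem_univ j)
        omega
    funext o
    rw [hk₀]
    rcases o with _ | j
    · simp only [Option.elim, h7]; omega
    · simp only [Option.elim, h7]
  · intro h
    exact absurd (Finset.mem_piAntidiag.mpr ⟨hk₀s, fun _ _ => Finset.mem_univ _⟩) h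

/-- Multiplying the `δ`-th power of the code by a fixed polynomial `K` collects all monomials of `P` in
one coefficient. -/
theorem exists_extractor {ν : ℕ} (P : MvPolynomial (Fin (ν + 1)) ℤ) {δ : ℕ}
    (hδ : P.totalDegree ≤ δ) :
    ∃ K : ℤ[X], ∀ u : Fin (ν + 1) → ℤ,
      (K * codeC δ u ^ δ).coeff ((δ + 1) ^ (ν + 1)) = δ.factorial * MvPolynomial.eval u P := by
  refine ⟨∑ d ∈ P.support, C (P.coeff d *
    (((δ - ∑ j, d j).factorial * ∏ j, (d j).factorial : ℕ) : ℤ)) *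
      X ^ ((δ + 1) ^ (ν + 1) - ∑ j, d j * (δ + 1) ^ (j : ℕ)), fun u => ?_⟩
  rw [MvPolynomial.eval_eq', Finset.sum_mul, finsetSum_coeff, Finset.mul_sum]
  refine Finset.sum_congr rfl fun d hd => ?_
  have h1 : ∑ j, d j ≤ δ := by
    refine le_trans ?_ ((MvPolynomial.le_totalDegree hd).trans hδ)
    rw [Finsupp.sum_fintype _ _ (fun _ => rfl)]
  have h2 : ∑ j, d j * (δ + 1) ^ (j : ℕ) ≤ (δ + 1) ^ (ν + 1) := by
    calc ∑ j, d j * (δ + 1) ^ (j : ℕ) ≤ ∑ j, d j * (δ + 1) ^ ν := by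
          gcongr with j
          · omega
          · omega
      _ = (∑ j, d j) * (δ + 1) ^ ν := by rw [Finset.sum_mul]
      _ ≤ (δ + 1) * (δ + 1) ^ ν := by gcongr; omega
      _ = _ := by ring
  have h3 := coeff_code_pow δ u d h1
  rw [mul_assoc, coeff_C_mul, coeff_X_pow_mul', if_pos (Nat.sub_le _ _), Nat.sub_sub_self h2,
    mul_assoc, h3]
  ring

/-- The coefficients of `p` are dominated by those of a polynomial with coefficient sum `r`. -/
def CoeffBound (p : ℤ[X]) (r : ℤ) : Prop :=
  ∃ q : ℤ[X], (∀ i, |p.coeff i| ≤ q.coeff i) ∧ q.eval 1 = r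

theorem CoeffBound.add {p p' : ℤ[X]} {r r' : ℤ} (h : CoeffBound p r) (h' : CoeffBound p' r') :
    CoeffBound (p + p') (r + r') := by
  obtain ⟨q, hq, rfl⟩ := h
  obtain ⟨q', hq', rfl⟩ := h'
  refine ⟨q + q', fun i => ?_, by simp⟩
  rw [coeff_add, coeff_add]
  exact (abs_add_le _ _).trans (add_le_add (hq i) (hq' i))

theorem CoeffBound.mul {p p' : ℤ[X]} {r r' : ℤ} (h : CoeffBound p r) (h' : CoeffBound p' r') :
    CoeffBound (p * p') (r * r') := by
  obtain ⟨q, hq, rfl⟩ := h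
  obtain ⟨q', hq', rfl⟩ := h'
  refine ⟨q * q', fun i => ?_, by simp⟩
  rw [coeff_mul, coeff_mul]
  refine (Finset.abs_sum_le_sum_abs _ _).trans (Finset.sum_le_sum fun x _ => ?_)
  rw [abs_mul]
  exact mul_le_mul (hq _) (hq' _) (abs_nonneg _) ((abs_nonneg _).trans (hq _))

theorem CoeffBound.monomial (c : ℤ) (k : ℕ) : CoeffBound (C c * X ^ k) |c| := by
  refine ⟨C |c| * X ^ k, fun i => ?_, by simp⟩
  rw [coeff_C_mul_X_pow, coeff_C_mul_X_pow]
  split_ifs <;> simp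

theorem CoeffBound.one : CoeffBound 1 1 := by simpa using CoeffBound.monomial 1 0

theorem CoeffBound.pow {p : ℤ[X]} {r : ℤ} (h : CoeffBound p r) (k : ℕ) :
    CoeffBound (p ^ k) (r ^ k) := by
  induction k with
  | zero => simpa using CoeffBound.one
  | succ k ih => rw [pow_succ, pow_succ]; exact ih.mul h

theorem CoeffBound.sum {ι : Type*} (s : Finset ι) (p : ι → ℤ[X]) (r : ι → ℤ)
    (h : ∀ i, CoeffBound (p i) (r i)) : CoeffBound (∑ i ∈ s, p i) (∑ i ∈ s, r i) := by
  classical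
  induction s using Finset.induction_on with
  | empty => simpa using CoeffBound.monomial 0 0
  | insert a s ha ih => rw [Finset.sum_insert ha, Finset.sum_insert ha]; exact (h a).add ih

theorem CoeffBound.le {p : ℤ[X]} {r : ℤ} (h : CoeffBound p r) (i : ℕ) : |p.coeff i| ≤ r := by
  obtain ⟨q, hq, rfl⟩ := h
  have h0 : ∀ i, 0 ≤ q.coeff i := fun i => (abs_nonneg _).trans (hq i)
  refine (hq i).trans ?_
  rw [eval_eq_sum_range]
  simp only [one_pow, mul_one]
  by_cases hi : i ∈ Finset.range (q.natDegree + 1)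
  · exact Finset.single_le_sum (fun i _ => h0 i) hi
  · rw [coeff_eq_zero_of_natDegree_lt (by simpa using hi)]
    exact Finset.sum_nonneg fun i _ => h0 i

/-- The sum of the absolute values of the coefficients. -/
def coeffSum (K : ℤ[X]) : ℤ := ∑ i ∈ Finset.range (K.natDegree + 1), |K.coeff i|

theorem coeffSum_nonneg (K : ℤ[X]) : 0 ≤ coeffSum K := Finset.sum_nonneg fun _ _ => abs_nonneg _

theorem CoeffBound.self (K : ℤ[X]) : CoeffBound K (coeffSum K) := by
  have := CoeffBound.sum (Finset.range (K.natDegree + 1)) (fun i => C (K.coeff i) * X ^ i) _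
    fun i => CoeffBound.monomial (K.coeff i) i
  rwa [← K.as_sum_range_C_mul_X_pow] at this

theorem abs_eval_le (K : ℤ[X]) {b : ℤ} (hb : 1 ≤ b) :
    |K.eval b| ≤ coeffSum K * b ^ K.natDegree := by
  rw [eval_eq_sum_range, coeffSum, Finset.sum_mul]
  refine (Finset.abs_sum_le_sum_abs _ _).trans (Finset.sum_le_sum fun i hi => ?_)
  rw [abs_mul, abs_of_nonneg (by positivity : 0 ≤ b ^ i)]
  gcongr
  simpa [Nat.lt_succ_iff] using hi

theorem coeff_code_bound {m : ℕ} {δ : ℕ} (K : ℤ[X]) {u : Fin m → ℤ} {t : ℤ} (ht : 1 ≤ t)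
    (hu : ∀ j, 0 ≤ u j ∧ u j ≤ t) (i : ℕ) :
    |(K * codeC δ u ^ δ).coeff i| ≤ coeffSum K * (m + 1) ^ δ * t ^ δ := by
  have h1 : CoeffBound (codeC δ u) (1 + ∑ j, |u j|) :=
    CoeffBound.one.add (CoeffBound.sum _ _ _ fun j => CoeffBound.monomial _ _)
  refine ((CoeffBound.self K).mul (h1.pow δ)).le i |>.trans ?_
  have h2 : 1 + ∑ j, |u j| ≤ (m + 1) * t := by
    have : ∑ j, |u j| ≤ ∑ _j : Fin m, t :=
      Finset.sum_le_sum fun j _ => by rw [abs_of_nonneg (hu j).1]; exact (hu j).2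
    simp at this
    linarith
  have h3 : 0 ≤ ∑ j, |u j| := Finset.sum_nonneg fun _ _ => abs_nonneg _
  rw [mul_assoc, ← mul_pow]
  gcongr
  exact coeffSum_nonneg K

end NineUnknowns

/-! ### The numbers attached to a coded polynomial -/

namespace NineUnknowns
open Polynomial

/-- A polynomial `P` with the data of its coding: an exponent `δ`, the polynomial `K` extracting the
value of `P` from the `δ`-th power of the code, and an exponent `c` such that `2 ^ c t ^ δ` bounds the
coefficients of the extracting product when the arguments of `P` are below `t`. -/
structure Coding (ν : ℕ) where
  P : MvPolynomial (Fin (ν + 1)) ℤ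
  δ : ℕ
  one_le_δ : 1 ≤ δ
  K : ℤ[X]
  coeff_K : ∀ u : Fin (ν + 1) → ℤ,
    (K * codeC δ u ^ δ).coeff ((δ + 1) ^ (ν + 1)) = δ.factorial * MvPolynomial.eval u P
  c : ℕ
  lt_c : coeffSum K * (ν + 2) ^ δ < 2 ^ c

theorem exists_coding {ν : ℕ} (P : MvPolynomial (Fin (ν + 1)) ℤ) : ∃ c : Coding ν, c.P = P := by
  obtain ⟨K, hK⟩ := exists_extractor P (Nat.le_succ P.totalDegree)
  refine ⟨⟨P, P.totalDegree + 1, by omega, K, hK,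
    (coeffSum K * (ν + 2) ^ (P.totalDegree + 1)).toNat, ?_⟩, rfl⟩
  have h := Nat.lt_two_pow_self (n := (coeffSum K * (ν + 2) ^ (P.totalDegree + 1)).toNat)
  have h2 := Int.self_le_toNat (coeffSum K * (ν + 2) ^ (P.totalDegree + 1))
  calc _ ≤ _ := h2
    _ < _ := by exact_mod_cast h

namespace Coding
variable {ν : ℕ} (c : Coding ν)

/-- The number of digits of the code of the unknowns. -/
def L : ℕ := (c.δ + 1) ^ ν + 1

/-- The index of the digit carrying the value of `P`. -/
def M : ℕ := (c.δ + 1) ^ (ν + 1)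

/-- An exponent such that `B ^ D` bounds the absolute values of the other two summands of `S₂`. -/
def D : ℕ := c.M + 2 + c.K.natDegree + (c.L + 2) * c.δ

/-- Half the base; a strict bound for the coefficients of the extracting product. -/
def hB (t : ℤ) : ℤ := 2 ^ c.c * t ^ c.δ

/-- The base `B` of the digits, a power of two whenever `t` is. -/
def B (t : ℤ) : ℤ := 2 * c.hB t

/-- The indices of the digits of `g` which carry the unknowns. -/
def pos : Finset ℕ := Finset.univ.image fun j : Fin ν => (c.δ + 1) ^ ((j : ℕ) + 1)

/-- The mask for `g`: the digits at the positions `pos` are restricted to be less than `t`, and all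
others to be `0`. -/
def T₁ (t : ℤ) : ℤ := ∑ i ∈ Finset.range c.L, (c.B t - if i ∈ c.pos then t else 1) * c.B t ^ i

/-- A strict upper bound for `g` and `T₁`. -/
def N₁ (t : ℤ) : ℤ := c.B t ^ c.L

/-- The number whose digit of index `M` is `hB + δ! P(a, z)`. Adding `hB` to the coefficients makes them
digits; the summand `B ^ D` makes the number nonnegative. -/
noncomputable def S₂ (t a g : ℤ) : ℤ := c.K.eval (c.B t) * (1 + a * c.B t + g) ^ c.δ +
  c.hB t * ∑ i ∈ Finset.range (c.M + 1), c.B t ^ i + c.B t ^ c.D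

/-- The mask testing whether `hB` divides the digit of index `M`. -/
def T₂ (t : ℤ) : ℤ := (c.hB t - 1) * c.B t ^ c.M

/-- A strict upper bound for `S₂` and `T₂`. -/
def N₂ (t : ℤ) : ℤ := c.B t ^ (c.D + 2)

/-- The two masked numbers `g` and `S₂` written one after the other. -/
noncomputable def S (t a g : ℤ) : ℤ := g + c.N₁ t * c.S₂ t a g

/-- The two masks written one after the other. -/
def T (t : ℤ) : ℤ := c.T₁ t + c.N₁ t * c.T₂ t

/-- A strict upper bound for `S` and `T`, a power of two whenever `t` is. -/
def N (t : ℤ) : ℤ := c.N₁ t * c.N₂ t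

/-- The number `X` of `mask_iff`. -/
noncomputable def XX (t a g : ℤ) : ℤ := (c.S t a g + c.T t) * c.N t ^ 2 +
  (c.N t - 1 - c.S t a g) * c.N t + (c.N t - 1 - c.T t)

/-- The number dividing `C(2X, X)` exactly when `S` and `T` have disjoint binary supports. -/
def YY (t : ℤ) : ℤ := c.N t ^ 2

theorem coeffSum_le : coeffSum c.K ≤ 2 ^ c.c := by
  have h1 := c.lt_c
  have h2 : (1 : ℤ) ≤ (ν + 2) ^ c.δ := one_le_pow₀ (by omega)
  nlinarith [coeffSum_nonneg c.K]

theorem hB_ge {t : ℤ} (ht : 1 ≤ t) : t ≤ c.hB t := by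
  unfold hB
  have h1 : (1 : ℤ) ≤ 2 ^ c.c := one_le_pow₀ (by norm_num)
  have h2 : t ≤ t ^ c.δ := le_self_pow₀ ht (by have := c.one_le_δ; omega)
  nlinarith

theorem coeffSum_le_hB {t : ℤ} (ht : 1 ≤ t) : coeffSum c.K ≤ c.hB t := by
  have h2 : 1 ≤ t ^ c.δ := one_le_pow₀ ht
  have := c.coeffSum_le
  unfold hB
  have h1 : (1 : ℤ) ≤ 2 ^ c.c := one_le_pow₀ (by norm_num)
  nlinarith

theorem B_ge {t : ℤ} (ht : 1 ≤ t) : 2 ≤ c.B t := by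
  have := c.hB_ge ht; unfold B; omega

theorem geom_lt {b : ℤ} (hb : 2 ≤ b) (n : ℕ) : ∑ i ∈ Finset.range n, b ^ i < b ^ n := by
  induction n with
  | zero => simp
  | succ n ih => rw [Finset.sum_range_succ, pow_succ]; nlinarith [pow_pos (by omega : 0 < b) n]

theorem digits_bounds {b : ℤ} (hb : 2 ≤ b) (L : ℕ) (d : ℕ → ℤ) (hd : ∀ i, 0 ≤ d i ∧ d i < b) :
    0 ≤ ∑ i ∈ Finset.range L, d i * b ^ i ∧ ∑ i ∈ Finset.range L, d i * b ^ i < b ^ L := by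
  induction L with
  | zero => simp
  | succ L ih =>
    rw [Finset.sum_range_succ, pow_succ]
    have hp : 0 < b ^ L := by positivity
    constructor
    · have := mul_nonneg (hd L).1 hp.le; linarith [ih.1]
    · nlinarith [(hd L).2, ih.2]

theorem T₁_bounds {t : ℤ} (ht : 1 ≤ t) : 0 ≤ c.T₁ t ∧ c.T₁ t < c.N₁ t := by
  refine digits_bounds (c.B_ge ht) _ (fun i => c.B t - if i ∈ c.pos then t else 1) fun i => ?_
  have := c.hB_ge ht
  unfold B
  split_ifs <;> constructor <;> omega

theorem T₂_bounds {t : ℤ} (ht : 1 ≤ t) : 0 ≤ c.T₂ t ∧ c.T₂ t < c.N₂ t := by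
  have h1 := c.hB_ge ht
  have h2 := c.B_ge ht
  unfold T₂ N₂
  constructor
  · apply mul_nonneg <;> [omega; positivity]
  · calc (c.hB t - 1) * c.B t ^ c.M < c.B t * c.B t ^ c.M := by
          apply mul_lt_mul_of_pos_right _ (by positivity)
          unfold B; omega
      _ = c.B t ^ (c.M + 1) := by ring
      _ ≤ _ := pow_le_pow_right₀ (by omega) (by unfold D; omega)

theorem S₂_bounds {t a g : ℤ} (ha : 0 ≤ a) (hat : a < t) (hg : 0 ≤ g) (hgN : g < c.N₁ t) :
    0 ≤ c.S₂ t a g ∧ c.S₂ t a g < c.N₂ t := by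
  have ht : 1 ≤ t := by omega
  have h1 := c.hB_ge ht
  have hc := c.coeffSum_le_hB ht
  have hb := c.B_ge ht
  have hbB : c.B t = 2 * c.hB t := rfl
  have h3 : 1 + a * c.B t + g ≤ c.B t ^ (c.L + 2) := by
    have e1 : 1 + a * c.B t ≤ c.B t ^ (c.L + 1) := by
      calc 1 + a * c.B t ≤ c.B t ^ 2 := by nlinarith
        _ ≤ c.B t ^ (c.L + 1) := by exact pow_le_pow_right₀ (by omega) (by unfold L; omega)
    have e2 : g ≤ c.B t ^ (c.L + 1) := by
      refine hgN.le.trans ?_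
      unfold N₁; gcongr <;> omega
    rw [pow_succ]; nlinarith
  have h4 : 0 ≤ 1 + a * c.B t + g := by
    have : 0 ≤ a * c.B t := mul_nonneg ha (by omega)
    omega
  have h5 : |c.K.eval (c.B t) * (1 + a * c.B t + g) ^ c.δ| ≤ c.B t ^ c.D := by
    rw [abs_mul, abs_of_nonneg (pow_nonneg h4 _)]
    calc _ ≤ (coeffSum c.K * c.B t ^ c.K.natDegree) * (c.B t ^ (c.L + 2)) ^ c.δ := by
          have h6 := abs_eval_le c.K (b := c.B t) (by omega)
          have h7 := (abs_nonneg _).trans h6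
          gcongr
      _ ≤ (c.B t ^ 1 * c.B t ^ c.K.natDegree) * (c.B t ^ (c.L + 2)) ^ c.δ := by
          have : coeffSum c.K ≤ c.B t ^ 1 := by rw [pow_one]; omega
          gcongr
      _ = c.B t ^ (1 + c.K.natDegree + (c.L + 2) * c.δ) := by rw [pow_add _ (1 + _), pow_add _ 1, pow_mul]
      _ ≤ _ := by exact pow_le_pow_right₀ (by omega) (by unfold D; omega)
  have h6 : c.hB t * ∑ i ∈ Finset.range (c.M + 1), c.B t ^ i ≤ c.B t ^ c.D := by
    calc _ ≤ c.B t * c.B t ^ (c.M + 1) := by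
          refine mul_le_mul (by omega) (geom_lt hb _).le ?_ (by omega)
          exact Finset.sum_nonneg fun i _ => by positivity
      _ = c.B t ^ (c.M + 2) := by ring
      _ ≤ _ := by exact pow_le_pow_right₀ (by omega) (by unfold D; omega)
  have h7 : 0 ≤ c.hB t * ∑ i ∈ Finset.range (c.M + 1), c.B t ^ i :=
    mul_nonneg (by omega) (Finset.sum_nonneg fun i _ => by positivity)
  have h8 : 0 < c.B t ^ c.D := by positivity
  have h9 : 4 * c.B t ^ c.D ≤ c.N₂ t := by
    unfold N₂; rw [pow_add, mul_comm]; gcongr; nlinarith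
  have h10 := abs_le.mp h5
  unfold S₂
  constructor <;> linarith [h10.1, h10.2]

theorem combine_lt {s n s' n' : ℤ} (h0 : 0 ≤ s) (h1 : s < n) (h2 : 0 ≤ s') (h3 : s' < n') :
    0 ≤ s + n * s' ∧ s + n * s' < n * n' := by
  constructor
  · have : 0 ≤ n * s' := mul_nonneg (by omega) h2
    omega
  · nlinarith [mul_le_mul_of_nonneg_left (show s' + 1 ≤ n' by omega) (show 0 ≤ n by omega)]

theorem XX_YY {t a g : ℤ} (ha : 0 ≤ a) (hat : a < t) (hg : 0 ≤ g) (hgN : g < c.N₁ t) :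
    c.N₁ t ≤ c.XX t a g ∧ 1 ≤ c.YY t ∧ c.N₁ t + 1 ≤ 4 * c.YY t := by
  have ht : 1 ≤ t := by omega
  have h1 := c.S₂_bounds ha hat hg hgN
  have h2 := c.T₁_bounds ht
  have h3 := c.T₂_bounds ht
  have hS := combine_lt hg hgN h1.1 h1.2
  have hT := combine_lt h2.1 h2.2 h3.1 h3.2
  have hN : c.N₁ t ≤ c.N t := by unfold N; nlinarith
  have hN1 : c.N₁ t * 2 ≤ c.N t := by
    unfold N
    gcongr
    · omega
    · unfold N₂
      have hb := c.B_ge ht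
      calc 2 ≤ c.B t ^ 1 := by rw [pow_one]; exact hb
        _ ≤ _ := by gcongr <;> omega
  change 0 ≤ c.S t a g ∧ c.S t a g < c.N t at hS
  change 0 ≤ c.T t ∧ c.T t < c.N t at hT
  refine ⟨?_, ?_, ?_⟩
  · unfold XX
    by_cases h : c.S t a g = 0
    · rw [h]
      have : 0 ≤ c.T t * c.N t ^ 2 := mul_nonneg hT.1 (by positivity)
      nlinarith
    · have : 1 ≤ c.S t a g := by omega
      have h4 : 1 * c.N t ^ 2 ≤ (c.S t a g + c.T t) * c.N t ^ 2 := by gcongr; omega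
      have h5 : 0 ≤ (c.N t - 1 - c.S t a g) * c.N t := mul_nonneg (by omega) (by omega)
      nlinarith
  · unfold YY; nlinarith
  · unfold YY; nlinarith

end Coding

end NineUnknowns

/-! ### The coded equation as a divisibility -/

namespace NineUnknowns
open Polynomial
namespace Coding
variable {ν : ℕ} (c : Coding ν)

theorem eval_codeC (a : ℤ) (z : Fin ν → ℤ) (b : ℤ) (δ : ℕ) :
    (codeC δ (Fin.cases a z : Fin (ν + 1) → ℤ)).eval b =
      1 + a * b + ∑ j : Fin ν, z j * b ^ (δ + 1) ^ ((j : ℕ) + 1) := by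
  simp [codeC, Fin.sum_univ_succ, eval_finsetSum, add_assoc]

/-- For a genuine code, `hB` divides the digit of index `M` of `S₂` exactly when `P(a, z) = 0`: all
coefficients have absolute value less than `hB`, and the base is a multiple of `hB`, so the higher
digits do not matter. -/
theorem S₂_digit {t a : ℤ} (z : Fin ν → ℤ) (ht : 1 ≤ t) (ha : 0 ≤ a ∧ a < t)
    (hz : ∀ j, 0 ≤ z j ∧ z j < t) :
    c.hB t ∣ c.S₂ t a (∑ j : Fin ν, z j * c.B t ^ (c.δ + 1) ^ ((j : ℕ) + 1)) / c.B t ^ c.M ↔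
      MvPolynomial.eval (Fin.cases a z : Fin (ν + 1) → ℤ) c.P = 0 := by
  obtain ⟨u, hu⟩ : ∃ u : Fin (ν + 1) → ℤ, u = Fin.cases a z := ⟨_, rfl⟩
  have hu' : ∀ j, 0 ≤ u j ∧ u j ≤ t := by
    intro j
    rw [hu]
    refine Fin.cases ?_ (fun j => ?_) j
    · exact ⟨ha.1, ha.2.le⟩
    · exact ⟨(hz j).1, (hz j).2.le⟩
  have hev := eval_codeC a z (c.B t) c.δ
  rw [← hu] at hev ⊢
  have hb := c.B_ge ht
  have hB2 : c.B t = 2 * c.hB t := rfl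
  obtain ⟨p, hp⟩ : ∃ p, p = c.K * codeC c.δ u ^ c.δ := ⟨_, rfl⟩
  have hpM : p.coeff c.M = c.δ.factorial * MvPolynomial.eval u c.P := by
    rw [hp]; exact c.coeff_K u
  have hpi : ∀ i, |p.coeff i| < c.hB t := by
    intro i
    rw [hp]
    refine (coeff_code_bound c.K ht hu' i).trans_lt ?_
    have h1 := c.lt_c
    unfold hB
    have : ((ν + 1 : ℕ) : ℤ) + 1 = ν + 2 := by push_cast; ring
    rw [this]
    gcongr
  have hpe : p.eval (c.B t) = (∑ i ∈ Finset.range c.M, p.coeff i * c.B t ^ i) +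
      c.B t ^ c.M * (p.coeff c.M + c.B t *
        ∑ i ∈ Finset.range p.natDegree, p.coeff (c.M + 1 + i) * c.B t ^ i) := by
    rw [eval_eq_sum_range' (n := c.M + 1 + p.natDegree) (by omega), Finset.sum_range_add,
      Finset.sum_range_succ, mul_add, Finset.mul_sum, Finset.mul_sum]
    rw [add_assoc]
    congr 2
    · ring
    · exact Finset.sum_congr rfl fun i _ => by ring
  have hlow := digits_bounds hb c.M (fun i => p.coeff i + c.hB t) fun i => by
    have := abs_lt.mp (hpi i); constructor <;> omega
  have hD : c.B t ^ c.D = c.B t ^ c.M * (c.B t * c.B t ^ (c.D - c.M - 1)) := by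
    rw [← pow_succ', ← pow_add]; congr 1; unfold D; omega
  have hS : c.S₂ t a (∑ j : Fin ν, z j * c.B t ^ (c.δ + 1) ^ ((j : ℕ) + 1)) =
      (∑ i ∈ Finset.range c.M, (p.coeff i + c.hB t) * c.B t ^ i) + c.B t ^ c.M *
        (p.coeff c.M + c.hB t * (1 + 2 * ((∑ i ∈ Finset.range p.natDegree,
          p.coeff (c.M + 1 + i) * c.B t ^ i) + c.B t ^ (c.D - c.M - 1)))) := by
    unfold S₂
    rw [← hev, ← eval_pow, ← eval_mul, ← hp, hpe, hD, Finset.sum_range_succ]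
    simp only [add_mul, Finset.sum_add_distrib, ← Finset.mul_sum]
    rw [hB2]
    ring
  rw [hS, Int.add_mul_ediv_left _ _ (by positivity), Int.ediv_eq_zero_of_lt hlow.1 hlow.2, zero_add,
    dvd_add_left (dvd_mul_right _ _)]
  have hfac : (c.δ.factorial : ℤ) ≠ 0 := by exact_mod_cast c.δ.factorial_ne_zero
  constructor
  · intro h
    have := Int.eq_zero_of_abs_lt_dvd h (hpi c.M)
    rw [hpM] at this
    exact (mul_eq_zero.mp this).resolve_left hfac
  · intro h
    rw [hpM, h]; simp

/-- For `t` a power of two, the solvability of `P(a, z) = 0` with `z_j < t` and code `g` is a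
divisibility. -/
theorem dvd_choose_iff {s : ℕ} {t a g : ℤ} (ht : t = 2 ^ s) (ha : 0 ≤ a) (hat : a < t) (hg : 0 ≤ g)
    (hgN : g < c.N₁ t) :
    (c.YY t).toNat ∣ (2 * (c.XX t a g).toNat).choose (c.XX t a g).toNat ↔
      ∃ z : Fin ν → ℕ, (∀ j, (z j : ℤ) < t) ∧
        g = ∑ j : Fin ν, (z j : ℤ) * c.B t ^ (c.δ + 1) ^ ((j : ℕ) + 1) ∧
        MvPolynomial.eval (Fin.cases a (fun j => (z j : ℤ)) : Fin (ν + 1) → ℤ) c.P = 0 := by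
  have ht1 : 1 ≤ t := by omega
  have hS₂ := c.S₂_bounds ha hat hg hgN
  have hT₁ := c.T₁_bounds ht1
  have hT₂ := c.T₂_bounds ht1
  obtain ⟨b, hb⟩ : ∃ b, b = c.c + s * c.δ := ⟨_, rfl⟩
  have ehB : c.hB t = ((2 ^ b : ℕ) : ℤ) := by
    unfold hB; rw [ht, hb]; push_cast; rw [pow_add, pow_mul]
  have eB : c.B t = ((2 ^ (b + 1) : ℕ) : ℤ) := by
    unfold B; rw [ehB]; push_cast; ring
  have hsb : s ≤ b + 1 := by
    have := c.one_le_δ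
    nlinarith
  have eN₁ : c.N₁ t = ((2 ^ ((b + 1) * c.L) : ℕ) : ℤ) := by
    unfold N₁; rw [eB]; push_cast; rw [pow_mul]
  have eN₂ : c.N₂ t = ((2 ^ ((b + 1) * (c.D + 2)) : ℕ) : ℤ) := by
    unfold N₂; rw [eB]; push_cast; rw [pow_mul]
  obtain ⟨t₁, ht₁⟩ : ∃ t₁ : ℕ, t₁ = ∑ i ∈ Finset.range c.L,
    (2 ^ (b + 1) - if i ∈ c.pos then 2 ^ s else 1) * (2 ^ (b + 1)) ^ i := ⟨_, rfl⟩
  have eT₁ : c.T₁ t = t₁ := by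
    unfold T₁
    rw [ht₁, Nat.cast_sum]
    refine Finset.sum_congr rfl fun i _ => ?_
    have : (if i ∈ c.pos then 2 ^ s else 1) ≤ 2 ^ (b + 1) := by
      split_ifs
      · exact Nat.pow_le_pow_right (by norm_num) hsb
      · exact Nat.one_le_two_pow
    rw [Nat.cast_mul, Nat.cast_sub this, eB, ht]
    split_ifs <;> push_cast <;> ring
  obtain ⟨t₂, ht₂⟩ : ∃ t₂ : ℕ, t₂ = (2 ^ b - 1) * (2 * 2 ^ b) ^ c.M := ⟨_, rfl⟩
  have eT₂ : c.T₂ t = t₂ := by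
    unfold T₂
    rw [ht₂, Nat.cast_mul, Nat.cast_sub Nat.one_le_two_pow, eB, ehB, pow_succ' 2 b]; push_cast; ring
  obtain ⟨s₂, es₂⟩ := Int.eq_ofNat_of_zero_le hS₂.1
  lift g to ℕ using hg
  rw [eT₁, eN₁] at hT₁
  rw [eT₂, eN₂] at hT₂
  rw [es₂, eN₂] at hS₂
  rw [eN₁] at hgN
  have hT₁' : t₁ < 2 ^ ((b + 1) * c.L) := by exact_mod_cast hT₁.2
  have hg' : g < 2 ^ ((b + 1) * c.L) := by exact_mod_cast hgN
  have eN : c.N t = ((2 ^ ((b + 1) * c.L + (b + 1) * (c.D + 2)) : ℕ) : ℤ) := by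
    unfold N; rw [eN₁, eN₂]; push_cast; rw [pow_add]
  have eS : c.S t a g = ((g + 2 ^ ((b + 1) * c.L) * s₂ : ℕ) : ℤ) := by
    unfold S; rw [es₂, eN₁]; push_cast; ring
  have eT : c.T t = ((t₁ + 2 ^ ((b + 1) * c.L) * t₂ : ℕ) : ℤ) := by
    unfold T; rw [eT₁, eT₂, eN₁]; push_cast; ring
  have hS := combine_lt (Int.natCast_nonneg g) hgN hS₂.1 hS₂.2
  have hT := combine_lt hT₁.1 hT₁.2 hT₂.1 hT₂.2
  have hS' : g + 2 ^ ((b + 1) * c.L) * s₂ < 2 ^ ((b + 1) * c.L + (b + 1) * (c.D + 2)) := by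
    rw [pow_add]; exact_mod_cast hS.2
  have hT' : t₁ + 2 ^ ((b + 1) * c.L) * t₂ < 2 ^ ((b + 1) * c.L + (b + 1) * (c.D + 2)) := by
    rw [pow_add]; exact_mod_cast hT.2
  obtain ⟨m, hm⟩ : ∃ m, m = (b + 1) * c.L + (b + 1) * (c.D + 2) := ⟨_, rfl⟩
  rw [← hm] at hS' hT' eN
  have eY : (c.YY t).toNat = (2 ^ m) ^ 2 := by
    unfold YY; rw [eN]; exact_mod_cast Int.toNat_natCast _
  have eX : (c.XX t a g).toNat = ((g + 2 ^ ((b + 1) * c.L) * s₂) + (t₁ + 2 ^ ((b + 1) * c.L) * t₂)) *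
      (2 ^ m) ^ 2 + (2 ^ m - 1 - (g + 2 ^ ((b + 1) * c.L) * s₂)) * 2 ^ m +
      (2 ^ m - 1 - (t₁ + 2 ^ ((b + 1) * c.L) * t₂)) := by
    generalize g + 2 ^ ((b + 1) * c.L) * s₂ = S at *
    generalize t₁ + 2 ^ ((b + 1) * c.L) * t₂ = T at *
    have e1 : ((2 ^ m - 1 - S : ℕ) : ℤ) = c.N t - 1 - S := by
      rw [eN, Nat.cast_sub (by omega), Nat.cast_sub (by omega)]; rfl
    have e2 : ((2 ^ m - 1 - T : ℕ) : ℤ) = c.N t - 1 - T := by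
      rw [eN, Nat.cast_sub (by omega), Nat.cast_sub (by omega)]; rfl
    have : c.XX t a g = ((S + T) * (2 ^ m) ^ 2 + (2 ^ m - 1 - S) * 2 ^ m + (2 ^ m - 1 - T) : ℕ) := by
      unfold XX
      rw [Nat.cast_add, Nat.cast_add, Nat.cast_mul, Nat.cast_mul, e1, e2, eS, eT, eN]
      push_cast; ring
    rw [this, Int.toNat_natCast]
  rw [eX, eY, mask_iff hS' hT', and_split hg' hT₁', ht₂, middle_mask _ rfl, ht₁,
    digits_mask hsb c.L c.pos (fun j : Fin ν => (c.δ + 1) ^ ((j : ℕ) + 1)) ?_ rfl ?_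
      (by rw [← pow_mul]; exact hg')]
  · rw [← exists_and_right]
    refine exists_congr fun z => ?_
    have h1 : (∀ j, (z j : ℤ) < t) ↔ ∀ j, z j < 2 ^ s := by
      rw [ht]; exact forall_congr' fun j => by exact_mod_cast Iff.rfl
    have h2 : (g : ℤ) = ∑ j : Fin ν, (z j : ℤ) * c.B t ^ (c.δ + 1) ^ ((j : ℕ) + 1) ↔
        g = ∑ j : Fin ν, z j * (2 ^ (b + 1)) ^ (c.δ + 1) ^ ((j : ℕ) + 1) := by
      rw [eB]; exact_mod_cast Iff.rfl
    rw [← h1, ← h2, and_assoc]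
    refine and_congr_right fun hz => and_congr_right fun hgz => ?_
    rw [← c.S₂_digit (fun j => (z j : ℤ)) ht1 ⟨ha, hat⟩ fun j => ⟨by positivity, hz j⟩, ← hgz, es₂,
      ehB, eB, pow_succ' 2 b]
    exact_mod_cast Iff.rfl
  · intro i j h
    have h2 : (i : ℕ) + 1 = j + 1 := Nat.pow_right_injective (by have := c.one_le_δ; omega) h
    exact Fin.ext (by omega)
  · intro j
    unfold L
    exact Nat.lt_succ_of_le (Nat.pow_le_pow_right (by omega) (by omega))

theorem code_lt {t : ℤ} (z : Fin ν → ℤ) (ht : 1 ≤ t) (hz : ∀ j, 0 ≤ z j ∧ z j < t) :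
    0 ≤ ∑ j : Fin ν, z j * c.B t ^ (c.δ + 1) ^ ((j : ℕ) + 1) ∧
      ∑ j : Fin ν, z j * c.B t ^ (c.δ + 1) ^ ((j : ℕ) + 1) < c.N₁ t := by
  have hb := c.B_ge ht
  have h1 := c.hB_ge ht
  have hB2 : c.B t = 2 * c.hB t := rfl
  refine ⟨Finset.sum_nonneg fun j _ => mul_nonneg (hz j).1 (by positivity), ?_⟩
  have hinj : Function.Injective fun j : Fin ν => (c.δ + 1) ^ ((j : ℕ) + 1) := by
    intro i j h
    have h2 : (i : ℕ) + 1 = j + 1 := Nat.pow_right_injective (by have := c.one_le_δ; omega) h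
    exact Fin.ext (by omega)
  calc _ ≤ ∑ j : Fin ν, (c.B t - 1) * c.B t ^ (c.δ + 1) ^ ((j : ℕ) + 1) := by
        gcongr with j
        have := (hz j).2
        omega
    _ = ∑ i ∈ c.pos, (c.B t - 1) * c.B t ^ i := by
        rw [pos, Finset.sum_image fun a _ b _ h => hinj h]
    _ ≤ ∑ i ∈ Finset.range c.L, (c.B t - 1) * c.B t ^ i := by
        apply Finset.sum_le_sum_of_subset_of_nonneg
        · intro i hi
          obtain ⟨j, -, rfl⟩ := Finset.mem_image.mp hi
          rw [Finset.mem_range, L]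
          exact Nat.lt_succ_of_le (Nat.pow_le_pow_right (by omega) (by omega))
        · exact fun i _ _ => mul_nonneg (by omega) (by positivity)
    _ < _ := (digits_bounds hb c.L (fun _ => c.B t - 1) fun _ => by omega).2

end Coding

end NineUnknowns

/-! ### The polynomial in nine unknowns -/

namespace NineUnknowns

/-- Polynomial functions of the parameter and the nine unknowns. -/
def IsPoly (F : (Fin 10 → ℤ) → ℤ) : Prop :=
  ∃ q : MvPolynomial (Fin 10) ℤ, ∀ v, MvPolynomial.eval v q = F v

namespace IsPoly
variable {F G : (Fin 10 → ℤ) → ℤ}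

theorem const (c : ℤ) : IsPoly fun _ => c := ⟨MvPolynomial.C c, fun v => by simp⟩
theorem var (i : Fin 10) : IsPoly fun v => v i := ⟨MvPolynomial.X i, fun v => by simp⟩
theorem add (hF : IsPoly F) (hG : IsPoly G) : IsPoly fun v => F v + G v := by
  obtain ⟨p, hp⟩ := hF; obtain ⟨q, hq⟩ := hG
  exact ⟨p + q, fun v => by simp [hp, hq]⟩
theorem sub (hF : IsPoly F) (hG : IsPoly G) : IsPoly fun v => F v - G v := by
  obtain ⟨p, hp⟩ := hF; obtain ⟨q, hq⟩ := hG
  exact ⟨p - q, fun v => by simp [hp, hq]⟩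
theorem mul (hF : IsPoly F) (hG : IsPoly G) : IsPoly fun v => F v * G v := by
  obtain ⟨p, hp⟩ := hF; obtain ⟨q, hq⟩ := hG
  exact ⟨p * q, fun v => by simp [hp, hq]⟩
theorem pow (hF : IsPoly F) (n : ℕ) : IsPoly fun v => F v ^ n := by
  obtain ⟨p, hp⟩ := hF
  exact ⟨p ^ n, fun v => by simp [hp]⟩
theorem sum {ι : Type*} (s : Finset ι) {F : ι → (Fin 10 → ℤ) → ℤ} (h : ∀ i, IsPoly (F i)) :
    IsPoly fun v => ∑ i ∈ s, F i v := by
  choose p hp using h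
  exact ⟨∑ i ∈ s, p i, fun v => by simp [hp]⟩
theorem evalPoly (hF : IsPoly F) (K : Polynomial ℤ) : IsPoly fun v => K.eval (F v) := by
  simp only [Polynomial.eval_eq_sum_range]
  exact sum _ fun i => (const _).mul (hF.pow i)

theorem pD (hF : IsPoly F) (hG : IsPoly G) : IsPoly fun v => pD (F v) (G v) := by
  unfold NineUnknowns.pD
  exact (((hF.pow 2).sub (const 1)).mul (hG.pow 2)).add (const 1)

variable {A B C X Y : (Fin 10 → ℤ) → ℤ}

theorem pF (hA : IsPoly A) (hC : IsPoly C) (hX : IsPoly X) :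
    IsPoly fun v => pF (A v) (C v) (X v) := by
  unfold NineUnknowns.pF pV
  exact (((hA.pow 2).sub (const 1)).mul (((((const 2).mul (hC.pow 2)).mul (hA.pD hC)).mul hX).pow 2)).add
    (const 1)

theorem pI (hA : IsPoly A) (hB : IsPoly B) (hC : IsPoly C) (hX : IsPoly X) (hY : IsPoly Y) :
    IsPoly fun v => pI (A v) (B v) (C v) (X v) (Y v) := by
  have hF := hA.pF hC hX
  have hG : IsPoly fun v => pG (A v) (C v) (X v) := by
    unfold pG
    exact ((const 1).add ((((const 2).mul (hC.pow 2)).mul (hA.pD hC)).mul hF)).sub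
      ((hA.sub (const 1)).mul (hF.sub (const 1)))
  have hH : IsPoly fun v => pH (A v) (B v) (C v) (X v) (Y v) := by
    unfold pH
    exact (hC.add (hB.mul hF)).add (((((const 2).mul hY).sub (const 1)).mul hC).mul hF)
  unfold NineUnknowns.pI
  exact (((hG.pow 2).sub (const 1)).mul (hH.pow 2)).add (const 1)

theorem relM {A₁ A₂ S T R N : (Fin 10 → ℤ) → ℤ} (h₁ : IsPoly A₁) (h₂ : IsPoly A₂) (hS : IsPoly S)
    (hT : IsPoly T) (hR : IsPoly R) (hN : IsPoly N) :
    IsPoly fun v => relM (A₁ v) (A₂ v) (S v) (T v) (R v) (N v) := by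
  have hX : IsPoly fun v => relX (A₁ v) (A₂ v) := by
    unfold relX; exact ((const 1).add (h₁.pow 2)).add (h₂.pow 2)
  have hV : IsPoly fun v => S v ^ 2 * (2 * R v - 1) :=
    (hS.pow 2).mul (((const 2).mul hR).sub (const 1))
  have hU : IsPoly fun v => relU (A₁ v) (A₂ v) (S v) (T v) (R v) (N v) := by
    unfold relU
    exact (((hS.pow 2).mul hN).add (hT.pow 2)).sub (hV.mul ((hT.pow 2).add (hX.pow 2)))
  unfold NineUnknowns.relM
  exact (((hU.pow 2).sub ((hV.pow 2).mul (h₁.add (h₂.mul (hX.pow 2))))).pow 2).sub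
    (((const 4).mul (hV.pow 4)).mul ((h₁.mul h₂).mul (hX.pow 2)))

variable {W L H : (Fin 10 → ℤ) → ℤ}

theorem cA (hX : IsPoly X) (hY : IsPoly Y) (hW : IsPoly W) (hL : IsPoly L) :
    IsPoly fun v => cA (X v) (Y v) (W v) (L v) := by
  unfold NineUnknowns.cA cV
  exact (((hL.mul hY).mul hX).pow 2).mul (((((const 16).mul (hW.pow 2)).mul hY).add (const 1)).pow 2)

theorem cB (hX : IsPoly X) (hY : IsPoly Y) (hW : IsPoly W) (hL : IsPoly L) :
    IsPoly fun v => cB (X v) (Y v) (W v) (L v) := by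
  unfold NineUnknowns.cB cV
  exact (((hL.mul hY).mul hX).pow 2).mul (((const 16).mul (hW.pow 2)).mul hY)

variable {ν : ℕ} (c : Coding ν) {t a g : (Fin 10 → ℤ) → ℤ}

theorem hB (ht : IsPoly t) : IsPoly fun v => c.hB (t v) := by
  unfold Coding.hB; exact (const _).mul (ht.pow _)
theorem base (ht : IsPoly t) : IsPoly fun v => c.B (t v) := by
  unfold Coding.B; exact (const _).mul (ht.hB c)
theorem N₁ (ht : IsPoly t) : IsPoly fun v => c.N₁ (t v) := by
  unfold Coding.N₁; exact (ht.base c).pow _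
theorem N (ht : IsPoly t) : IsPoly fun v => c.N (t v) := by
  unfold Coding.N Coding.N₂; exact (ht.N₁ c).mul ((ht.base c).pow _)
theorem T (ht : IsPoly t) : IsPoly fun v => c.T (t v) := by
  have h1 : IsPoly fun v => c.T₁ (t v) := by
    unfold Coding.T₁
    refine sum _ fun i => ((ht.base c).sub ?_).mul ((ht.base c).pow i)
    split_ifs
    exacts [ht, const 1]
  unfold Coding.T Coding.T₂
  exact h1.add ((ht.N₁ c).mul (((ht.hB c).sub (const 1)).mul ((ht.base c).pow _)))
theorem S (ht : IsPoly t) (ha : IsPoly a) (hg : IsPoly g) :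
    IsPoly fun v => c.S (t v) (a v) (g v) := by
  have hb := ht.base c
  unfold Coding.S Coding.S₂
  exact hg.add ((ht.N₁ c).mul ((((hb.evalPoly c.K).mul
    ((((const 1).add (ha.mul hb)).add hg).pow _)).add
    ((ht.hB c).mul (sum _ fun i => hb.pow i))).add (hb.pow _)))
theorem XX (ht : IsPoly t) (ha : IsPoly a) (hg : IsPoly g) :
    IsPoly fun v => c.XX (t v) (a v) (g v) := by
  have hS := ht.S c ha hg
  have hT := ht.T c
  have hN := ht.N c
  unfold Coding.XX
  exact (((hS.add hT).mul (hN.pow 2)).add (((hN.sub (const 1)).sub hS).mul hN)).add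
    ((hN.sub (const 1)).sub hT)

end IsPoly

/-- The bound `t` for the parameter and the solutions. It exceeds `a` for `f ≠ 0`, and by Euler's theorem
it takes values which are arbitrarily large powers of two. -/
def tt (a f : ℤ) : ℤ := (1 + 3 * (2 * a + 1) * f) ^ 2

/-- The polynomial in nine unknowns. The code of the solution is `g - 1`, so that the range of `g` is
expressed by `0 < g (N₁ + 1 - g)`; the last argument of `relM` before `n` is positive exactly when this
holds, `f, l, w, x` are nonzero and `C / J` is close to `l Y`. -/
noncomputable def nineFun {ν : ℕ} (c : Coding ν) (a f g h k l w x y n : ℤ) : ℤ :=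
  let t := tt a f
  let X := c.XX t a (g - 1)
  let Y := c.YY t
  let W := t * w
  let α := cA X Y W l
  let C := cC X Y W l h
  let J := cJ X Y W l k
  relM (pD α C * pF α C x * pI α (X + 1) C x y) ((cB X Y W l ^ 2 - 1) * J ^ 2 + 1) (4 * α - 5)
    (3 * W * C - 2 * (W ^ 2 - 1))
    ((f * l * w * x) ^ 2 *
      (g * (c.N₁ t + 1 - g) * J ^ 2 - (c.N₁ t + 1) ^ 2 * (C - J * (l * Y)) ^ 2)) n

theorem isPoly_nineFun {ν : ℕ} (c : Coding ν) : IsPoly fun v =>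
    nineFun c (v 0) (v 1) (v 2) (v 3) (v 4) (v 5) (v 6) (v 7) (v 8) (v 9) := by
  have ht : IsPoly fun v => tt (v 0) (v 1) := by
    unfold tt
    exact ((IsPoly.const 1).add (((IsPoly.const 3).mul
      (((IsPoly.const 2).mul (.var 0)).add (.const 1))).mul (.var 1))).pow 2
  have hX := ht.XX c (.var 0) ((IsPoly.var 2).sub (.const 1))
  have hY : IsPoly fun v => c.YY (tt (v 0) (v 1)) := (ht.N c).pow 2
  have hW := ht.mul (.var 6)
  have hα := hX.cA hY hW (.var 5)
  have hβ := hX.cB hY hW (.var 5)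
  have hX1 := hX.add (.const 1)
  have hC := hX1.add ((hα.sub (.const 1)).mul (.var 3))
  have hJ := hX1.add ((hβ.sub (.const 1)).mul (.var 4))
  have hN := (ht.N₁ c).add (.const 1)
  exact IsPoly.relM (((hα.pD hC).mul (hα.pF hC (.var 7))).mul (hα.pI hX1 hC (.var 7) (.var 8)))
    ((((hβ.pow 2).sub (.const 1)).mul (hJ.pow 2)).add (.const 1))
    (((IsPoly.const 4).mul hα).sub (.const 5))
    ((((IsPoly.const 3).mul hW).mul hC).sub ((IsPoly.const 2).mul ((hW.pow 2).sub (.const 1))))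
    ((((((IsPoly.var 1).mul (.var 5)).mul (.var 6)).mul (.var 7)).pow 2).mul
      ((((IsPoly.var 2).mul (hN.sub (.var 2))).mul (hJ.pow 2)).sub
        ((hN.pow 2).mul ((hC.sub (hJ.mul ((IsPoly.var 5).mul hY))).pow 2))))
    (.var 9)

/-- A zero of the polynomial gives a solution: it makes `t` a divisor of a power of two. -/
theorem nine_back {ν : ℕ} (c : Coding ν) (a : ℕ) {f g h k l w x y n : ℤ} (hn : n ≥ 0)
    (hQ : nineFun c a f g h k l w x y n = 0) :
    ∃ z : Fin ν → ℕ, MvPolynomial.eval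
      (Fin.cases (a : ℤ) (fun j => (z j : ℤ)) : Fin (ν + 1) → ℤ) c.P = 0 := by
  unfold nineFun at hQ
  obtain ⟨t, ht⟩ : ∃ t, t = tt a f := ⟨_, rfl⟩
  simp only [← ht] at hQ
  obtain ⟨h1, h2, h3, hR⟩ := (relation_combining (by omega)).mpr ⟨n, hn, hQ⟩
  have hflwx : f * l * w * x ≠ 0 := by
    intro h0; rw [h0] at hR; simp at hR
  have hx := right_ne_zero_of_mul hflwx
  have hw := right_ne_zero_of_mul (left_ne_zero_of_mul hflwx)
  have hl := right_ne_zero_of_mul (left_ne_zero_of_mul (left_ne_zero_of_mul hflwx))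
  have hf := left_ne_zero_of_mul (left_ne_zero_of_mul (left_ne_zero_of_mul hflwx))
  have hbr := pos_of_mul_pos_right hR (sq_nonneg _)
  have hat : (a : ℤ) < t := by
    rw [ht]; unfold tt
    have ha : (0 : ℤ) ≤ a := Int.natCast_nonneg a
    rcases lt_or_gt_of_ne hf with h | h
    · have h4 : 3 * (2 * (a : ℤ) + 1) * f ≤ -(3 * (2 * a + 1)) := by nlinarith
      nlinarith
    · have h4 : 3 * (2 * (a : ℤ) + 1) ≤ 3 * (2 * a + 1) * f := by nlinarith
      nlinarith
  have ht1 : 1 ≤ t := by omega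
  have hN₁ : 1 ≤ c.N₁ t := by
    have := c.B_ge ht1
    exact one_le_pow₀ (by omega)
  generalize hC : cC (c.XX t a (g - 1)) (c.YY t) (t * w) l h = C at *
  generalize hJ : cJ (c.XX t a (g - 1)) (c.YY t) (t * w) l k = J at *
  have hgg : 0 < g * (c.N₁ t + 1 - g) := by
    by_contra h0
    have : g * (c.N₁ t + 1 - g) * J ^ 2 ≤ 0 := mul_nonpos_of_nonpos_of_nonneg (by omega) (sq_nonneg _)
    nlinarith [sq_nonneg ((c.N₁ t + 1) * (C - J * (l * c.YY t)))]
  have hg : 1 ≤ g ∧ g ≤ c.N₁ t := by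
    constructor
    · by_contra h0; nlinarith
    · by_contra h0; nlinarith
  have happrox : 4 * (C - J * (l * c.YY t)) ^ 2 < J ^ 2 := by
    have e1 : 4 * (g * (c.N₁ t + 1 - g)) ≤ (c.N₁ t + 1) ^ 2 := by
      nlinarith [sq_nonneg (c.N₁ t + 1 - 2 * g)]
    have e2 : (4 * (g * (c.N₁ t + 1 - g))) * J ^ 2 ≤ (c.N₁ t + 1) ^ 2 * J ^ 2 := by gcongr
    have e3 : (c.N₁ t + 1) ^ 2 * (4 * (C - J * (l * c.YY t)) ^ 2) < (c.N₁ t + 1) ^ 2 * J ^ 2 := by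
      linarith
    exact lt_of_mul_lt_mul_left e3 (sq_nonneg _)
  obtain ⟨hX, hY, -⟩ := c.XX_YY (Int.natCast_nonneg a) hat (by omega : 0 ≤ g - 1) (by omega)
  have hXn : ((c.XX t a (g - 1)).toNat : ℤ) = c.XX t a (g - 1) := Int.toNat_of_nonneg (by omega)
  have hYn : ((c.YY t).toNat : ℤ) = c.YY t := Int.toNat_of_nonneg (by omega)
  rw [← hXn, ← hYn] at h1 h2 h3 hC hJ
  rw [← hYn] at happrox
  subst hC hJ
  obtain ⟨hW, hdvd⟩ := bridge_back (by omega) (by omega) (mul_ne_zero (by omega) hw) hl hx h1 h2 h3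
    happrox
  have htd : t.natAbs ∣ 2 ^ ((c.XX t a (g - 1)).toNat + 1) := by
    rw [← hW, Int.natAbs_mul]; exact dvd_mul_right _ _
  obtain ⟨s, -, hs⟩ := (Nat.dvd_prime_pow Nat.prime_two).mp htd
  have hts : t = 2 ^ s := by
    have : ((t.natAbs : ℕ) : ℤ) = t := Int.natAbs_of_nonneg (by omega)
    rw [← this, hs]; push_cast; rfl
  obtain ⟨z, -, -, hz⟩ := (c.dvd_choose_iff hts (Int.natCast_nonneg a) hat (by omega)
    (by omega)).mp hdvd
  exact ⟨z, hz⟩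

/-- A solution gives a zero of the polynomial. -/
theorem nine_forth {ν : ℕ} (c : Coding ν) (a : ℕ) (z : Fin ν → ℕ)
    (hz : MvPolynomial.eval
      (Fin.cases (a : ℤ) (fun j => (z j : ℤ)) : Fin (ν + 1) → ℤ) c.P = 0) :
    ∃ f g h k l w x y n : ℤ, n ≥ 0 ∧ nineFun c a f g h k l w x y n = 0 := by
  obtain ⟨r, hr⟩ : ∃ r, r = 1 + a + ∑ j, z j := ⟨_, rfl⟩
  obtain ⟨m, hm⟩ : ∃ m, m = (3 * (2 * a + 1)).totient * r := ⟨_, rfl⟩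
  have hrm : r ≤ m := by
    rw [hm]; exact Nat.le_mul_of_pos_left _ (Nat.totient_pos.mpr (by omega))
  -- Euler's theorem
  have hmod : 2 ^ m ≡ 1 [MOD 3 * (2 * a + 1)] := by
    have hcop : Nat.Coprime 2 (3 * (2 * a + 1)) := by
      rw [Nat.coprime_two_left]; exact ⟨3 * a + 1, by ring⟩
    rw [hm, pow_mul]; simpa using (Nat.ModEq.pow_totient hcop).pow r
  obtain ⟨f, hf⟩ := Nat.modEq_iff_dvd.mp hmod.symm
  push_cast at hf
  have hm2 : m < 2 ^ m := Nat.lt_two_pow_self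
  have hf0 : f ≠ 0 := by
    rintro rfl
    have : (2 : ℤ) ^ m = 1 := by linarith
    have h2 : 2 ^ m = 1 := by exact_mod_cast this
    omega
  obtain ⟨t, ht⟩ : ∃ t, t = tt a f := ⟨_, rfl⟩
  have ht2 : t = 2 ^ (2 * m) := by
    rw [ht]; unfold tt
    rw [← hf, add_sub_cancel, ← pow_mul, mul_comm]
  have hmt : (m : ℤ) < t := by
    rw [ht2]
    have : m < 2 ^ (2 * m) := hm2.trans_le (Nat.pow_le_pow_right (by norm_num) (by omega))
    exact_mod_cast this
  have hat : (a : ℤ) < t := by omega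
  have hzt : ∀ j, (z j : ℤ) < t := by
    intro j
    have := Finset.single_le_sum (f := z) (fun _ _ => Nat.zero_le _) (Finset.mem_univ j)
    omega
  have ht1 : 1 ≤ t := by omega
  obtain ⟨G, hG⟩ : ∃ G : ℤ, G = ∑ j : Fin ν, (z j : ℤ) * c.B t ^ (c.δ + 1) ^ ((j : ℕ) + 1) :=
    ⟨_, rfl⟩
  have hGb := c.code_lt (fun j => (z j : ℤ)) ht1 fun j => ⟨by positivity, hzt j⟩
  rw [← hG] at hGb
  obtain ⟨hX, hY, hNY⟩ := c.XX_YY (Int.natCast_nonneg a) hat hGb.1 hGb.2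
  have hdvd := (c.dvd_choose_iff ht2 (Int.natCast_nonneg a) hat hGb.1 hGb.2).mpr ⟨z, hzt, hG, hz⟩
  have hN₁t : t ≤ c.N₁ t := by
    have h1 := c.hB_ge ht1
    have h2 : t ≤ c.B t := by unfold Coding.B; omega
    refine h2.trans (le_self_pow₀ (by omega) (by unfold Coding.L; omega))
  have hXn : ((c.XX t a G).toNat : ℤ) = c.XX t a G := Int.toNat_of_nonneg (by omega)
  have hYn : ((c.YY t).toNat : ℤ) = c.YY t := Int.toNat_of_nonneg (by omega)
  obtain ⟨l, h, k, x, y, hl, hx, h1, h2, h3, h4⟩ := bridge_forth (by omega) (by omega) hdvd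
  have hmX : 2 * m ≤ (c.XX t a G).toNat + 1 := by
    have : 2 * m < 2 ^ (2 * m) := Nat.lt_two_pow_self
    have : ((2 * m : ℕ) : ℤ) < t := by rw [ht2]; exact_mod_cast this
    omega
  obtain ⟨w, hw⟩ : ∃ w : ℤ, w = 2 ^ ((c.XX t a G).toNat + 1 - 2 * m) := ⟨_, rfl⟩
  have hW : t * w = 2 ^ ((c.XX t a G).toNat + 1) := by
    calc t * w = 2 ^ (2 * m) * w := congrArg (· * w) ht2
      _ = _ := by rw [hw, ← pow_add, Nat.add_sub_cancel' hmX]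
  have hw0 : w ≠ 0 := by rw [hw]; positivity
  rw [← hW] at h1 h2 h3 h4
  rw [hXn, hYn] at h1 h2 h3 h4
  refine ⟨f, G + 1, h, k, l, w, x, y, ?_⟩
  unfold nineFun
  simp only [← ht, add_sub_cancel_right]
  refine (relation_combining (by omega)).mp ⟨h1, h2, h3, ?_⟩
  generalize cC (c.XX t a G) (c.YY t) (t * w) l h = C at *
  generalize cJ (c.XX t a G) (c.YY t) (t * w) l k = J at *
  have e0 : 0 ≤ c.N₁ t + 1 := by omega
  have e1 : (c.N₁ t + 1) ^ 2 ≤ (4 * c.YY t) ^ 2 := by gcongr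
  have e2 : (c.N₁ t + 1) ^ 2 * (C - J * (l * c.YY t)) ^ 2 ≤
      (4 * c.YY t) ^ 2 * (C - J * (l * c.YY t)) ^ 2 := by gcongr
  have e3 : 1 ≤ (G + 1) * (c.N₁ t + 1 - (G + 1)) := by nlinarith
  have e4 : 1 * J ^ 2 ≤ (G + 1) * (c.N₁ t + 1 - (G + 1)) * J ^ 2 := by gcongr
  apply mul_pos
  · positivity
  · linarith

end NineUnknowns

open MvPolynomial

theorem nine_unknowns_over_Z_and_N (ν : ℕ) (P : MvPolynomial (Fin (ν + 1)) ℤ) :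
    ∃ Q : MvPolynomial (Fin 10) ℤ, ∀ a : ℕ,
      (∃ z : Fin ν → ℕ,
          eval (Fin.cases (a : ℤ) (fun i => (z i : ℤ)) : Fin (ν + 1) → ℤ) P = 0) ↔
      (∃ f g h k l w x y n : ℤ, n ≥ 0 ∧
          eval (![(a : ℤ), f, g, h, k, l, w, x, y, n]) Q = 0) := by
  obtain ⟨c, rfl⟩ := NineUnknowns.exists_coding P
  obtain ⟨Q, hQ⟩ := NineUnknowns.isPoly_nineFun c
  refine ⟨Q, fun a => ?_⟩
  constructor
  · rintro ⟨z, hz⟩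
    obtain ⟨f, g, h, k, l, w, x, y, n, hn, h0⟩ := NineUnknowns.nine_forth c a z hz
    exact ⟨f, g, h, k, l, w, x, y, n, hn, by rw [hQ]; exact h0⟩
  · rintro ⟨f, g, h, k, l, w, x, y, n, hn, h0⟩
    rw [hQ] at h0
    exact NineUnknowns.nine_back c a hn h0
end

section
/- For every q > 0 there exists a polynomial M_q ∈ ℤ[A₁, …, A_q, S, T, R, n] in q + 4 variables such that for all integers A₁, …, A_q, R, S, T with S ≠ 0, the following are equivalent: (1) S divides T, R > 0, and each of A₁, …, A_q is a perfect square; (2) there exists an integer n ≥ 0 with M_q(A₁, …, A_q, S, T, R, n) = 0. -/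
/-!
The polynomial `M` is the elimination of square roots from Matiyasevich and Robinson's linear form.
Put `W = 1 + ∑ Aᵢ²` and
`L(s) = S²n + T² - S²(2R - 1)(T² + W^q + ∑ sᵢ Wⁱ)`.
Every polynomial condition on square roots `sᵢ` of the `Aᵢ` can be rewritten as the vanishing of a
polynomial in the `Aᵢ` alone (`exists_eliminate_sqrts`): writing `P = E(s²) + s O(s²)`, one of
`P(s)`, `P(-s)` vanishes iff `E² - s² O²` does. So `M = 0` means that `L(s) = 0` for some choice of
square roots `sᵢ` in an algebraic closure of `ℚ`.

If `S ∣ T`, `R > 0` and the `Aᵢ` are squares, take for `sᵢ` any integer roots; since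
`W^q + ∑ sᵢ Wⁱ > 0` (`pow_add_sum_pos`), solving `L = 0` for `n` gives a nonnegative integer.

Conversely, `L(s) = 0` forces `∑ sᵢ Wⁱ` to be rational, as `S²(2R - 1) ≠ 0`. A Galois automorphism
`σ` fixes this sum and sends each `sᵢ` to `± sᵢ`, so the sum of `sᵢ Wⁱ` over the `i` with
`σ sᵢ ≠ sᵢ` is zero. Nonzero `sᵢ` have absolute value at least `1` while `∑ |sᵢ| < W`, so the term of
highest index would dominate (`eq_zero_of_sum_mul_pow_eq_zero`); hence no `sᵢ` is moved, and the `sᵢ`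
are rational, thus integers. Now `L(s) = 0` is an equation in integers, from which
`S² ∣ T²` and, by positivity of `W^q + ∑ sᵢ Wⁱ`, also `R > 0`.
-/

open MvPolynomial

section Elimination

variable {σ K : Type*} [Field K]

/-- Separation into even and odd part in the variable `i`, with `s²` renamed to `X i`. -/
lemma exists_even_odd_parts [DecidableEq σ] (i : σ) (P : MvPolynomial σ ℤ) :
    ∃ E O : MvPolynomial σ ℤ, ∀ (x : σ → K) (s : K), s ^ 2 = x i →
      aeval (Function.update x i s) P = aeval x E + s * aeval x O := by
  induction P using MvPolynomial.induction_on with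
  | C a => exact ⟨C a, 0, fun x s _ => by simp⟩
  | add p r hp hr =>
    obtain ⟨E, O, h⟩ := hp
    obtain ⟨E', O', h'⟩ := hr
    refine ⟨E + E', O + O', fun x s hs => ?_⟩
    simp only [map_add, h x s hs, h' x s hs]
    ring
  | mul_X p j hp =>
    obtain ⟨E, O, h⟩ := hp
    by_cases hj : j = i
    · subst hj
      refine ⟨X j * O, E, fun x s hs => ?_⟩
      simp only [map_mul, h x s hs, aeval_X, Function.update_self, ← hs]
      ring
    · refine ⟨E * X j, O * X j, fun x s hs => ?_⟩
      simp only [map_mul, h x s hs, aeval_X, Function.update_of_ne hj]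
      ring

lemma exists_eliminate_sqrt [DecidableEq σ] [IsAlgClosed K] (i : σ) (P : MvPolynomial σ ℤ) :
    ∃ Q : MvPolynomial σ ℤ, ∀ x : σ → K,
      aeval x Q = 0 ↔ ∃ s : K, s ^ 2 = x i ∧ aeval (Function.update x i s) P = 0 := by
  obtain ⟨E, O, h⟩ := exists_even_odd_parts (K := K) i P
  refine ⟨E ^ 2 - X i * O ^ 2, fun x => ?_⟩
  simp only [map_sub, map_mul, map_pow, aeval_X]
  constructor
  · intro hQ
    obtain ⟨s, hs⟩ := IsAlgClosed.exists_pow_nat_eq (x i) (n := 2) (by norm_num)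
    have hprod : (aeval x E + s * aeval x O) * (aeval x E + (-s) * aeval x O) = 0 := by
      rw [← hs] at hQ
      linear_combination hQ
    rcases mul_eq_zero.mp hprod with h0 | h0
    · exact ⟨s, hs, by rw [h x s hs, h0]⟩
    · have hs' : (-s) ^ 2 = x i := by rw [neg_sq, hs]
      exact ⟨-s, hs', by rw [h x (-s) hs', h0]⟩
  · rintro ⟨s, hs, h0⟩
    rw [h x s hs] at h0
    rw [← hs]
    linear_combination (aeval x E - s * aeval x O) * h0

/-- The existence of square roots of the coordinates in `I` at which `P` vanishes is a polynomial
condition on the coordinates themselves. -/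
lemma exists_eliminate_sqrts [DecidableEq σ] [IsAlgClosed K] (I : Finset σ)
    (P : MvPolynomial σ ℤ) :
    ∃ Q : MvPolynomial σ ℤ, ∀ x : σ → K,
      aeval x Q = 0 ↔
        ∃ y : σ → K, (∀ i ∈ I, y i ^ 2 = x i) ∧ (∀ i ∉ I, y i = x i) ∧ aeval y P = 0 := by
  induction I using Finset.induction_on with
  | empty =>
    refine ⟨P, fun x => ⟨fun h => ⟨x, by simp, by simp, h⟩, ?_⟩⟩
    rintro ⟨y, -, hy, h⟩
    rwa [show x = y from funext fun i => (hy i (Finset.notMem_empty i)).symm]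
  | insert a I ha ih =>
    obtain ⟨Q, hQ⟩ := ih
    obtain ⟨Q', hQ'⟩ := exists_eliminate_sqrt (K := K) a Q
    refine ⟨Q', fun x => ?_⟩
    rw [hQ']
    constructor
    · rintro ⟨s, hs, h⟩
      obtain ⟨y, h1, h2, h3⟩ := (hQ _).mp h
      refine ⟨y, fun i hi => ?_, fun i hi => ?_, h3⟩
      · rcases Finset.mem_insert.mp hi with rfl | hi
        · rw [h2 i ha, Function.update_self, hs]
        · rw [h1 i hi, Function.update_of_ne (ne_of_mem_of_not_mem hi ha)]
      · rw [Finset.mem_insert, not_or] at hi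
        rw [h2 i hi.2, Function.update_of_ne hi.1]
    · rintro ⟨y, h1, h2, h3⟩
      refine ⟨y a, h1 a (Finset.mem_insert_self a I), (hQ _).mpr ⟨y, fun i hi => ?_, fun i hi => ?_, h3⟩⟩
      · rw [h1 i (Finset.mem_insert_of_mem hi), Function.update_of_ne (ne_of_mem_of_not_mem hi ha)]
      · by_cases hia : i = a
        · rw [hia, Function.update_self]
        · rw [Function.update_of_ne hia]
          exact h2 i (by simp [hia, hi])

end Elimination

/-- In a sum `∑ tᵢ wⁱ` whose nonzero digits have norm at least `1` and whose digits have total norm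
less than `w`, the term of highest index dominates. -/
lemma eq_zero_of_sum_mul_pow_eq_zero (w : ℝ) (hw : 1 ≤ w) :
    ∀ (q : ℕ) (t : Fin q → ℂ), (∀ i, t i = 0 ∨ 1 ≤ ‖t i‖) → ∑ i, ‖t i‖ < w →
      ∑ i, t i * (w : ℂ) ^ (i : ℕ) = 0 → ∀ i, t i = 0 := by
  intro q
  induction q with
  | zero => exact fun t _ _ _ i => i.elim0
  | succ q ih =>
    intro t h1 hlt hsum
    rw [Fin.sum_univ_castSucc] at hlt hsum
    have hw0 : 0 < w := by linarith
    have hlast : t (Fin.last q) = 0 := by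
      by_contra hne
      have hge := (h1 (Fin.last q)).resolve_left hne
      have hnorm : ‖t (Fin.last q)‖ * w ^ q
          ≤ ∑ i : Fin q, ‖t i.castSucc‖ * w ^ (i : ℕ) := by
        have heq : t (Fin.last q) * (w : ℂ) ^ q
            = -∑ i : Fin q, t i.castSucc * (w : ℂ) ^ (i : ℕ) := by
          simp only [Fin.val_last, Fin.val_castSucc] at hsum
          linear_combination hsum
        calc ‖t (Fin.last q)‖ * w ^ q = ‖t (Fin.last q) * (w : ℂ) ^ q‖ := by
              simp [abs_of_pos hw0]
          _ ≤ ∑ i : Fin q, ‖t i.castSucc * (w : ℂ) ^ (i : ℕ)‖ := by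
              rw [heq, norm_neg]
              exact norm_sum_le _ _
          _ = _ := by simp [abs_of_pos hw0]
      have hshift : (∑ i : Fin q, ‖t i.castSucc‖ * w ^ (i : ℕ)) * w
          ≤ (∑ i : Fin q, ‖t i.castSucc‖) * w ^ q := by
        rw [Finset.sum_mul, Finset.sum_mul]
        refine Finset.sum_le_sum fun i _ => ?_
        rw [mul_assoc, ← pow_succ]
        exact mul_le_mul_of_nonneg_left (pow_le_pow_right₀ hw i.isLt) (norm_nonneg _)
      have hpow : 0 < w ^ q := pow_pos hw0 q
      have h2 : w ^ q * w ≤ (∑ i : Fin q, ‖t i.castSucc‖) * w ^ q := by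
        refine le_trans (mul_le_mul_of_nonneg_right ?_ hw0.le) hshift
        exact le_trans (le_mul_of_one_le_left hpow.le hge) hnorm
      nlinarith
    have hrest : ∀ i : Fin q, t i.castSucc = 0 := by
      refine ih (fun i => t i.castSucc) (fun i => h1 _) ?_ ?_
      · have := norm_nonneg (t (Fin.last q))
        linarith
      · simpa [hlast] using hsum
    intro i
    induction i using Fin.lastCases with
    | last => exact hlast
    | cast i => exact hrest i

lemma pow_add_sum_pos {q : ℕ} (A c : Fin q → ℤ) (hc : ∀ i, c i ^ 2 = A i) :
    0 < (1 + ∑ i, A i ^ 2) ^ q + ∑ i, c i * (1 + ∑ i, A i ^ 2) ^ (i : ℕ) := by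
  set W : ℤ := 1 + ∑ i, A i ^ 2 with hW
  have hW1 : 1 ≤ W := by
    have : 0 ≤ ∑ i, A i ^ 2 := Finset.sum_nonneg fun i _ => sq_nonneg _
    linarith
  have hterm : ∀ i, -(A i ^ 2 * W ^ q) ≤ c i * W ^ (i : ℕ) * W := by
    intro i
    have hp : W ^ ((i : ℕ) + 1) ≤ W ^ q := pow_le_pow_right₀ hW1 i.isLt
    have hp0 : 0 ≤ W ^ ((i : ℕ) + 1) := by positivity
    have hca : -(A i ^ 2) ≤ c i := by
      have h1 : -(c i ^ 2) ≤ c i := by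
        rcases le_or_gt 0 (c i) with h | h <;> nlinarith
      have h2 : A i ≤ A i ^ 2 := by
        have : 0 ≤ A i := hc i ▸ sq_nonneg _
        rcases this.eq_or_lt with h | h <;> nlinarith
      linarith [hc i]
    rw [mul_assoc, ← pow_succ]
    nlinarith [mul_le_mul_of_nonneg_right hca hp0, mul_le_mul_of_nonneg_left hp (sq_nonneg (A i))]
  have hsum : -((W - 1) * W ^ q) ≤ (∑ i, c i * W ^ (i : ℕ)) * W := by
    have hWs : W - 1 = ∑ i, A i ^ 2 := by rw [hW]; ring
    rw [hWs, Finset.sum_mul, Finset.sum_mul, ← Finset.sum_neg_distrib]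
    exact Finset.sum_le_sum fun i _ => hterm i
  have hWq : 0 < W ^ q := by positivity
  have : 0 < (W ^ q + ∑ i, c i * W ^ (i : ℕ)) * W := by nlinarith
  exact pos_of_mul_pos_left this (by linarith)

/-- Rationality of the single number `∑ sᵢ Wⁱ` makes every square root `sᵢ` an integer. -/
lemma exists_int_of_sum_rational {K : Type*} [Field K] [CharZero K] [IsAlgClosed K]
    [Algebra.IsAlgebraic ℚ K] {q : ℕ} (A : Fin q → ℤ) (s : Fin q → K)
    (hs : ∀ i, s i ^ 2 = A i) (r : ℚ)
    (hr : ∑ i, s i * ((1 + ∑ i, A i ^ 2 : ℤ) : K) ^ (i : ℕ)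
      = (r : K)) (i : Fin q) :
    ∃ c : ℤ, s i = c := by
  set W : ℤ := 1 + ∑ i, A i ^ 2 with hW
  let φ : K →ₐ[ℚ] ℂ := IsAlgClosed.lift
  have hφ : ∀ i, ‖φ (s i)‖ ^ 2 = |(A i : ℝ)| := by
    intro i
    rw [← norm_pow, ← map_pow, hs i, map_intCast, Complex.norm_intCast]
  have hge : ∀ i, s i = 0 ∨ 1 ≤ ‖φ (s i)‖ := by
    intro i
    by_cases hA : A i = 0
    · left
      have := hs i
      rw [hA, Int.cast_zero] at this
      exact pow_eq_zero_iff (two_ne_zero) |>.mp this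
    · right
      have h1 : (1 : ℝ) ≤ |(A i : ℝ)| := by exact_mod_cast Int.one_le_abs hA
      rw [← hφ i] at h1
      nlinarith [norm_nonneg (φ (s i))]
  have hle : ∀ i, ‖φ (s i)‖ ≤ (A i : ℝ) ^ 2 := by
    intro i
    rw [← sq_abs, ← hφ i, ← pow_mul]
    rcases hge i with h | h
    · simp [h]
    · exact le_self_pow₀ h (by norm_num)
  have hfix : ∀ g : K ≃ₐ[ℚ] K, ∀ i, g (s i) = s i := by
    intro g
    have hpm : ∀ i, g (s i) = s i ∨ g (s i) = -s i := by
      intro i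
      apply sq_eq_sq_iff_eq_or_eq_neg.mp
      rw [← map_pow, hs i, map_intCast]
    -- The digits `(sᵢ - g sᵢ) / 2` are `0` where `g` fixes `sᵢ` and `sᵢ` where it does not.
    have ht : ∀ i, (s i - g (s i)) / 2 = 0 ∨ (s i - g (s i)) / 2 = s i := by
      intro i
      rcases hpm i with h | h
      · left; rw [h]; simp
      · right; rw [h]; ring
    have hzero : ∀ i, φ ((s i - g (s i)) / 2) = 0 := by
      refine eq_zero_of_sum_mul_pow_eq_zero (W : ℝ) ?_ q _ ?_ ?_ ?_
      · have : 0 ≤ ∑ i, A i ^ 2 := Finset.sum_nonneg fun i _ => sq_nonneg _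
        exact_mod_cast (by linarith : 1 ≤ W)
      · intro i
        rcases ht i with h | h
        · left; rw [h, map_zero]
        · rw [h]
          rcases hge i with h' | h'
          · left; rw [h', map_zero]
          · exact Or.inr h'
      · have hb : ∑ i, ‖φ ((s i - g (s i)) / 2)‖ ≤ ∑ i, (A i : ℝ) ^ 2 := by
          refine Finset.sum_le_sum fun i _ => ?_
          rcases ht i with h | h
          · rw [h, map_zero, norm_zero]; positivity
          · rw [h]; exact hle i
        have : (W : ℝ) = 1 + ∑ i, (A i : ℝ) ^ 2 := by rw [hW]; push_cast; rfl
        linarith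
      · have hg : ∑ i, g (s i) * (W : K) ^ (i : ℕ)
            = (r : K) := by
          have := congrArg g hr
          rw [map_ratCast, map_sum] at this
          simpa using this
        have hd : ∑ i, (s i - g (s i)) / 2 * (W : K) ^ (i : ℕ) = 0 := by
          have : ∑ i, (s i - g (s i)) / 2 * (W : K) ^ (i : ℕ)
              = (∑ i, s i * (W : K) ^ (i : ℕ)
                - ∑ i, g (s i) * (W : K) ^ (i : ℕ)) / 2 := by
            rw [← Finset.sum_sub_distrib, Finset.sum_div]
            exact Finset.sum_congr rfl fun i _ => by ring
          rw [this, hr, hg, sub_self, zero_div]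
        have := congrArg φ hd
        rw [map_sum, map_zero] at this
        rw [← this]
        refine Finset.sum_congr rfl fun i _ => ?_
        rw [map_mul, map_pow, map_intCast, Complex.ofReal_intCast]
    intro i
    have h0 : (s i - g (s i)) / 2 = 0 := (map_eq_zero φ).mp (hzero i)
    have h1 : s i - g (s i) = 0 := by
      rcases div_eq_zero_iff.mp h0 with h | h
      · exact h
      · exact absurd h two_ne_zero
    exact (sub_eq_zero.mp h1).symm
  have : IsAlgClosure ℚ K := ⟨inferInstance, inferInstance⟩
  have : IsGalois ℚ K := IsAlgClosure.isGalois ℚ K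
  have hbot : s i ∈ (⊥ : IntermediateField ℚ (K)) :=
    (InfiniteGalois.mem_bot_iff_fixed (s i)).mpr fun g => hfix g i
  obtain ⟨a, ha⟩ := IntermediateField.mem_bot.mp hbot
  have hsq : a ^ 2 = (A i : ℚ) := by
    apply (algebraMap ℚ K).injective
    rw [map_pow, ha, hs i, map_intCast]
  have hint : IsIntegral ℤ a := by
    refine IsIntegral.of_pow (n := 2) (by norm_num) ?_
    rw [hsq]
    exact isIntegral_algebraMap (R := ℤ) (A := ℚ) (x := A i)
  obtain ⟨c, hc⟩ := IsIntegrallyClosed.isIntegral_iff.mp hint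
  refine ⟨c, ?_⟩
  rw [← ha, ← hc]
  simp

/-- The polynomial `S²n + T² - S²(2R - 1)(T² + W^q + ∑ sᵢ Wⁱ)` with `W = 1 + ∑ Aᵢ²`. The variables
`sᵢ` are indexed by the left summand, and `A₁, …, A_q, S, T, R, n` by the right one. -/
noncomputable def linearForm (q : ℕ) : MvPolynomial (Fin q ⊕ Fin (q + 4)) ℤ :=
  let A : Fin q → MvPolynomial (Fin q ⊕ Fin (q + 4)) ℤ := fun i => X (.inr (Fin.castAdd 4 i))
  let v : Fin 4 → MvPolynomial (Fin q ⊕ Fin (q + 4)) ℤ := fun j => X (.inr (Fin.natAdd q j))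
  let W := 1 + ∑ i, A i ^ 2
  v 0 ^ 2 * v 3 + v 1 ^ 2 - v 0 ^ 2 * (2 * v 2 - 1) *
    (v 1 ^ 2 + W ^ q + ∑ i : Fin q, X (.inl i) * W ^ (i : ℕ))

/-- The zeros of some `M` are the points at which `linearForm` vanishes for some choice of square
roots of the `Aᵢ`. -/
lemma exists_poly (K : Type*) [Field K] [CharZero K] [IsAlgClosed K] (q : ℕ) :
    ∃ M : MvPolynomial (Fin (q + 4)) ℤ,
    ∀ (A : Fin q → ℤ) (S T R n : ℤ), eval (Fin.append A ![S, T, R, n]) M = 0 ↔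
      ∃ s : Fin q → K, (∀ i, s i ^ 2 = A i) ∧
        (S : K) ^ 2 * n + T ^ 2 - S ^ 2 * (2 * R - 1) *
          (T ^ 2 + ((1 + ∑ i, A i ^ 2 : ℤ) : K) ^ q
            + ∑ i, s i * ((1 + ∑ i, A i ^ 2 : ℤ) : K) ^ (i : ℕ)) = 0 := by
  obtain ⟨Q, hQ⟩ := exists_eliminate_sqrts (K := K)
    (Finset.univ.map Function.Embedding.inl) (linearForm q)
  -- Identify the variable that held `sᵢ²` with `Aᵢ`.
  refine ⟨rename (Sum.elim (Fin.castAdd 4) id) Q, fun A S T R n => ?_⟩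
  set a : Fin (q + 4) → ℤ := Fin.append A ![S, T, R, n] with ha
  have hcast : eval a (rename (Sum.elim (Fin.castAdd 4) id) Q) = 0 ↔
      aeval (Sum.elim (fun i => (A i : K)) (fun j => (a j : K)))
        Q = 0 := by
    rw [eval_rename, ← Int.cast_eq_zero (α := K), ← aeval_eq_eval,
      ← eq_intCast (algebraMap ℤ (K)),
      ← aeval_algebraMap_apply]
    have : (algebraMap ℤ (K)) ∘ (a ∘ Sum.elim (Fin.castAdd 4) id)
        = Sum.elim (fun i => (A i : K))
          (fun j => (a j : K)) := by
      funext j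
      rcases j with i | j
      · simp [ha]
      · simp
    rw [this]
  have heval : ∀ s : Fin q → K,
      aeval (Sum.elim s (fun j => (a j : K))) (linearForm q)
      = (S : K) ^ 2 * n + T ^ 2 - S ^ 2 * (2 * R - 1) *
          (T ^ 2 + ((1 + ∑ i, A i ^ 2 : ℤ) : K) ^ q
            + ∑ i, s i * ((1 + ∑ i, A i ^ 2 : ℤ) : K) ^ (i : ℕ)) := by
    intro s
    simp [linearForm, ha, Fin.append_left, Fin.append_right]
  rw [hcast, hQ]
  constructor
  · rintro ⟨y, h1, h2, h3⟩
    refine ⟨fun i => y (.inl i), fun i => ?_, ?_⟩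
    · exact h1 (.inl i) (by simp)
    · rw [← heval]
      convert h3 using 3
      funext j
      rcases j with i | j
      · rfl
      · exact (h2 (.inr j) (by simp)).symm
  · rintro ⟨s, h1, h2⟩
    refine ⟨Sum.elim s (fun j => (a j : K)), ?_, ?_, ?_⟩
    · intro j hj
      rcases j with i | j
      · exact h1 i
      · simp at hj
    · intro j hj
      rcases j with i | j
      · simp at hj
      · rfl
    · rw [heval, h2]

theorem relation_combining (q : ℕ) (hq : 0 < q) :
    ∃ M : MvPolynomial (Fin (q + 4)) ℤ,
      ∀ (A : Fin q → ℤ) (S T R : ℤ), S ≠ 0 →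
        ((S ∣ T ∧ R > 0 ∧ ∀ i : Fin q, IsSquare (A i)) ↔
          ∃ n : ℤ, n ≥ 0 ∧ eval (Fin.append A ![S, T, R, n]) M = 0) := by
  obtain ⟨M, hM⟩ := exists_poly (AlgebraicClosure ℚ) q
  refine ⟨M, fun A S T R hS => ?_⟩
  simp only [hM]
  have hS2 : 0 < S ^ 2 := by positivity
  constructor
  · rintro ⟨⟨u, rfl⟩, hR, hsq⟩
    choose c hc using hsq
    have hc2 : ∀ i, c i ^ 2 = A i := fun i => by rw [hc i, sq]
    have hpos := pow_add_sum_pos A c hc2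
    set W : ℤ := 1 + ∑ i, A i ^ 2 with hW
    refine ⟨(2 * R - 1) * ((S * u) ^ 2 + W ^ q + ∑ i, c i * W ^ (i : ℕ)) - u ^ 2, ?_,
      fun i => (c i : AlgebraicClosure ℚ), fun i => by rw [← hc2 i, Int.cast_pow], ?_⟩
    · have h1 : u ^ 2 ≤ (S * u) ^ 2 := by
        rw [mul_pow]
        exact le_mul_of_one_le_left (sq_nonneg u) hS2
      have h2 : (S * u) ^ 2 + W ^ q + ∑ i, c i * W ^ (i : ℕ)
          ≤ (2 * R - 1) * ((S * u) ^ 2 + W ^ q + ∑ i, c i * W ^ (i : ℕ)) :=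
        le_mul_of_one_le_left (by linarith [sq_nonneg (S * u)]) (by linarith)
      linarith
    · push_cast
      ring
  · rintro ⟨n, hn, s, hs, h0⟩
    have hR0 : 2 * R - 1 ≠ 0 := by omega
    -- The `ℚ`-algebra structures on the closure given by its construction and by its
    -- characteristic are equal, but not definitionally so for instance search.
    have : Algebra.IsAlgebraic ℚ (AlgebraicClosure ℚ) := by
      convert AlgebraicClosure.isAlgebraic ℚ using 1
      · rfl
      · exact Subsingleton.elim _ _
    have hrat := exists_int_of_sum_rational A s hs
      ((S ^ 2 * n + T ^ 2 : ℚ) / (S ^ 2 * (2 * R - 1)) - T ^ 2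
        - ((1 + ∑ i, A i ^ 2 : ℤ) : ℚ) ^ q) (by
      have hS' : (S : AlgebraicClosure ℚ) ≠ 0 := by exact_mod_cast hS
      have hR' : (2 * R - 1 : AlgebraicClosure ℚ) ≠ 0 := by exact_mod_cast hR0
      simp only [Rat.cast_sub, Rat.cast_div, Rat.cast_add, Rat.cast_mul, Rat.cast_pow,
        Rat.cast_intCast, Rat.cast_ofNat, Rat.cast_one]
      generalize ((1 + ∑ i, A i ^ 2 : ℤ) : AlgebraicClosure ℚ) = w at h0 ⊢
      generalize ∑ i, s i * w ^ (i : ℕ) = x at h0 ⊢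
      rw [sub_sub, eq_sub_iff_add_eq, eq_div_iff (mul_ne_zero (pow_ne_zero 2 hS') hR')]
      linear_combination -h0)
    choose c hc using hrat
    have hc2 : ∀ i, c i ^ 2 = A i := fun i => by
      have := hs i
      rw [hc i] at this
      exact_mod_cast this
    have hpos := pow_add_sum_pos A c hc2
    simp only [hc] at h0
    norm_cast at h0
    set W : ℤ := 1 + ∑ i, A i ^ 2 with hW
    refine ⟨?_, ?_, fun i => ⟨c i, by rw [← hc2 i, sq]⟩⟩
    · rw [← Int.pow_dvd_pow_iff (n := 2) two_ne_zero]
      exact ⟨(2 * R - 1) * (T ^ 2 + W ^ q + ∑ i, c i * W ^ (i : ℕ)) - n, by linear_combination h0⟩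
    · by_contra hR
      have hV : 0 < T ^ 2 + W ^ q + ∑ i, c i * W ^ (i : ℕ) := by linarith [sq_nonneg T]
      have hneg : S ^ 2 * (2 * R - 1) * (T ^ 2 + W ^ q + ∑ i, c i * W ^ (i : ℕ)) < 0 :=
        mul_neg_of_neg_of_pos (mul_neg_of_pos_of_neg hS2 (by linarith)) hV
      linarith [sq_nonneg T, mul_nonneg hS2.le hn]
end

section
/- For every natural number n there exist integers x, y, z such that n = x² + y² + z² + z. -/
/-!
The identity `n = x² + y² + z² + z` amounts to `4n + 1 = (2x)² + (2y)² + (2z + 1)²`, so the claim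
is that every `N ≡ 1 (mod 4)` is a sum of three integer squares: exactly one of those squares is
then odd. This follows Dirichlet's argument.

* `isSumThreeSq_of_form`: a positive definite integral ternary quadratic form (with even cross
  terms) of determinant `1` is equivalent to `x² + y² + z²`, so whatever it represents is a sum of
  three squares. The reduction descends on the first leading minor, then on the second: a form on
  which neither can be decreased satisfies `3B² ≤ 4a` and `3a² ≤ 4B` for these minors `a` and `B`,
  which forces `a = B = 1`.
* `isSumThreeSq_of_mod_four`: the form with matrix `!![s, t, 1; t, 2p, 0; 1, 0, N]` represents `N`,
  and has determinant `1` as soon as `2ps = t² + b` and `2p = bN - 1`. Dirichlet's theorem on primes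
  in arithmetic progressions gives a prime `p` with `b ≡ 3 (mod 8)`, and then `-b` is a square
  modulo `p` by quadratic reciprocity, since `(-b/p) = (p/b) = (-2p/b) = (1/b) = 1`.
-/

/-- `N` is a sum of three squares of integers. -/
def IsSumThreeSq (N : ℤ) : Prop := ∃ x y z : ℤ, N = x ^ 2 + y ^ 2 + z ^ 2

/-- Centred division: a translate of `G` by a multiple of `B` has absolute value at most `B / 2`. -/
lemma exists_centred_shift (G B : ℤ) (hB : 0 < B) :
    ∃ k : ℤ, -B ≤ 2 * (G + k * B) ∧ 2 * (G + k * B) ≤ B := by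
  have h1 := Int.emod_add_mul_ediv (2 * G + B) (2 * B)
  have h2 := Int.emod_nonneg (2 * G + B) (by omega : 2 * B ≠ 0)
  have h3 := Int.emod_lt_of_pos (2 * G + B) (by omega : 0 < 2 * B)
  refine ⟨-((2 * G + B) / (2 * B)), ?_, ?_⟩ <;> nlinarith

/-- The form `a x² + b y² + c z² + 2d yz + 2e xz + 2f xy` with `a > 0`, second leading minor
`B = ab - f² > 0` and determinant `1` represents only sums of three squares. The minors are indexed
by the naturals `A` and `B` for the lexicographic descent. -/
lemma isSumThreeSq_of_form_aux (A : ℕ) : ∀ (B : ℕ) (a b c d e f x y z : ℤ), a = A →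
    a * b - f ^ 2 = B → 0 < a → 0 < a * b - f ^ 2 →
    a * b * c + 2 * d * e * f - a * d ^ 2 - b * e ^ 2 - c * f ^ 2 = 1 →
    IsSumThreeSq (a * x ^ 2 + b * y ^ 2 + c * z ^ 2 + 2 * d * y * z + 2 * e * x * z
      + 2 * f * x * y) := by
  induction A using Nat.strong_induction_on with
  | _ A ihA =>
  intro B
  induction B using Nat.strong_induction_on with
  | _ B ihB =>
  intro a b c d e f x y z hA hB ha hBpos hdet
  -- Substitute `y + k z` for `y`, making the minor `a d - e f` at most `B / 2` in absolute value.
  obtain ⟨k, hk1, hk2⟩ := exists_centred_shift (a * d - e * f) (a * b - f ^ 2) hBpos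
  obtain ⟨c', hc'⟩ : ∃ c', c' = c + 2 * d * k + b * k ^ 2 := ⟨_, rfl⟩
  obtain ⟨d', hd'⟩ : ∃ d', d' = d + b * k := ⟨_, rfl⟩
  obtain ⟨e', he'⟩ : ∃ e', e' = e + f * k := ⟨_, rfl⟩
  obtain ⟨y', hy'⟩ : ∃ y', y' = y - k * z := ⟨_, rfl⟩
  have hG : a * d - e * f + k * (a * b - f ^ 2) = a * d' - e' * f := by subst_vars; ring
  rw [hG] at hk1 hk2
  have hdet' : a * b * c' + 2 * d' * e' * f - a * d' ^ 2 - b * e' ^ 2 - c' * f ^ 2 = 1 := by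
    rw [← hdet, hc', hd', he']; ring
  have hval : a * x ^ 2 + b * y ^ 2 + c * z ^ 2 + 2 * d * y * z + 2 * e * x * z + 2 * f * x * y
      = a * x ^ 2 + b * y' ^ 2 + c' * z ^ 2 + 2 * d' * y' * z + 2 * e' * x * z
        + 2 * f * x * y' := by
    rw [hc', hd', he', hy']; ring
  rw [hval]
  clear hval hG hdet hc' hd' he' hy' c d e y
  -- The complementary minors satisfy `B C - G² = a`, the determinant being `1`.
  have hBC : (a * b - f ^ 2) * (a * c' - e' ^ 2) = a + (a * d' - e' * f) ^ 2 := by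
    linear_combination a * hdet'
  have hCpos : 0 < a * c' - e' ^ 2 := by
    have : 0 < (a * b - f ^ 2) * (a * c' - e' ^ 2) := by rw [hBC]; positivity
    exact (pos_iff_pos_of_mul_pos this).1 hBpos
  by_cases hCB : a * c' - e' ^ 2 < a * b - f ^ 2
  · have := ihB (a * c' - e' ^ 2).toNat (by omega) a c' b d' f e' x z y' hA (by omega) ha hCpos
      (by linarith)
    convert this using 1
    ring
  push Not at hCB
  have h3B : 3 * (a * b - f ^ 2) ^ 2 ≤ 4 * a := by nlinarith
  -- Substitute `x + l y` for `x`, making `f` at most `a / 2` in absolute value.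
  obtain ⟨l, hl1, hl2⟩ := exists_centred_shift f a ha
  obtain ⟨f', hf'⟩ : ∃ f', f' = f + l * a := ⟨_, rfl⟩
  obtain ⟨b', hb'⟩ : ∃ b', b' = b + 2 * f * l + a * l ^ 2 := ⟨_, rfl⟩
  obtain ⟨d, hd⟩ : ∃ d, d = d' + e' * l := ⟨_, rfl⟩
  obtain ⟨x', hx'⟩ : ∃ x', x' = x - l * y' := ⟨_, rfl⟩
  have hB' : a * b - f ^ 2 = a * b' - f' ^ 2 := by rw [hb', hf']; ring
  have hG' : a * d' - e' * f = a * d - e' * f' := by rw [hd, hf']; ring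
  have hdet : a * b' * c' + 2 * d * e' * f' - a * d ^ 2 - b' * e' ^ 2 - c' * f' ^ 2 = 1 := by
    rw [← hdet', hb', hd, hf']; ring
  have hval : a * x ^ 2 + b * y' ^ 2 + c' * z ^ 2 + 2 * d' * y' * z + 2 * e' * x * z
        + 2 * f * x * y'
      = a * x' ^ 2 + b' * y' ^ 2 + c' * z ^ 2 + 2 * d * y' * z + 2 * e' * x' * z
        + 2 * f' * x' * y' := by
    rw [hb', hd, hf', hx']; ring
  rw [hval]
  rw [← hf'] at hl1 hl2
  rw [hB'] at hBpos h3B hk1 hk2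
  rw [hG'] at hk1 hk2
  clear hval hb' hd hf' hx' hCB hCpos hBC hdet' hG' x d'
  have hb'pos : 0 < b' := by
    have : 0 < a * b' := by nlinarith
    exact (pos_iff_pos_of_mul_pos this).1 ha
  by_cases hba : b' < a
  · have := ihA b'.toNat (by omega) (b' * a - f' ^ 2).toNat b' a c' e' d f' y' x' z (by omega)
      (by rw [Int.toNat_of_nonneg]; linarith) hb'pos (by linarith) (by linarith)
    convert this using 1
    ring
  push Not at hba
  -- The form is reduced: `3B² ≤ 4a` and `3a² ≤ 4B`, hence `a = B = 1`.
  have h3a : 3 * a ^ 2 ≤ 4 * (a * b' - f' ^ 2) := by nlinarith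
  generalize hBB : a * b' - f' ^ 2 = M at *
  have ha1 : a = 1 := by
    have : a ≤ 1 := by
      by_contra! h
      rcases le_total a M with h' | h' <;> nlinarith
    omega
  subst ha1
  have hM : M = 1 := by nlinarith
  subst hM
  obtain rfl : f' = 0 := by omega
  obtain rfl : b' = 1 := by linarith
  obtain rfl : d = 0 := by omega
  refine ⟨x' + e' * z, y', z, ?_⟩
  linear_combination z ^ 2 * hdet

/-- A positive definite integral ternary form of determinant `1` represents only sums of three
squares. -/
lemma isSumThreeSq_of_form (a b c d e f x y z : ℤ) (ha : 0 < a) (hB : 0 < a * b - f ^ 2)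
    (hdet : a * b * c + 2 * d * e * f - a * d ^ 2 - b * e ^ 2 - c * f ^ 2 = 1) :
    IsSumThreeSq (a * x ^ 2 + b * y ^ 2 + c * z ^ 2 + 2 * d * y * z + 2 * e * x * z
      + 2 * f * x * y) :=
  isSumThreeSq_of_form_aux a.toNat (a * b - f ^ 2).toNat a b c d e f x y z (by omega) (by omega)
    ha hB hdet

/-- Quadratic reciprocity as applied to `b` and `p`: if `b ≡ 3 (mod 8)` and
`2p ≡ -1 (mod b)`, then `(-b/p) = (p/b) = (-2/b)(p/b) = (-2p/b) = 1`. -/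
lemma jacobiSym_neg_eq_one (b p k : ℕ) (hb : b % 8 = 3) (hp : Odd p) (h : 2 * p + 1 = b * k) :
    jacobiSym (-b) p = 1 := by
  have hbo : Odd b := Nat.odd_iff.2 (by omega)
  have h2 : jacobiSym (-2) b = 1 := by
    rw [jacobiSym.at_neg_two hbo, ZMod.χ₈'_nat_eq_if_mod_eight]
    simp [hb, show b % 2 = 1 by omega]
  have hpb : jacobiSym p b = 1 := by
    have h3 : jacobiSym (-2 * p) b = 1 := by
      rw [jacobiSym.mod_left' (a₂ := 1) (b := b), jacobiSym.one_left]
      refine Int.ModEq.symm ((Int.modEq_iff_dvd).2 ⟨-k, ?_⟩)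
      have : (2 * p + 1 : ℤ) = b * k := by exact_mod_cast h
      linarith
    rwa [jacobiSym.mul_left, h2, one_mul] at h3
  rw [jacobiSym.neg _ hp, ZMod.χ₄_nat_eq_if_mod_four]
  rcases Nat.odd_mod_four_iff.1 (Nat.odd_iff.1 hp) with h4 | h4
  · rw [← jacobiSym.quadratic_reciprocity_one_mod_four h4 hbo, hpb]
    simp [h4, Nat.odd_iff.1 hp]
  · rw [jacobiSym.quadratic_reciprocity_three_mod_four (by omega) h4, hpb]
    simp [h4, Nat.odd_iff.1 hp]

/-- Legendre's three-square theorem for numbers congruent to `1` modulo `4`. -/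
lemma isSumThreeSq_of_mod_four (m : ℕ) : IsSumThreeSq (4 * m + 1) := by
  -- Dirichlet: a prime `p = 4Nv + (3N - 1) / 2`, where `N = 4m + 1`, so `2p + 1 = (8v + 3) N`.
  have hcop : (6 * m + 1).Coprime (4 * (4 * m + 1)) := by
    rw [← Nat.isCoprime_iff_coprime]
    have h1 : IsCoprime ((6 * m + 1 : ℕ) : ℤ) ((4 * m + 1 : ℕ) : ℤ) :=
      ⟨-2, 3, by push_cast; ring⟩
    have h2 : IsCoprime ((6 * m + 1 : ℕ) : ℤ) (2 : ℤ) := ⟨1, -(3 * m), by push_cast; ring⟩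
    have := (h2.mul_right h2).mul_right h1
    push_cast at this ⊢
    exact this
  obtain ⟨p, hgt, hp, hmod⟩ :=
    Nat.forall_exists_prime_gt_and_modEq (6 * m + 1) (by positivity) hcop
  obtain ⟨v, hv⟩ : ∃ v, p = 6 * m + 1 + 4 * (4 * m + 1) * v := by
    obtain ⟨v, hv⟩ := (Nat.modEq_iff_dvd' hgt.le).1 hmod.symm
    exact ⟨v, by omega⟩
  have hpodd : Odd p := ⟨3 * m + 2 * (4 * m + 1) * v, by rw [hv]; ring⟩
  obtain ⟨b, hb⟩ : ∃ b, b = 8 * v + 3 := ⟨_, rfl⟩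
  have h2p : 2 * p + 1 = b * (4 * m + 1) := by rw [hv, hb]; ring
  have hJ := jacobiSym_neg_eq_one b p _ (by omega) hpodd h2p
  have : Fact p.Prime := ⟨hp⟩
  obtain ⟨r, hr⟩ := ZMod.isSquare_of_jacobiSym_eq_one hJ
  obtain ⟨t₀, ht₀⟩ := ZMod.intCast_surjective r
  have hdvd₀ : (p : ℤ) ∣ t₀ ^ 2 + b := by
    rw [← ZMod.intCast_zmod_eq_zero_iff_dvd]
    push_cast at hr ⊢
    rw [ht₀, sq, ← hr]
    ring
  -- As `p` is odd, a square root `t` of `-b` modulo `p` may be chosen odd.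
  obtain ⟨t, hodd, hdvd⟩ : ∃ t : ℤ, Odd t ∧ (p : ℤ) ∣ t ^ 2 + b := by
    rcases Int.even_or_odd t₀ with he | ho
    · refine ⟨t₀ + p, he.add_odd (by exact_mod_cast hpodd), ?_⟩
      have : (t₀ + p) ^ 2 + b = (t₀ ^ 2 + b) + (p : ℤ) * (2 * t₀ + p) := by ring
      rw [this]
      exact dvd_add hdvd₀ (dvd_mul_right _ _)
    · exact ⟨t₀, ho, hdvd₀⟩
  have h2 : (2 : ℤ) ∣ t ^ 2 + b := by
    have hbo : Odd (b : ℤ) := ⟨4 * v + 1, by rw [hb]; push_cast; ring⟩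
    exact (hodd.pow.add_odd hbo).two_dvd
  have hcop2 : IsCoprime (2 : ℤ) p := by
    obtain ⟨j, hj⟩ := hpodd
    exact ⟨-j, 1, by rw [hj]; push_cast; ring⟩
  obtain ⟨s, hs⟩ := hcop2.mul_dvd h2 hdvd
  have h2pz : (2 * p + 1 : ℤ) = b * (4 * m + 1) := by exact_mod_cast h2p
  have hbpos : (0 : ℤ) < b := by rw [hb]; positivity
  have hppos : (0 : ℤ) < 2 * p := by have := hp.pos; positivity
  have hspos : 0 < s := by
    have : 0 < 2 * (p : ℤ) * s := by rw [← hs]; positivity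
    exact (pos_iff_pos_of_mul_pos this).1 hppos
  have := isSumThreeSq_of_form s (2 * p) (4 * m + 1) 0 1 t 0 0 1 hspos (by linarith)
    (by linear_combination -(4 * m + 1 : ℤ) * hs - h2pz)
  simpa using this

theorem three_squares (n : ℕ) : ∃ x y z : ℤ, (n : ℤ) = x ^ 2 + y ^ 2 + z ^ 2 + z := by
  obtain ⟨x, y, z, h⟩ := isSumThreeSq_of_mod_four n
  -- Modulo `4`, exactly one of the three squares is odd.
  rcases Int.even_or_odd' x with ⟨x, rfl | rfl⟩ <;> rcases Int.even_or_odd' y with ⟨y, rfl | rfl⟩ <;>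
    rcases Int.even_or_odd' z with ⟨z, rfl | rfl⟩ <;> ring_nf at h
  · omega
  · exact ⟨x, y, z, by linarith⟩
  · exact ⟨x, z, y, by linarith⟩
  · omega
  · exact ⟨y, z, x, by linarith⟩
  · omega
  · omega
  · omega
end

section
/- For all integers x and y, the conjunction (x > 0 and y ≠ 0) holds if and only if there exist integers a, b, c such that x·y² = a² + b² + c² + c + 1. -/
/-!
The right-hand side is `≥ 1`, because `c ^ 2 + c ≥ 0` for an integer `c`; this forces `x > 0` and
`y ≠ 0`. Conversely, put `m = x * y ^ 2 - 1 ≥ 0`. Multiplying by four, the equation becomes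
`4 * m + 1 = (2 * a) ^ 2 + (2 * b) ^ 2 + (2 * c + 1) ^ 2`, and modulo `4` any representation of
`4 * m + 1` as a sum of three squares has exactly one odd term. So the content is the case
`n ≡ 1 (mod 4)` of the three squares theorem, proved here by Dirichlet's method.

* `exists_prime_isSquare`: by Dirichlet's theorem on primes in arithmetic progressions there is a
  prime `p` with `2 * p = d * n - 1` and `d ≡ 3 (mod 8)`; quadratic reciprocity for the Jacobi
  symbol then gives `(-d / p) = (-2 * p / d) = (1 / d) = 1`, so `-d` is a square modulo `2 * p`.
* If `t ^ 2 + d = 2 * p * w`, the ternary form with matrix `!![w, t, 1; t, 2 * p, 0; 1, 0, n]` is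
  positive definite of determinant `1`, and it takes the value `n` at `(0, 0, 1)`.
* `ternary_sum_three_squares`: every value of a positive definite integral ternary form of
  determinant `1` is a sum of three squares. This is Gauss's reduction: the binary form attached
  to the leading coefficient is reduced by `binary_reduce`, which makes the leading coefficient
  decrease until it is `1`, where the form visibly splits into squares.
-/

/-- Division with a remainder of least absolute value. -/
lemma exists_translate (a f : ℤ) (ha : 0 < a) :
    ∃ k : ℤ, 4 * (f + k * a) ^ 2 ≤ a ^ 2 := by
  refine ⟨-((2 * f + a) / (2 * a)), ?_⟩
  have h1 := Int.emod_add_mul_ediv (2 * f + a) (2 * a)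
  have h2 := Int.emod_nonneg (2 * f + a) (show 2 * a ≠ 0 by omega)
  have h3 := Int.emod_lt_of_pos (2 * f + a) (show 0 < 2 * a by omega)
  set q := (2 * f + a) / (2 * a)
  have h4 : 0 ≤ 2 * (f + -q * a) + a := by linarith
  have h5 : 0 ≤ a - 2 * (f + -q * a) := by linarith
  nlinarith [mul_nonneg h4 h5]

/-- Lagrange's reduction: a positive definite binary form with matrix `!![A, B; B, C]` and
determinant `D` takes, at the first column of some matrix of determinant `1`, a positive value
`A'` with `3 * A' ^ 2 ≤ 4 * D`. The bound `N` on `A` only serves the induction. -/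
lemma binary_reduce (N : ℕ) : ∀ A B C : ℤ, 0 < A → A ≤ N → 0 < A * C - B ^ 2 →
    ∃ p q r s : ℤ, p * s - q * r = 1 ∧ 0 < A * p ^ 2 + 2 * B * p * r + C * r ^ 2 ∧
      3 * (A * p ^ 2 + 2 * B * p * r + C * r ^ 2) ^ 2 ≤ 4 * (A * C - B ^ 2) := by
  induction N with
  | zero => intro A B C h1 h2; push_cast at h2; omega
  | succ N ih =>
    intro A B C hA hN hD
    obtain ⟨k, hk⟩ := exists_translate A B hA
    have hD' : A * (A * k ^ 2 + 2 * B * k + C) = (A * C - B ^ 2) + (B + k * A) ^ 2 := by ring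
    by_cases hC : A ≤ A * k ^ 2 + 2 * B * k + C
    · refine ⟨1, 0, 0, 1, by norm_num, by simpa using hA, ?_⟩
      have := mul_le_mul_of_nonneg_left hC hA.le
      ring_nf at *
      linarith
    · have hpos : 0 < A * k ^ 2 + 2 * B * k + C := by
        by_contra h
        nlinarith [sq_nonneg (B + k * A)]
      obtain ⟨p, q, r, s, h1, h2, h3⟩ := ih (A * k ^ 2 + 2 * B * k + C) (-(B + k * A)) A hpos
        (by push_cast at hN; omega) (by linarith)
      have e : A * (k * p - r) ^ 2 + 2 * B * (k * p - r) * p + C * p ^ 2 =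
        (A * k ^ 2 + 2 * B * k + C) * p ^ 2 + 2 * -(B + k * A) * p * r + A * r ^ 2 := by ring
      refine ⟨k * p - r, k * q - s, p, q, by linarith, by rw [e]; exact h2, ?_⟩
      rw [e]
      linarith

/-- The integral ternary quadratic form with matrix `!![a, f, e; f, b, d; e, d, c]`. -/
def ternary (a b c d e f x y z : ℤ) : ℤ :=
  a * x ^ 2 + b * y ^ 2 + c * z ^ 2 + 2 * d * y * z + 2 * e * x * z + 2 * f * x * y

/-- Every value of a positive definite integral ternary form of determinant `1` is a sum of three
squares. Positive definiteness is expressed by the leading principal minors; the bound `N` on the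
leading coefficient only serves the induction. -/
lemma ternary_sum_three_squares (N : ℕ) : ∀ a b c d e f : ℤ, 0 < a → a ≤ N →
    0 < a * b - f ^ 2 →
    a * b * c + 2 * d * e * f - a * d ^ 2 - b * e ^ 2 - c * f ^ 2 = 1 →
    ∀ x y z : ℤ, ∃ u v w : ℤ, ternary a b c d e f x y z = u ^ 2 + v ^ 2 + w ^ 2 := by
  induction N with
  | zero => intro a b c d e f h1 h2; push_cast at h2; omega
  | succ N ih =>
    intro a b c d e f ha hN hM hdet x y z
    have hdisc : (a * b - f ^ 2) * (a * c - e ^ 2) - (a * d - e * f) ^ 2 = a := by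
      linear_combination a * hdet
    -- Completing the square in `a * ternary` leaves a binary form of determinant `a`.
    obtain ⟨p, q, r, s, hps, hA, hA3⟩ := binary_reduce (a * b - f ^ 2).toNat
      (a * b - f ^ 2) (a * d - e * f) (a * c - e ^ 2) hM (by omega) (by omega)
    rw [hdisc] at hA3
    -- The coordinates `Y`, `Z` of `(y, z)` in the reduced basis.
    obtain ⟨Y, Z, hy, hz⟩ : ∃ Y Z : ℤ, y = p * Y + q * Z ∧ z = r * Y + s * Z :=
      ⟨s * y - q * z, -r * y + p * z, by linear_combination -y * hps,
        by linear_combination -z * hps⟩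
    obtain ⟨b₁, hb₁⟩ : ∃ t, t = b * p ^ 2 + 2 * d * p * r + c * r ^ 2 := ⟨_, rfl⟩
    obtain ⟨c₁, hc₁⟩ : ∃ t, t = b * q ^ 2 + 2 * d * q * s + c * s ^ 2 := ⟨_, rfl⟩
    obtain ⟨d₁, hd₁⟩ : ∃ t, t = b * p * q + d * (p * s + q * r) + c * r * s := ⟨_, rfl⟩
    obtain ⟨f₁, hf₁⟩ : ∃ t, t = f * p + e * r := ⟨_, rfl⟩
    obtain ⟨e₁, he₁⟩ : ∃ t, t = f * q + e * s := ⟨_, rfl⟩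
    have hA' : (a * b - f ^ 2) * p ^ 2 + 2 * (a * d - e * f) * p * r + (a * c - e ^ 2) * r ^ 2
        = a * b₁ - f₁ ^ 2 := by
      rw [hb₁, hf₁]; ring
    rw [hA'] at hA hA3
    have hdet₁ : a * b₁ * c₁ + 2 * d₁ * e₁ * f₁ - a * d₁ ^ 2 - b₁ * e₁ ^ 2 - c₁ * f₁ ^ 2 = 1 := by
      have : a * b₁ * c₁ + 2 * d₁ * e₁ * f₁ - a * d₁ ^ 2 - b₁ * e₁ ^ 2 - c₁ * f₁ ^ 2 =
          (p * s - q * r) ^ 2 *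
          (a * b * c + 2 * d * e * f - a * d ^ 2 - b * e ^ 2 - c * f ^ 2) := by
        rw [hb₁, hc₁, hd₁, hf₁, he₁]; ring
      rw [this, hps, hdet]; norm_num
    have hT : ternary a b c d e f x y z = ternary a b₁ c₁ d₁ e₁ f₁ x Y Z := by
      rw [hb₁, hc₁, hd₁, hf₁, he₁, hy, hz]; unfold ternary; ring
    rw [hT]
    clear hT hA' hb₁ hc₁ hd₁ he₁ hf₁ hy hz hdisc hdet hM hps
    rcases eq_or_lt_of_le (show 1 ≤ a from ha) with h1 | h1
    · -- For `a = 1` the reduced binary form has determinant `1` and leading coefficient `1`.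
      subst h1
      have hm : 1 * b₁ - f₁ ^ 2 = 1 := by nlinarith
      have hb : b₁ = 1 + f₁ ^ 2 := by linarith
      subst hb
      refine ⟨x + f₁ * Y + e₁ * Z, Y + (d₁ - e₁ * f₁) * Z, Z, ?_⟩
      unfold ternary
      linear_combination Z ^ 2 * hdet₁
    · obtain ⟨k, hk⟩ := exists_translate a f₁ ha
      have hminor : a * (b₁ + 2 * k * f₁ + k ^ 2 * a) =
        (a * b₁ - f₁ ^ 2) + (f₁ + k * a) ^ 2 := by ring
      -- From `3 * A' ^ 2 ≤ 4 * a` and `a ≥ 2`, the minor `A'` is less than `3 * a ^ 2 / 4`.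
      have hsmall : 4 * (a * b₁ - f₁ ^ 2) < 3 * a ^ 2 := by
        generalize a * b₁ - f₁ ^ 2 = A at *
        have h8 : 8 ≤ a ^ 3 := by
          have := pow_le_pow_left₀ (by norm_num) (show (2 : ℤ) ≤ a by omega) 3
          linarith
        by_contra hcon
        have h9 : (3 * a ^ 2) ^ 2 ≤ (4 * A) ^ 2 :=
          pow_le_pow_left₀ (by positivity) (by linarith) 2
        nlinarith
      have hlt : b₁ + 2 * k * f₁ + k ^ 2 * a < a := by
        by_contra hcon
        nlinarith
      have hpos : 0 < b₁ + 2 * k * f₁ + k ^ 2 * a := by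
        by_contra hcon
        nlinarith [sq_nonneg (f₁ + k * a)]
      obtain ⟨u, v, w, h⟩ := ih (b₁ + 2 * k * f₁ + k ^ 2 * a) a c₁ e₁ (d₁ + k * e₁) (f₁ + k * a)
        hpos (by push_cast at hN; omega) (by linarith) (by linear_combination hdet₁)
        Y (x - k * Y) Z
      refine ⟨u, v, w, ?_⟩
      rw [← h]
      unfold ternary
      ring

open scoped NumberTheorySymbols in
/-- For `n = 4 * m + 1` there are `d = 8 * j + 3` and a prime `p` with `2 * p = d * n - 1` such
that `-d` is a square modulo `p`. -/
lemma exists_prime_isSquare (m : ℕ) : ∃ p j : ℕ, p.Prime ∧ p % 2 = 1 ∧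
    2 * p + 1 = (8 * j + 3) * (4 * m + 1) ∧
    IsSquare (((-((8 * j + 3 : ℕ) : ℤ) : ℤ)) : ZMod p) := by
  have hcop : (6 * m + 1).Coprime (16 * m + 4) := by
    rw [show 16 * m + 4 = 2 ^ 2 * (4 * m + 1) by ring]
    refine Nat.Coprime.mul_right (Nat.Coprime.pow_right 2 ?_) ?_
    · exact Nat.coprime_two_right.mpr ⟨3 * m, by ring⟩
    · rw [← Nat.isCoprime_iff_coprime]
      exact ⟨-2, 3, by push_cast; ring⟩
  obtain ⟨p, hgt, hp, hmod⟩ :=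
    Nat.forall_exists_prime_gt_and_modEq (6 * m + 1) (show 16 * m + 4 ≠ 0 by omega) hcop
  obtain ⟨j, hj⟩ := (Nat.modEq_iff_dvd' hgt.le).mp hmod.symm
  have hpj : p = (16 * m + 4) * j + (6 * m + 1) := by omega
  have hodd : p % 2 = 1 := by
    have : p = 2 * ((8 * m + 2) * j + 3 * m) + 1 := by rw [hpj]; ring
    omega
  have h2p : 2 * p + 1 = (8 * j + 3) * (4 * m + 1) := by rw [hpj]; ring
  refine ⟨p, j, hp, hodd, h2p, ?_⟩
  have := Fact.mk hp
  apply ZMod.isSquare_of_jacobiSym_eq_one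
  obtain ⟨d, hd⟩ : ∃ d, d = 8 * j + 3 := ⟨_, rfl⟩
  rw [← hd] at h2p ⊢
  have hdo : Odd d := ⟨4 * j + 1, by omega⟩
  have hpo : Odd p := Nat.odd_iff.mpr hodd
  have hrec : J(-(d : ℤ) | p) = J((p : ℤ) | d) := by
    rw [jacobiSym.neg _ hpo]
    rcases Nat.odd_mod_four_iff.mp hodd with h | h
    · rw [ZMod.χ₄_nat_one_mod_four h, one_mul, jacobiSym.quadratic_reciprocity_one_mod_four' hdo h]
    · rw [ZMod.χ₄_nat_three_mod_four h,
        jacobiSym.quadratic_reciprocity_three_mod_four (by omega) h]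
      ring
  have hneg2 : J(-2 | d) = 1 := by
    rw [jacobiSym.at_neg_two hdo, ZMod.χ₈'_nat_eq_if_mod_eight]
    have h8 : d % 8 = 3 := by omega
    have h2 : d % 2 = 1 := by omega
    simp [h8, h2]
  have hone : J(-2 * (p : ℤ) | d) = 1 := by
    rw [← jacobiSym.one_left d]
    apply jacobiSym.mod_left'
    apply Int.ModEq.symm
    rw [Int.modEq_iff_dvd]
    refine ⟨-(4 * m + 1), ?_⟩
    have : (2 * p + 1 : ℤ) = d * (4 * m + 1) := by exact_mod_cast h2p
    linear_combination -this
  rw [jacobiSym.mul_left, hneg2, one_mul] at hone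
  rw [hrec, hone]

/-- The three squares theorem for `n ≡ 1 (mod 4)`. -/
lemma sum_three_squares_of_one_mod_four (m : ℕ) :
    ∃ u v w : ℤ, (4 * m + 1 : ℤ) = u ^ 2 + v ^ 2 + w ^ 2 := by
  obtain ⟨p, j, hp, hodd, h2p, hsq⟩ := exists_prime_isSquare m
  have h2p' : (2 * p + 1 : ℤ) = (8 * j + 3) * (4 * m + 1) := by exact_mod_cast h2p
  have := Fact.mk hp
  obtain ⟨t₀, ht₀⟩ := hsq
  obtain ⟨t₁, rfl⟩ := ZMod.intCast_surjective t₀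
  have hdvd : (p : ℤ) ∣ t₁ ^ 2 + (8 * j + 3) := by
    rw [← ZMod.intCast_zmod_eq_zero_iff_dvd]
    push_cast at ht₀ ⊢
    linear_combination -ht₀
  -- Adding the odd number `p` if necessary makes the square root of `-d` odd.
  obtain ⟨t, hto, hdvd⟩ : ∃ t : ℤ, t % 2 = 1 ∧ (p : ℤ) ∣ t ^ 2 + (8 * j + 3) := by
    rcases Int.emod_two_eq_zero_or_one t₁ with h | h
    · refine ⟨t₁ + p, by omega, ?_⟩
      have : (t₁ + p) ^ 2 + (8 * j + 3) = (t₁ ^ 2 + (8 * j + 3)) + p * (2 * t₁ + p) := by ring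
      rw [this]
      exact dvd_add hdvd (dvd_mul_right _ _)
    · exact ⟨t₁, h, hdvd⟩
  have heven : (2 : ℤ) ∣ t ^ 2 + (8 * j + 3) := by
    have : t ^ 2 % 2 = 1 := by rw [pow_two, Int.mul_emod, hto]; rfl
    omega
  have hcop : IsCoprime (2 : ℤ) p :=
    Int.isCoprime_iff_gcd_eq_one.mpr (by
      exact_mod_cast Nat.coprime_two_left.mpr (Nat.odd_iff.mpr hodd))
  obtain ⟨w, hw⟩ := hcop.mul_dvd heven hdvd
  have hp0 : (0 : ℤ) < p := by exact_mod_cast hp.pos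
  have hw0 : 0 < w := by
    by_contra h
    nlinarith [sq_nonneg t]
  obtain ⟨u, v, s, h⟩ := ternary_sum_three_squares w.toNat w (2 * p) (4 * m + 1) 0 1 t hw0
    (by omega) (by nlinarith) (by linear_combination -(4 * m + 1 : ℤ) * hw - h2p') 0 0 1
  refine ⟨u, v, s, ?_⟩
  rw [← h]
  unfold ternary
  ring

theorem combine_pos_and_nonzero (x y : ℤ) :
    (x > 0 ∧ y ≠ 0) ↔ ∃ a b c : ℤ, x * y ^ 2 = a ^ 2 + b ^ 2 + c ^ 2 + c + 1 := by
  constructor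
  · rintro ⟨hx, hy⟩
    have hpos : 0 < x * y ^ 2 := by positivity
    obtain ⟨m, hm⟩ : ∃ m : ℕ, x * y ^ 2 = m + 1 := ⟨(x * y ^ 2 - 1).toNat, by omega⟩
    rw [hm]
    obtain ⟨u, v, w, h⟩ := sum_three_squares_of_one_mod_four m
    rcases Int.even_or_odd' u with ⟨u, rfl | rfl⟩ <;>
    rcases Int.even_or_odd' v with ⟨v, rfl | rfl⟩ <;>
    rcases Int.even_or_odd' w with ⟨w, rfl | rfl⟩ <;> ring_nf at h
    · omega
    · exact ⟨u, v, w, by linarith⟩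
    · exact ⟨u, w, v, by linarith⟩
    · omega
    · exact ⟨v, w, u, by linarith⟩
    · omega
    · omega
    · omega
  · rintro ⟨a, b, c, h⟩
    have hc : 0 ≤ c ^ 2 + c := by
      rcases le_or_gt 0 c with h | h <;> nlinarith
    have hpos : 0 < x * y ^ 2 := by nlinarith [sq_nonneg a, sq_nonneg b]
    refine ⟨pos_of_mul_pos_left hpos (sq_nonneg y), ?_⟩
    rintro rfl
    simp at hpos
end

section
/- For all integers A and Y: there exists an integer k with (A² − 4)·Y² + 4 = k² if and only if there exists an integer m with Y = ψ_A(m), where ψ_A is the integer-indexed Lucas sequence with parameter A. -/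
/-!
If `k ^ 2 = (A ^ 2 - 4) * Y ^ 2 + 4`, then `k` and `A * Y` have the same parity, and
`Z = (A * Y + k) / 2` satisfies `Y ^ 2 - A * Y * Z + Z ^ 2 = 1`. Conversely a solution `(Y, Z)` of
this quadratic gives `k = 2 * Z - A * Y`. Consecutive values of `psi A` solve the quadratic
(`psi_quadratic`), which settles one direction.

For the other, solutions with `0 ≤ x ≤ y` descend along `(x, y) ↦ (A * x - y, x)` to `(0, 1)`, so
they are pairs of consecutive values of `psi A` (`exists_psi_of_quadratic`). When `2 ≤ A` and
`0 ≤ Y`, choosing `0 ≤ k` gives `Y ≤ Z`. Negative `Y` and `A ≤ -2` reduce to this case by sign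
changes, and for `|A| ≤ 1` the equation forces `|Y| ≤ 1`.
-/

/-- The Lucas sequence `ψ_A : ℕ → ℤ` with parameter `A`:
`ψ_A(0) = 0`, `ψ_A(1) = 1`, `ψ_A(n+2) = A·ψ_A(n+1) − ψ_A(n)`. -/
def psi (A : ℤ) : ℕ → ℤ
  | 0 => 0
  | 1 => 1
  | n + 2 => A * psi A (n + 1) - psi A n

/-- The Lucas sequence `χ_A : ℕ → ℤ` with parameter `A`:
`χ_A(0) = 2`, `χ_A(1) = A`, `χ_A(n+2) = A·χ_A(n+1) − χ_A(n)`. -/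
def chi (A : ℤ) : ℕ → ℤ
  | 0 => 2
  | 1 => A
  | n + 2 => A * chi A (n + 1) - chi A n

/-- The integer-indexed Lucas sequence `ψ_A : ℤ → ℤ`, extended via `ψ_A(−n) = −ψ_A(n)`. -/
def psiInt (A : ℤ) (n : ℤ) : ℤ := (if 0 ≤ n then 1 else -1) * psi A n.natAbs

/-- The integer-indexed Lucas sequence `χ_A : ℤ → ℤ`, extended via `χ_A(−n) = χ_A(n)`. -/
def chiInt (A : ℤ) (n : ℤ) : ℤ := chi A n.natAbs

theorem psi_quadratic (A : ℤ) (n : ℕ) :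
    psi A n ^ 2 - A * psi A n * psi A (n + 1) + psi A (n + 1) ^ 2 = 1 := by
  induction n with
  | zero => simp [psi]
  | succ n ih =>
    have h : psi A (n + 1 + 1) = A * psi A (n + 1) - psi A n := rfl
    rw [h]
    linear_combination ih

theorem psi_neg (A : ℤ) (n : ℕ) : psi (-A) n = (-1) ^ (n + 1) * psi A n := by
  induction n using Nat.twoStepInduction with
  | zero => simp [psi]
  | one => simp [psi]
  | more n ih₀ ih₁ =>
    simp only [psi]
    rw [ih₀, ih₁]
    ring

theorem exists_psiInt_iff (A Y : ℤ) :
    (∃ m : ℤ, Y = psiInt A m) ↔ ∃ n : ℕ, Y = psi A n ∨ Y = -psi A n := by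
  constructor
  · rintro ⟨m, rfl⟩
    refine ⟨m.natAbs, ?_⟩
    unfold psiInt
    split_ifs <;> simp
  · rintro ⟨n, h | h⟩
    · exact ⟨n, by simp [psiInt, h]⟩
    · -- Index `-0` takes the nonnegative branch of `psiInt`, harmlessly since `psi A 0 = 0`.
      rcases n with _ | n
      · exact ⟨0, by simp [psiInt, h, psi]⟩
      · refine ⟨-((n + 1 : ℕ) : ℤ), ?_⟩
        have hn : ¬ (0 : ℤ) ≤ -((n + 1 : ℕ) : ℤ) := by omega
        rw [psiInt, if_neg hn, Int.natAbs_neg, Int.natAbs_natCast, h]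
        ring

/-- Descent: if `0 < x ≤ y`, the other root `w = A * x - y` of the quadratic in `y` satisfies
`w * y = x ^ 2 - 1`, hence `0 ≤ w < x`. -/
theorem exists_psi_of_quadratic (A : ℤ) (N : ℕ) : ∀ x y : ℤ, x.toNat ≤ N → 0 ≤ x → x ≤ y →
    x ^ 2 - A * x * y + y ^ 2 = 1 → ∃ n : ℕ, x = psi A n ∧ y = psi A (n + 1) := by
  induction N with
  | zero =>
    intro x y hN hx hxy h
    obtain rfl : x = 0 := by omega
    exact ⟨0, rfl, by simp only [psi]; nlinarith⟩
  | succ N ih =>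
    intro x y hN hx hxy h
    rcases hx.eq_or_lt with rfl | hx
    · exact ⟨0, rfl, by simp only [psi]; nlinarith⟩
    · have hw : (A * x - y) * y = x ^ 2 - 1 := by linear_combination -h
      have h0 : 0 ≤ A * x - y := by
        by_contra hc
        nlinarith
      have h1 : A * x - y < x := by
        by_contra hc
        nlinarith
      obtain ⟨n, hn, hn'⟩ := ih (A * x - y) x (by omega) h0 h1.le (by linear_combination h)
      refine ⟨n + 1, hn', ?_⟩
      simp only [psi]
      rw [← hn, ← hn']
      ring

theorem exists_psi_of_pell {A Y k : ℤ} (hA : 2 ≤ A) (hY : 0 ≤ Y) (hk : 0 ≤ k)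
    (h : (A ^ 2 - 4) * Y ^ 2 + 4 = k ^ 2) : ∃ n : ℕ, Y = psi A n := by
  have hpar : Even (A * Y + k) := by
    have h2 : Even ((A * Y + k) ^ 2) :=
      ⟨A * Y * k + A ^ 2 * Y ^ 2 - 2 * Y ^ 2 + 2, by linear_combination -h⟩
    exact (Int.even_pow.mp h2).1
  obtain ⟨Z, hZ⟩ := hpar
  have hYZ : Y ≤ Z := by nlinarith
  have hq : Y ^ 2 - A * Y * Z + Z ^ 2 = 1 := by
    obtain rfl : k = 2 * Z - A * Y := by linarith
    linarith
  obtain ⟨n, hn, -⟩ := exists_psi_of_quadratic A Y.toNat Y Z le_rfl hY hYZ hq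
  exact ⟨n, hn⟩

theorem pell_yields_lucas (A Y : ℤ) :
    (∃ k : ℤ, (A ^ 2 - 4) * Y ^ 2 + 4 = k ^ 2) ↔ ∃ m : ℤ, Y = psiInt A m := by
  rw [exists_psiInt_iff]
  constructor
  · rintro ⟨k, h⟩
    by_cases hA : 2 ≤ |A|
    · obtain ⟨n, hn⟩ := exists_psi_of_pell hA (abs_nonneg Y) (abs_nonneg k)
        (by simpa only [sq_abs] using h)
      refine ⟨n, ?_⟩
      have hs : psi |A| n = psi A n ∨ psi |A| n = -psi A n := by
        rcases abs_choice A with hA' | hA' <;> rw [hA']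
        · exact Or.inl rfl
        · rw [psi_neg]
          rcases neg_one_pow_eq_or ℤ (n + 1) with hp | hp <;> simp [hp]
      rcases abs_choice Y with hY | hY <;> rcases hs with hs | hs <;> omega
    · have hA2 : A ^ 2 ≤ 1 := by
        rw [← sq_abs]
        nlinarith [abs_nonneg A]
      have hY2 : Y ^ 2 ≤ 1 := by nlinarith [sq_nonneg k, sq_nonneg Y]
      have hY3 : -1 ≤ Y ∧ Y ≤ 1 := by constructor <;> nlinarith
      have hY4 : Y = 0 ∨ Y = 1 ∨ Y = -1 := by omega
      rcases hY4 with rfl | rfl | rfl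
      · exact ⟨0, Or.inl rfl⟩
      · exact ⟨1, Or.inl rfl⟩
      · exact ⟨1, Or.inr rfl⟩
  · rintro ⟨n, h⟩
    have hsq : Y ^ 2 = psi A n ^ 2 := sq_eq_sq_iff_eq_or_eq_neg.mpr h
    refine ⟨2 * psi A (n + 1) - A * psi A n, ?_⟩
    rw [hsq]
    linear_combination -4 * psi_quadratic A n
end
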